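/- arXiv:2006.03754 — 3 statements merged into one kernel-verified Lean document; each statement's English description precedes it below -/
import Mathlib

section
/- Let n ≥ 3 be an integer. There exists a finite constant C > 0, depending only on n, such that for all measurable sets I₁,…,I_{n−2} ⊆ ℝ of finite Lebesgue measure, all nonnegative measurable functions f_{n−1}, fₙ on ℝ, and every λ > 0, λ · |{x ∈ ℝ : T(χ_{I₁},…,χ_{I_{n−2}}, f_{n−1}, fₙ)(x) > λ}|^{1/n} ≤ C (∏_{j=1}^{n−2} |I_j|^{(n−1)/n}) ‖f_{n−1}‖_1 ‖fₙ‖_∞; that is, T is of restricted weak type at the point K = ((n−1)/n,…,(n−1)/n, 1, 0; 1/n). -/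
open MeasureTheory ENNReal

/-- The `L^p` "norm" (with respect to Lebesgue measure on `ℝ`) of an
`ℝ≥0∞`-valued function, with the convention for `p = ∞`. -/
noncomputable def lpNorm (p : ℝ≥0∞) (g : ℝ → ℝ≥0∞) : ℝ≥0∞ :=
  if p = ∞ then essSup g (volume : Measure ℝ)
  else (∫⁻ x, g x ^ p.toReal) ^ (1 / p.toReal)

/-- The normalized (total mass 1) surface measure on the unit sphere
`S^{n-1} ⊂ ℝ^n`, viewed as a measure on `ℝ^n` supported on the sphere. -/
noncomputable def normSphere (n : ℕ) : Measure (EuclideanSpace ℝ (Fin n)) :=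
  (Measure.map Subtype.val
      ((volume : Measure (EuclideanSpace ℝ (Fin n))).toSphere) Set.univ)⁻¹ •
    Measure.map Subtype.val ((volume : Measure (EuclideanSpace ℝ (Fin n))).toSphere)

/-- The multilinear spherical average
`T(f₁,…,fₙ)(x) = ∫_{S^{n-1}} ∏_{j=1}^n f_j(x - σ_j) dσ(σ)`. -/
noncomputable def sphAvg (n : ℕ) (f : Fin n → ℝ → ℝ) (x : ℝ) : ℝ≥0∞ :=
  ∫⁻ σ, ∏ j, ENNReal.ofReal (f j (x - σ j)) ∂(normSphere n)


/-- The weight `r ↦ r^{-1/2}`, equal to `0` for `r ≤ 0`. -/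
noncomputable def invSqrt (r : ℝ) : ℝ≥0∞ := ENNReal.ofReal (√r)⁻¹

@[fun_prop]
lemma measurable_invSqrt : Measurable invSqrt := by unfold invSqrt; fun_prop

lemma invSqrt_of_nonpos {r : ℝ} (hr : r ≤ 0) : invSqrt r = 0 := by
  simp [invSqrt, Real.sqrt_eq_zero_of_nonpos hr]

lemma invSqrt_mul {a : ℝ} (ha : 0 ≤ a) (b : ℝ) : invSqrt (a * b) = invSqrt a * invSqrt b := by
  rw [invSqrt, invSqrt, invSqrt, Real.sqrt_mul ha, mul_inv, ENNReal.ofReal_mul (by positivity)]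

lemma invSqrt_anti {a b : ℝ} (ha : 0 < a) (h : a ≤ b) : invSqrt b ≤ invSqrt a := by
  unfold invSqrt
  gcongr

lemma invSqrt_ne_top (a : ℝ) : invSqrt a ≠ ∞ := ENNReal.ofReal_ne_top

lemma lintegral_invSqrt_Ioc {r : ℝ} (hr : 0 ≤ r) :
    ∫⁻ s in Set.Ioc 0 r, invSqrt s = ENNReal.ofReal (2 * √r) := by
  have hint : IntervalIntegrable (fun s : ℝ => s ^ (-(1 / 2) : ℝ)) volume 0 r :=
    intervalIntegral.intervalIntegrable_rpow' (by norm_num)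
  have h := ofReal_integral_eq_lintegral_ofReal
    ((intervalIntegrable_iff_integrableOn_Ioc_of_le hr).1 hint)
    ((ae_restrict_iff' measurableSet_Ioc).2 (.of_forall fun s hs =>
      Real.rpow_nonneg hs.1.le _))
  rw [← intervalIntegral.integral_of_le hr, integral_rpow (Or.inl (by norm_num))] at h
  have e : ∫⁻ s in Set.Ioc 0 r, invSqrt s
      = ∫⁻ s in Set.Ioc 0 r, ENNReal.ofReal (s ^ (-(1 / 2) : ℝ)) := by
    refine setLIntegral_congr_fun measurableSet_Ioc fun s hs => ?_
    simp only [invSqrt]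
    rw [Real.sqrt_eq_rpow, ← Real.rpow_neg hs.1.le]
  rw [e, ← h, Real.sqrt_eq_rpow]
  congr 1
  norm_num
  ring

lemma lintegral_invSqrt_abs_le {r : ℝ} (hr : 0 ≤ r) :
    ∫⁻ s in Set.Icc (-r) r, invSqrt |s| ≤ ENNReal.ofReal (4 * √r) := by
  have hneg : ∫⁻ s in Set.Ico (-r) 0, invSqrt |s| = ∫⁻ s in Set.Ioc 0 r, invSqrt |s| := by
    rw [← (Measure.measurePreserving_neg (volume : Measure ℝ)).setLIntegral_comp_preimage
      measurableSet_Ico (by fun_prop)]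
    simp
  have hpos : ∫⁻ s in Set.Ioc 0 r, invSqrt |s| = ENNReal.ofReal (2 * √r) := by
    rw [← lintegral_invSqrt_Ioc hr]
    exact setLIntegral_congr_fun measurableSet_Ioc fun s hs => by rw [abs_of_pos hs.1]
  have hsub : ∀ᵐ s : ℝ, s ∈ Set.Icc (-r) r → s ∈ Set.Ico (-r) 0 ∪ Set.Ioc 0 r := by
    filter_upwards [compl_mem_ae_iff.2 (measure_singleton (0 : ℝ))] with s hs h
    rcases lt_or_gt_of_ne (hs : s ≠ 0) with h0 | h0
    · exact Or.inl ⟨h.1, h0⟩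
    · exact Or.inr ⟨h0, h.2⟩
  calc ∫⁻ s in Set.Icc (-r) r, invSqrt |s|
      ≤ ∫⁻ s in Set.Ico (-r) 0 ∪ Set.Ioc 0 r, invSqrt |s| :=
        lintegral_mono' (Measure.restrict_mono_ae hsub) le_rfl
    _ ≤ _ := lintegral_union_le _ _ _
    _ = _ := by
      rw [hneg, hpos, ← ENNReal.ofReal_add (by positivity) (by positivity)]
      ring_nf

/-- Among sets of given measure, the integral of `|s - b|^{-1/2}` is controlled by that of
an interval centred at `b`. -/
lemma setLIntegral_invSqrt_abs_sub_le (A : Set ℝ) (b : ℝ) :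
    ∫⁻ s in A, invSqrt |s - b| ≤ 5 * volume A ^ (1 / 2 : ℝ) := by
  rcases eq_or_ne (volume A) ∞ with hA | hA
  · simp [hA]
  rcases eq_or_ne (volume A) 0 with hA0 | hA0
  · rw [setLIntegral_measure_zero _ _ hA0]; exact zero_le
  set r := (volume A).toReal
  have hr : 0 < r := ENNReal.toReal_pos hA0 hA
  have hvol : volume A = ENNReal.ofReal r := (ENNReal.ofReal_toReal hA).symm
  have h1 : ∫⁻ s in Set.Icc (b - r) (b + r), invSqrt |s - b| ≤ ENNReal.ofReal (4 * √r) := by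
    have := (measurePreserving_sub_right (volume : Measure ℝ) b).setLIntegral_comp_preimage
      (measurableSet_Icc (a := -r) (b := r)) (f := fun s => invSqrt |s|) (by fun_prop)
    simp only [Set.preimage_sub_const_Icc] at this
    rw [show b - r = -r + b by ring, add_comm b r, this]
    exact lintegral_invSqrt_abs_le hr.le
  have h2 : ∫⁻ s in A \ Set.Icc (b - r) (b + r), invSqrt |s - b| ≤ invSqrt r * volume A := by
    refine (setLIntegral_mono (g := fun _ => invSqrt r) measurable_const fun s hs => ?_).trans ?_
    · refine invSqrt_anti hr ?_
      by_contra! h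
      rw [abs_lt] at h
      exact hs.2 ⟨by linarith, by linarith⟩
    · rw [setLIntegral_const]
      gcongr
      exact Set.sdiff_subset
  calc ∫⁻ s in A, invSqrt |s - b|
      ≤ ∫⁻ s in Set.Icc (b - r) (b + r) ∪ A \ Set.Icc (b - r) (b + r), invSqrt |s - b| :=
        lintegral_mono_set (by rw [Set.union_sdiff_self]; exact Set.subset_union_right)
    _ ≤ _ := lintegral_union_le _ _ _
    _ ≤ ENNReal.ofReal (4 * √r) + invSqrt r * volume A := add_le_add h1 h2
    _ = 5 * volume A ^ (1 / 2 : ℝ) := by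
      rw [hvol, invSqrt, ← ENNReal.ofReal_mul (by positivity),
        ← ENNReal.ofReal_add (by positivity) (by positivity), ENNReal.ofReal_rpow_of_pos hr,
        ← Real.sqrt_eq_rpow,
        show (5 : ℝ≥0∞) = ENNReal.ofReal 5 by simp, ← ENNReal.ofReal_mul (by positivity)]
      congr 1
      have : (√r)⁻¹ * r = √r := by
        rw [inv_mul_eq_div]; exact Real.div_sqrt
      rw [this]; ring

/-- Integrals of an inverse square root with two simple zeros at distance `2√e`. -/
lemma setLIntegral_invSqrt_sub_sq_le (A : Set ℝ) {e : ℝ} (he : 0 < e) (b : ℝ) :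
    ∫⁻ s in A, invSqrt (e - (s - b) ^ 2) ≤ 10 * invSqrt (√e) *
      volume (A ∩ Set.Ioo (b - √e) (b + √e)) ^ (1 / 2 : ℝ) := by
  set c := √e
  have hc : 0 < c := Real.sqrt_pos.2 he
  have hce : e = c ^ 2 := (Real.sq_sqrt he.le).symm
  set B := A ∩ Set.Ioo (b - c) (b + c)
  have hpt : ∀ s, invSqrt (e - (s - b) ^ 2) ≤
      (Set.Ioo (b - c) (b + c)).indicator
        (fun s => invSqrt c * (invSqrt |s - (b + c)| + invSqrt |s - (b - c)|)) s := by
    intro s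
    by_cases hs : s ∈ Set.Ioo (b - c) (b + c)
    · rw [Set.indicator_of_mem hs]
      have h1 : 0 < b + c - s := by linarith [hs.2]
      have h2 : 0 < s - (b - c) := by linarith [hs.1]
      rw [abs_sub_comm, abs_of_pos h1, abs_of_pos h2,
        show e - (s - b) ^ 2 = (b + c - s) * (s - (b - c)) by rw [hce]; ring, invSqrt_mul h1.le]
      rcases le_total s b with h | h
      · rw [mul_add]
        refine le_trans ?_ le_add_self
        gcongr
        exact invSqrt_anti hc (by linarith)
      · rw [mul_add, mul_comm]
        refine le_trans ?_ le_self_add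
        gcongr
        exact invSqrt_anti hc (by linarith)
    · rw [invSqrt_of_nonpos]
      · exact zero_le
      · by_contra! h
        have := abs_lt_of_sq_lt_sq (a := s - b) (b := c) (by linarith) hc.le
        rw [abs_lt] at this
        exact hs ⟨by linarith, by linarith⟩
  calc ∫⁻ s in A, invSqrt (e - (s - b) ^ 2)
      ≤ ∫⁻ s in A, (Set.Ioo (b - c) (b + c)).indicator
        (fun s => invSqrt c * (invSqrt |s - (b + c)| + invSqrt |s - (b - c)|)) s :=
        lintegral_mono hpt
    _ = ∫⁻ s in B, invSqrt c * (invSqrt |s - (b + c)| + invSqrt |s - (b - c)|) := by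
        rw [lintegral_indicator measurableSet_Ioo, Measure.restrict_restrict measurableSet_Ioo,
          Set.inter_comm]
    _ = invSqrt c * ((∫⁻ s in B, invSqrt |s - (b + c)|) + ∫⁻ s in B, invSqrt |s - (b - c)|) := by
        rw [lintegral_const_mul _ (by fun_prop), lintegral_add_left (by fun_prop)]
    _ ≤ invSqrt c * (5 * volume B ^ (1 / 2 : ℝ) + 5 * volume B ^ (1 / 2 : ℝ)) := by
        gcongr <;> exact setLIntegral_invSqrt_abs_sub_le _ _
    _ = 10 * invSqrt c * volume B ^ (1 / 2 : ℝ) := by ring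

lemma setLIntegral_invSqrt_sub_sq_le_const (A : Set ℝ) (e b : ℝ) :
    ∫⁻ s in A, invSqrt (e - (s - b) ^ 2) ≤ 20 := by
  rcases le_or_gt e 0 with he | he
  · refine le_of_eq_of_le ?_ zero_le
    rw [lintegral_eq_zero_iff (by fun_prop)]
    exact .of_forall fun s => invSqrt_of_nonpos (by nlinarith [sq_nonneg (s - b)])
  refine (setLIntegral_invSqrt_sub_sq_le A he b).trans ?_
  set c := √e
  have hc : 0 < c := Real.sqrt_pos.2 he
  calc 10 * invSqrt c * volume (A ∩ Set.Ioo (b - c) (b + c)) ^ (1 / 2 : ℝ)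
      ≤ 10 * invSqrt c * volume (Set.Ioo (b - c) (b + c)) ^ (1 / 2 : ℝ) := by
        gcongr; exact Set.inter_subset_right
    _ ≤ 10 * invSqrt c * ENNReal.ofReal (2 ^ 2 * c) ^ (1 / 2 : ℝ) := by
        rw [Real.volume_Ioo]; gcongr; linarith
    _ = 20 := by
        rw [ENNReal.ofReal_rpow_of_pos (by positivity), ← Real.sqrt_eq_rpow, invSqrt, mul_assoc,
          ← ENNReal.ofReal_mul (by positivity), Real.sqrt_mul (by positivity),
          Real.sqrt_sq (by norm_num)]
        have : (√c)⁻¹ * (2 * √c) = 2 := by field_simp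
        rw [this]; norm_num

lemma setLIntegral_pi_le_of_insertNth {m : ℕ} {f : (Fin (m + 1) → ℝ) → ℝ≥0∞} (hf : Measurable f)
    {E : Fin (m + 1) → Set ℝ} (hE : ∀ i, MeasurableSet (E i)) (i : Fin (m + 1)) {K : ℝ≥0∞}
    (h : ∀ v : Fin m → ℝ, ∫⁻ s in E i, f (i.insertNth s v) ≤ K) :
    ∫⁻ u in Set.univ.pi E, f u ≤ K * ∏ k, volume (E (i.succAbove k)) := by
  have hmp := (volume_preserving_piFinSuccAbove (fun _ : Fin (m + 1) => ℝ) i).symm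
  set F := Set.univ.pi fun k => E (i.succAbove k)
  have hF : MeasurableSet F := MeasurableSet.univ_pi fun k => hE _
  have hpre : (MeasurableEquiv.piFinSuccAbove (fun _ : Fin (m + 1) => ℝ) i).symm ⁻¹'
      Set.univ.pi E = E i ×ˢ F := by
    ext ⟨s, v⟩
    simp [F, Set.mem_pi, Fin.forall_iff_succAbove i]
  rw [← hmp.setLIntegral_comp_preimage (MeasurableSet.univ_pi hE) hf, hpre,
    Measure.volume_eq_prod, ← Measure.prod_restrict,
    lintegral_prod_symm _ (Measurable.aemeasurable (by fun_prop))]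
  calc _ ≤ ∫⁻ v in F, K := lintegral_mono fun v => h v
    _ = _ := by rw [setLIntegral_const, volume_pi_pi]

section Line

variable {ι : Type*} [Fintype ι]

lemma dotProduct_self_pos {q : ι → ℝ} (hq : q ≠ 0) : 0 < q ⬝ᵥ q :=
  lt_of_le_of_ne (Finset.sum_nonneg fun i _ => mul_self_nonneg (q i))
    fun h => hq (dotProduct_self_eq_zero.1 h.symm)

/-- Completing the square along a line. -/
lemma exists_completeSquare (p : ι → ℝ) {q : ι → ℝ} (hq : q ≠ 0) :
    ∃ e b : ℝ, ∀ s : ℝ, 1 - (p + s • q) ⬝ᵥ (p + s • q) = (q ⬝ᵥ q) * (e - (s - b) ^ 2) ∧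
      (p + s • q) ⬝ᵥ q = (q ⬝ᵥ q) * (s - b) := by
  have ha := dotProduct_self_pos hq
  set a := q ⬝ᵥ q with haq
  refine ⟨(1 - p ⬝ᵥ p + (p ⬝ᵥ q) ^ 2 / a) / a, -(p ⬝ᵥ q) / a, fun s => ?_⟩
  simp only [add_dotProduct, dotProduct_add, smul_dotProduct, dotProduct_smul, smul_eq_mul,
    dotProduct_comm q p, ← haq]
  constructor <;> field_simp <;> ring

lemma setLIntegral_invSqrt_line_le (A : Set ℝ) (p : ι → ℝ) {q : ι → ℝ} (hq : q ≠ 0) :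
    ∫⁻ s in A, invSqrt (1 - (p + s • q) ⬝ᵥ (p + s • q)) ≤ 20 * invSqrt (q ⬝ᵥ q) := by
  obtain ⟨e, b, h⟩ := exists_completeSquare p hq
  simp_rw [(h _).1, invSqrt_mul (dotProduct_self_pos hq).le]
  rw [lintegral_const_mul _ (by fun_prop), mul_comm]
  gcongr
  exact setLIntegral_invSqrt_sub_sq_le_const A e b

/-- On the part of a line that meets the spheres about the origin transversally, the weight
`(1 - |z|²)^{-1/2}` is integrated with a gain of a square root of the length. -/
lemma setLIntegral_invSqrt_line_transversal_le (A : Set ℝ) (p : ι → ℝ) {q : ι → ℝ} (hq : q ≠ 0)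
    {N : ℝ} (hN : 0 ≤ N) :
    ∫⁻ s in A, {z : ι → ℝ | z ⬝ᵥ z ≤ N * (z ⬝ᵥ q) ^ 2}.indicator
      (fun z => invSqrt (1 - z ⬝ᵥ z)) (p + s • q) ≤
      10 * invSqrt (q ⬝ᵥ q) * invSqrt (√((q ⬝ᵥ q) + N * (q ⬝ᵥ q) ^ 2)⁻¹) *
        volume A ^ (1 / 2 : ℝ) := by
  obtain ⟨e, b, h⟩ := exists_completeSquare p hq
  have ha := dotProduct_self_pos hq
  set a := q ⬝ᵥ q
  by_cases hex : ∃ s : ℝ, 0 < 1 - (p + s • q) ⬝ᵥ (p + s • q) ∧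
      (p + s • q) ⬝ᵥ (p + s • q) ≤ N * ((p + s • q) ⬝ᵥ q) ^ 2
  · obtain ⟨s, hs1, hs2⟩ := hex
    have hs3 : 0 < e - (s - b) ^ 2 := by
      rw [(h s).1] at hs1
      exact pos_of_mul_pos_right hs1 ha.le
    rw [(h s).2] at hs2
    have hs4 := (h s).1
    have hc : 0 < a + N * a ^ 2 := by positivity
    have he : (a + N * a ^ 2)⁻¹ ≤ e := by
      rw [inv_le_iff_one_le_mul₀ hc]
      nlinarith [mul_nonneg (mul_nonneg hN (sq_nonneg a)) hs3.le,
        mul_nonneg ha.le (sq_nonneg (s - b))]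
    have he0 : 0 < e := lt_of_lt_of_le (inv_pos.2 hc) he
    calc _ ≤ ∫⁻ s in A, invSqrt a * invSqrt (e - (s - b) ^ 2) := by
          refine lintegral_mono fun s => (Set.indicator_le_self _ _ _).trans ?_
          rw [(h s).1, invSqrt_mul ha.le]
      _ = invSqrt a * ∫⁻ s in A, invSqrt (e - (s - b) ^ 2) := lintegral_const_mul _ (by fun_prop)
      _ ≤ invSqrt a * (10 * invSqrt (√e) *
            volume (A ∩ Set.Ioo (b - √e) (b + √e)) ^ (1 / 2 : ℝ)) := by
          gcongr; exact setLIntegral_invSqrt_sub_sq_le A he0 b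
      _ ≤ invSqrt a * (10 * invSqrt (√(a + N * a ^ 2)⁻¹) * volume A ^ (1 / 2 : ℝ)) := by
          gcongr
          · exact invSqrt_anti (Real.sqrt_pos.2 (inv_pos.2 hc)) (Real.sqrt_le_sqrt he)
          · exact Set.inter_subset_left
      _ = _ := by ring
  · refine le_of_eq_of_le ?_ zero_le
    refine (lintegral_congr fun s => ?_).trans lintegral_zero
    refine Set.indicator_apply_eq_zero.2 fun hs => invSqrt_of_nonpos ?_
    by_contra! h0
    exact hex ⟨s, h0, hs⟩

end Line

lemma insertNth_eq_add_smul_single {m : ℕ} (i : Fin (m + 1)) (s : ℝ) (v : Fin m → ℝ) :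
    (i.insertNth s v : Fin (m + 1) → ℝ) =
      (i.insertNth 0 v : Fin (m + 1) → ℝ) + s • Pi.single i 1 := by
  ext k
  induction k using Fin.succAboveCases i <;> simp

lemma measurable_dotProduct_self {d : ℕ} : Measurable fun z : Fin d → ℝ => z ⬝ᵥ z :=
  (Continuous.dotProduct continuous_id continuous_id).measurable

/-- A vector is controlled by its inner products with the images of the standard basis under a
linear equivalence. -/
lemma exists_dotProduct_self_le {m : ℕ} (L : (Fin (m + 1) → ℝ) ≃ₗ[ℝ] (Fin (m + 1) → ℝ)) :
    ∃ N : ℝ, 0 ≤ N ∧ ∀ z : Fin (m + 1) → ℝ, ∃ i, z ⬝ᵥ z ≤ N * (z ⬝ᵥ L (Pi.single i 1)) ^ 2 := by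
  let D : (Fin (m + 1) → ℝ) →ₗ[ℝ] (Fin (m + 1) → ℝ) :=
    { toFun := fun z i => z ⬝ᵥ L (Pi.single i 1)
      map_add' := fun x y => by ext i; simp [add_dotProduct]
      map_smul' := fun c x => by ext i; simp [smul_dotProduct] }
  have hD : LinearMap.ker D = ⊥ := by
    refine LinearMap.ker_eq_bot'.2 fun z hz => ?_
    have h1 : ∀ w, z ⬝ᵥ L w = 0 := by
      intro w
      have hw : w = ∑ i, w i • (Pi.single i (1 : ℝ) : Fin (m + 1) → ℝ) := by
        ext k; simp [Finset.sum_apply, Pi.single_apply]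
      rw [hw, map_sum, dotProduct_sum]
      refine Finset.sum_eq_zero fun i _ => ?_
      rw [map_smul, dotProduct_smul, show z ⬝ᵥ L (Pi.single i 1) = 0 from congrFun hz i, smul_zero]
    have := h1 (L.symm z)
    rw [L.apply_symm_apply] at this
    exact dotProduct_self_eq_zero.1 this
  obtain ⟨K, -, hK⟩ := D.exists_antilipschitzWith hD
  refine ⟨(m + 1) * K ^ 2, by positivity, fun z => ?_⟩
  obtain ⟨i, -, hi⟩ := Finset.exists_max_image Finset.univ (fun i => |D z i|) Finset.univ_nonempty
  have h1 : ‖z‖ ≤ K * |D z i| := by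
    refine (ZeroHomClass.bound_of_antilipschitz D hK z).trans ?_
    gcongr
    exact (pi_norm_le_iff_of_nonneg (abs_nonneg _)).2 fun k => hi k (Finset.mem_univ k)
  refine ⟨i, ?_⟩
  calc z ⬝ᵥ z ≤ ∑ _k : Fin (m + 1), (K * |D z i|) ^ 2 := by
        refine Finset.sum_le_sum fun k _ => ?_
        rw [← sq, ← sq_abs]
        have := (norm_le_pi_norm z k).trans h1
        rw [Real.norm_eq_abs] at this
        gcongr
    _ = _ := by
        rw [Finset.sum_const, Finset.card_univ, Fintype.card_fin, mul_pow, sq_abs]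
        simp only [nsmul_eq_mul, Nat.cast_add, Nat.cast_one]
        change _ = _ * (D z i) ^ 2
        ring

lemma prod_prod_succAbove {M : Type*} [CommMonoid M] {m : ℕ} (e : Fin (m + 1) → M) :
    ∏ j : Fin (m + 1), ∏ k, e (j.succAbove k) = (∏ j, e j) ^ m := by
  have h : ∀ j : Fin (m + 1), ∏ k, e (j.succAbove k) = ∏ k ∈ {j}ᶜ, e k := fun j => by
    rw [← Fin.image_succAbove_univ,
      Finset.prod_image (fun _ _ _ _ h => Fin.succAbove_right_injective h)]
  simp_rw [h]
  rw [Finset.prod_comm' (t' := Finset.univ) (s' := fun k => {k}ᶜ)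
    (by simp [eq_comm]), ← Finset.prod_pow]
  refine Finset.prod_congr rfl fun k _ => ?_
  rw [Finset.prod_const, Finset.card_compl, Finset.card_singleton, Fintype.card_fin,
    Nat.add_sub_cancel]

/-- Geometric mean of the bounds that omit one factor, where in one direction half of the omitted
factor is recovered. -/
lemma le_prod_rpow_of_le_prod_succAbove {m : ℕ} {e : Fin (m + 1) → ℝ≥0∞} {X K : ℝ≥0∞}
    (h : ∀ j : Fin (m + 1), X ≤ K * ∏ k, e (j.succAbove k)) {i : Fin (m + 1)}
    (hi : X ≤ K * e i ^ (1 / 2 : ℝ) * ∏ k, e (i.succAbove k)) :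
    X ≤ K * (∏ j, e j) ^ (((m : ℝ) + 1) / (m + 2)) := by
  have hsq : (e i ^ (1 / 2 : ℝ)) ^ 2 = e i := by
    rw [← ENNReal.rpow_natCast, ← ENNReal.rpow_mul]; norm_num
  have key : X ^ (m + 2) ≤ K ^ (m + 2) * (∏ j, e j) ^ (m + 1) := by
    calc X ^ (m + 2) = X ^ 2 * ∏ _k : Fin m, X := by simp [pow_add, mul_comm]
      _ ≤ (K * e i ^ (1 / 2 : ℝ) * ∏ k, e (i.succAbove k)) ^ 2 *
          ∏ k : Fin m, (K * ∏ l, e ((i.succAbove k).succAbove l)) := by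
        gcongr with k
        exact h _
      _ = K ^ (m + 2) * ((e i * ∏ k, e (i.succAbove k)) *
          ∏ j : Fin (m + 1), ∏ k, e (j.succAbove k)) := by
        rw [Finset.prod_mul_distrib, Fin.prod_univ_succAbove _ i, mul_pow, mul_pow, hsq,
          Finset.prod_const, Finset.card_univ, Fintype.card_fin]
        ring
      _ = K ^ (m + 2) * (∏ j, e j) ^ (m + 1) := by
        rw [prod_prod_succAbove, ← Fin.prod_univ_succAbove e i]
        ring
  have h0 : ((m + 2 : ℕ) : ℝ) ≠ 0 := by positivity
  have := ENNReal.rpow_le_rpow key (z := ((m + 2 : ℕ) : ℝ)⁻¹) (by positivity)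
  rw [ENNReal.mul_rpow_of_nonneg _ _ (by positivity), ENNReal.pow_rpow_inv_natCast (by omega),
    ENNReal.pow_rpow_inv_natCast (by omega), ← ENNReal.rpow_natCast, ← ENNReal.rpow_mul] at this
  convert this using 3
  push_cast
  rw [div_eq_mul_inv]

/-- Multilinear form estimate for the weight `(1 - |z|²)^{-1/2}` on the unit ball. -/
lemma exists_setLIntegral_pi_invSqrt_le {m : ℕ} (L : (Fin (m + 1) → ℝ) ≃ₗ[ℝ] (Fin (m + 1) → ℝ)) :
    ∃ C : ℝ≥0∞, C ≠ ∞ ∧ ∀ E : Fin (m + 1) → Set ℝ, (∀ i, MeasurableSet (E i)) →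
      ∫⁻ u in Set.univ.pi E, invSqrt (1 - L u ⬝ᵥ L u) ≤
        C * (∏ j, volume (E j)) ^ (((m : ℝ) + 1) / (m + 2)) := by
  obtain ⟨N, hN, hcover⟩ := exists_dotProduct_self_le L
  set V : Fin (m + 1) → Fin (m + 1) → ℝ := fun i => L (Pi.single i 1)
  have hV : ∀ i, V i ≠ 0 := fun i => by simp [V]
  set a : Fin (m + 1) → ℝ := fun i => V i ⬝ᵥ V i
  set K : ℝ≥0∞ := ∑ i, (20 * invSqrt (a i) +
    10 * invSqrt (a i) * invSqrt (√(a i + N * (a i) ^ 2)⁻¹)) with hKdef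
  have hK : K ≠ ∞ := by
    simp [K, ENNReal.mul_ne_top, invSqrt_ne_top]
  have hKi := fun i => Finset.single_le_sum (f := fun i => 20 * invSqrt (a i) +
    10 * invSqrt (a i) * invSqrt (√(a i + N * (a i) ^ 2)⁻¹)) (fun _ _ => zero_le)
      (Finset.mem_univ i)
  rw [← hKdef] at hKi
  refine ⟨(m + 1 : ℕ) * K, ENNReal.mul_ne_top (ENNReal.natCast_ne_top _) hK, fun E hE => ?_⟩
  let w : (Fin (m + 1) → ℝ) → ℝ≥0∞ := fun z => invSqrt (1 - z ⬝ᵥ z)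
  let R : Fin (m + 1) → Set (Fin (m + 1) → ℝ) := fun i => {z | z ⬝ᵥ z ≤ N * (z ⬝ᵥ V i) ^ 2}
  have hdot : ∀ q : Fin (m + 1) → ℝ, Measurable fun z : Fin (m + 1) → ℝ => z ⬝ᵥ q :=
    fun q => (Continuous.dotProduct continuous_id continuous_const).measurable
  have hL : Measurable L := (LinearMap.continuous_of_finiteDimensional L.toLinearMap).measurable
  have hw : Measurable w :=
    measurable_invSqrt.comp (measurable_const.sub measurable_dotProduct_self)
  have hR : ∀ i, MeasurableSet (R i) := fun i =>
    measurableSet_le measurable_dotProduct_self (((hdot _).pow_const 2).const_mul N)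
  have hG : ∀ i, Measurable fun u => (R i).indicator w (L u) := fun i =>
    (hw.indicator (hR i)).comp hL
  have hline : ∀ (j : Fin (m + 1)) (v : Fin m → ℝ), ∃ p, ∀ s : ℝ,
      L (j.insertNth s v : Fin (m + 1) → ℝ) = p + s • V j := by
    refine fun j v => ⟨L (j.insertNth 0 v : Fin (m + 1) → ℝ), fun s => ?_⟩
    rw [insertNth_eq_add_smul_single, map_add, map_smul]
  have hX : ∀ i, ∫⁻ u in Set.univ.pi E, (R i).indicator w (L u) ≤
      K * (∏ j, volume (E j)) ^ (((m : ℝ) + 1) / (m + 2)) := by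
    intro i
    refine le_prod_rpow_of_le_prod_succAbove (fun j => ?_) (i := i) ?_
    · refine setLIntegral_pi_le_of_insertNth (hG i) hE j fun v => ?_
      refine (lintegral_mono fun s => Set.indicator_le_self _ _ _).trans ?_
      obtain ⟨p, hp⟩ := hline j v
      simp only [w, hp]
      exact (setLIntegral_invSqrt_line_le (E j) _ (hV j)).trans (le_self_add.trans (hKi j))
    · refine setLIntegral_pi_le_of_insertNth (hG i) hE i fun v => ?_
      obtain ⟨p, hp⟩ := hline i v
      simp only [hp]
      refine (setLIntegral_invSqrt_line_transversal_le (E i) _ (hV i) hN).trans ?_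
      gcongr
      exact le_add_self.trans (hKi i)
  calc ∫⁻ u in Set.univ.pi E, invSqrt (1 - L u ⬝ᵥ L u)
      ≤ ∫⁻ u in Set.univ.pi E, ∑ i, (R i).indicator w (L u) := by
        refine lintegral_mono fun u => ?_
        obtain ⟨i, hi⟩ := hcover (L u)
        refine le_trans ?_ (Finset.single_le_sum (fun _ _ => zero_le) (Finset.mem_univ i))
        rw [Set.indicator_of_mem (show L u ∈ R i from hi)]
    _ = ∑ i, ∫⁻ u in Set.univ.pi E, (R i).indicator w (L u) :=
        lintegral_finsetSum _ fun i _ => hG i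
    _ ≤ ∑ _i : Fin (m + 1), K * (∏ j, volume (E j)) ^ (((m : ℝ) + 1) / (m + 2)) :=
        Finset.sum_le_sum fun i _ => hX i
    _ = _ := by
        rw [Finset.sum_const, Finset.card_univ, Fintype.card_fin, nsmul_eq_mul, mul_assoc]

lemma exists_setLIntegral_preimage_pi_invSqrt_le {m : ℕ}
    (L : (Fin (m + 1) → ℝ) ≃ₗ[ℝ] (Fin (m + 1) → ℝ)) :
    ∃ C : ℝ≥0∞, C ≠ ∞ ∧ ∀ E : Fin (m + 1) → Set ℝ, (∀ i, MeasurableSet (E i)) →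
      ∫⁻ y in L ⁻¹' Set.univ.pi E, invSqrt (1 - y ⬝ᵥ y) ≤
        C * (∏ j, volume (E j)) ^ (((m : ℝ) + 1) / (m + 2)) := by
  obtain ⟨C, hC, h⟩ := exists_setLIntegral_pi_invSqrt_le L.symm
  have hdet : LinearMap.det (L : (Fin (m + 1) → ℝ) →ₗ[ℝ] (Fin (m + 1) → ℝ)) ≠ 0 :=
    (LinearEquiv.isUnit_det' L).ne_zero
  have hmap := Measure.map_linearMap_addHaar_eq_smul_addHaar
    (volume : Measure (Fin (m + 1) → ℝ)) hdet
  have hL : Measurable L := (LinearMap.continuous_of_finiteDimensional L.toLinearMap).measurable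
  have hL' : Measurable L.symm :=
    (LinearMap.continuous_of_finiteDimensional L.symm.toLinearMap).measurable
  set c := ENNReal.ofReal |(LinearMap.det (L : (Fin (m + 1) → ℝ) →ₗ[ℝ] (Fin (m + 1) → ℝ)))⁻¹|
  refine ⟨c * C, ENNReal.mul_ne_top ENNReal.ofReal_ne_top hC, fun E hE => ?_⟩
  have e := setLIntegral_map (μ := volume) (MeasurableSet.univ_pi hE)
    (f := fun u => invSqrt (1 - L.symm u ⬝ᵥ L.symm u))
    (measurable_invSqrt.comp (measurable_const.sub (measurable_dotProduct_self.comp hL'))) hL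
  simp only [L.symm_apply_apply] at e
  rw [← e, show Measure.map L volume = c • volume from hmap, Measure.restrict_smul,
    lintegral_smul_measure, smul_eq_mul, mul_assoc]
  gcongr
  exact h E hE

section Marginal

variable {d : ℕ}

/-- The derivative of the gnomonic-type chart `y ↦ t (1 - |y|²)^{-1/2} y`. -/
lemma exists_hasFDerivAt_smul_inv_sqrt (t : ℝ) {y : Fin d → ℝ} (hy : t ^ 2 < 1 - y ⬝ᵥ y) :
    ∃ φ' : (Fin d → ℝ) →L[ℝ] (Fin d → ℝ),
      HasFDerivAt (fun y : Fin d → ℝ => (|t| * (√(1 - y ⬝ᵥ y))⁻¹) • y) φ' y ∧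
        |φ'.det| ≤ (1 - y ⬝ᵥ y)⁻¹ := by
  set q := 1 - y ⬝ᵥ y with hq
  have hq0 : 0 < q := lt_of_le_of_lt (sq_nonneg t) hy
  let β : (Fin d → ℝ) →L[ℝ] ℝ := ∑ i, y i • ContinuousLinearMap.proj i
  have hβ : β y = y ⬝ᵥ y := by simp [β, dotProduct]
  have h1 : HasFDerivAt (fun y : Fin d → ℝ => y ⬝ᵥ y) ((2 : ℝ) • β) y := by
    have : ∀ i ∈ (Finset.univ : Finset (Fin d)), HasFDerivAt (fun y : Fin d → ℝ => y i * y i)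
        ((2 : ℝ) • (y i • ContinuousLinearMap.proj (R := ℝ) (φ := fun _ : Fin d => ℝ) i)) y := by
      intro i _
      have h := (ContinuousLinearMap.proj (R := ℝ) (φ := fun _ : Fin d => ℝ) i).hasFDerivAt (x := y)
      refine (h.mul h).congr_fderiv ?_
      ext v
      simp
      ring
    refine (HasFDerivAt.fun_sum this).congr_fderiv ?_
    simp [β, Finset.smul_sum]
  have h2 : HasDerivAt (fun r : ℝ => |t| * (√(1 - r))⁻¹) (|t| * ((√q)⁻¹ * q⁻¹ / 2)) (y ⬝ᵥ y) := by
    have h := (((hasDerivAt_id (y ⬝ᵥ y)).const_sub 1).sqrt hq0.ne').inv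
      (Real.sqrt_pos.2 hq0).ne'
    refine (h.const_mul |t|).congr_deriv ?_
    simp only [id, ← hq]
    rw [Real.sq_sqrt hq0.le]
    field_simp
  have h3 := (HasDerivAt.comp_hasFDerivAt (f := fun y : Fin d → ℝ => y ⬝ᵥ y) y h2 h1).smul
    (hasFDerivAt_id y)
  set k := |t| * (√q)⁻¹
  refine ⟨_, h3, ?_⟩
  have hk0 : 0 ≤ k := by positivity
  have hk1 : k ≤ 1 := by
    exact mul_inv_le_one_of_le₀ (Real.abs_le_sqrt hy.le) (Real.sqrt_nonneg q)
  have hdet : ∀ φ' : (Fin d → ℝ) →L[ℝ] (Fin d → ℝ), (∀ v, φ' v = k • (v + (q⁻¹ * β v) • y)) →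
      |φ'.det| ≤ q⁻¹ := by
    intro φ' hφ
    have : (φ' : (Fin d → ℝ) →ₗ[ℝ] (Fin d → ℝ)) =
        k • LinearMap.transvection (q⁻¹ • (β : (Fin d → ℝ) →ₗ[ℝ] ℝ)) y := by
      refine LinearMap.ext fun v => ?_
      simp [hφ, LinearMap.transvection]
    rw [ContinuousLinearMap.det, this, LinearMap.det_smul, LinearMap.transvection.det]
    have e : 1 + (q⁻¹ • (β : (Fin d → ℝ) →ₗ[ℝ] ℝ)) y = q⁻¹ := by
      simp only [LinearMap.smul_apply, ContinuousLinearMap.coe_coe, hβ, smul_eq_mul]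
      field_simp
      linarith
    rw [e, abs_mul, abs_of_nonneg (by positivity), abs_of_nonneg (by positivity)]
    exact mul_le_of_le_one_left (by positivity) (pow_le_one₀ hk0 hk1)
  refine hdet _ fun v => ?_
  simp only [Function.comp_apply, ← hq, add_apply, smul_apply,
    ContinuousLinearMap.smulRight_apply, ContinuousLinearMap.id_apply, id, smul_eq_mul]
  change k • v + _ = _
  rw [smul_add, smul_smul]
  congr 2
  ring

/-- The cone over the part of the unit sphere lying above `A`, with the distinguished coordinate
first. -/
def truncatedCone (A : Set (Fin d → ℝ)) : Set (ℝ × (Fin d → ℝ)) :=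
  {p | p.1 ^ 2 + p.2 ⬝ᵥ p.2 < 1 ∧ (√(p.1 ^ 2 + p.2 ⬝ᵥ p.2))⁻¹ • p.2 ∈ A}

lemma measurableSet_truncatedCone {A : Set (Fin d → ℝ)} (hA : MeasurableSet A) :
    MeasurableSet (truncatedCone A) := by
  have h : Measurable fun p : ℝ × (Fin d → ℝ) => p.1 ^ 2 + p.2 ⬝ᵥ p.2 :=
    (measurable_fst.pow_const 2).add (measurable_dotProduct_self.comp measurable_snd)
  exact (measurableSet_lt h measurable_const).inter ((h.sqrt.inv.smul measurable_snd) hA)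

lemma volume_truncatedCone_slice_le {A : Set (Fin d → ℝ)} (hA : MeasurableSet A) {t : ℝ}
    (ht : t ≠ 0) :
    volume (Prod.mk t ⁻¹' truncatedCone A) ≤
      ∫⁻ y in A ∩ {y | t ^ 2 < 1 - y ⬝ᵥ y}, ENNReal.ofReal (1 - y ⬝ᵥ y)⁻¹ := by
  set S := A ∩ {y | t ^ 2 < 1 - y ⬝ᵥ y}
  have hS : MeasurableSet S := hA.inter
    (measurableSet_lt measurable_const (measurable_const.sub measurable_dotProduct_self))
  have hsub : Prod.mk t ⁻¹' truncatedCone A ⊆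
      (fun y : Fin d → ℝ => (|t| * (√(1 - y ⬝ᵥ y))⁻¹) • y) '' S := by
    rintro z ⟨h1, h2⟩
    simp only at h1 h2
    have hz : 0 ≤ z ⬝ᵥ z := Finset.sum_nonneg fun i _ => mul_self_nonneg (z i)
    have ht2 : 0 < t ^ 2 := by positivity
    set r := √(t ^ 2 + z ⬝ᵥ z) with hr
    have hr0 : 0 < r := Real.sqrt_pos.2 (by linarith)
    have hr2 : r ^ 2 = t ^ 2 + z ⬝ᵥ z := Real.sq_sqrt (by linarith)
    have hq : 1 - (r⁻¹ • z) ⬝ᵥ (r⁻¹ • z) = (|t| / r) ^ 2 := by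
      rw [smul_dotProduct, dotProduct_smul, smul_eq_mul, smul_eq_mul, div_pow, sq_abs]
      field_simp
      linarith
    refine ⟨r⁻¹ • z, ⟨h2, ?_⟩, ?_⟩
    · change t ^ 2 < 1 - (r⁻¹ • z) ⬝ᵥ (r⁻¹ • z)
      rw [hq, div_pow, sq_abs, lt_div_iff₀ (by positivity)]
      nlinarith
    · have : 0 < |t| := abs_pos.2 ht
      simp only
      rw [hq, Real.sqrt_sq (by positivity), smul_smul]
      have e : |t| * (|t| / r)⁻¹ * r⁻¹ = 1 := by field_simp
      rw [e, one_smul]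
  have hder : ∀ y ∈ S, ∃ φ' : (Fin d → ℝ) →L[ℝ] (Fin d → ℝ),
      HasFDerivAt (fun y : Fin d → ℝ => (|t| * (√(1 - y ⬝ᵥ y))⁻¹) • y) φ' y ∧
        |φ'.det| ≤ (1 - y ⬝ᵥ y)⁻¹ := fun y hy => exists_hasFDerivAt_smul_inv_sqrt t hy.2
  choose! φ' h1 h2 using hder
  calc _ ≤ _ := measure_mono hsub
    _ ≤ ∫⁻ y in S, ENNReal.ofReal |(φ' y).det| :=
      addHaar_image_le_lintegral_abs_det_fderiv volume hS fun y hy => (h1 y hy).hasFDerivWithinAt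
    _ ≤ _ := setLIntegral_mono' hS fun y hy => ENNReal.ofReal_le_ofReal (h2 y hy)

lemma lintegral_indicator_sq_lt_inv (q : ℝ) :
    ∫⁻ t : ℝ, {t : ℝ | t ^ 2 < q}.indicator (fun _ => ENNReal.ofReal q⁻¹) t = 2 * invSqrt q := by
  have hset : {t : ℝ | t ^ 2 < q} = Set.Ioo (-√q) (√q) := by
    ext t; simp [Real.sq_lt]
  rw [hset, lintegral_indicator measurableSet_Ioo, setLIntegral_const, Real.volume_Ioo]
  rcases le_or_gt q 0 with h | h
  · simp [invSqrt_of_nonpos h, Real.sqrt_eq_zero_of_nonpos h]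
  · rw [invSqrt, ← ENNReal.ofReal_mul (by positivity), show (2 : ℝ≥0∞) = ENNReal.ofReal 2 by simp,
      ← ENNReal.ofReal_mul (by positivity)]
    congr 1
    have := Real.sq_sqrt h.le
    have h' := Real.sqrt_pos.2 h
    field_simp
    linarith

lemma volume_truncatedCone_le {A : Set (Fin d → ℝ)} (hA : MeasurableSet A) :
    volume (truncatedCone A) ≤ 2 * ∫⁻ y in A, invSqrt (1 - y ⬝ᵥ y) := by
  have hq : Measurable fun p : ℝ × (Fin d → ℝ) => 1 - p.2 ⬝ᵥ p.2 :=
    measurable_const.sub (measurable_dotProduct_self.comp measurable_snd)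
  let G : ℝ → (Fin d → ℝ) → ℝ≥0∞ := fun t y =>
    {t : ℝ | t ^ 2 < 1 - y ⬝ᵥ y}.indicator (fun _ => ENNReal.ofReal (1 - y ⬝ᵥ y)⁻¹) t
  have hG : Measurable (Function.uncurry G) :=
    (hq.inv.ennreal_ofReal).indicator (measurableSet_lt (measurable_fst.pow_const 2) hq)
  rw [Measure.volume_eq_prod, Measure.prod_apply (measurableSet_truncatedCone hA)]
  calc ∫⁻ t, volume (Prod.mk t ⁻¹' truncatedCone A)
      ≤ ∫⁻ t, ∫⁻ y in A, G t y := by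
        refine lintegral_mono_ae ?_
        filter_upwards [compl_mem_ae_iff.2 (measure_singleton (0 : ℝ))] with t ht
        refine (volume_truncatedCone_slice_le hA ht).trans_eq ?_
        have hm : MeasurableSet {y : Fin d → ℝ | t ^ 2 < 1 - y ⬝ᵥ y} :=
          measurableSet_lt measurable_const (measurable_const.sub measurable_dotProduct_self)
        rw [Set.inter_comm, ← Measure.restrict_restrict hm, ← lintegral_indicator hm]
        rfl
    _ = ∫⁻ y in A, ∫⁻ t, G t y := lintegral_lintegral_swap hG.aemeasurable
    _ = ∫⁻ y in A, 2 * invSqrt (1 - y ⬝ᵥ y) := by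
        simp only [G, lintegral_indicator_sq_lt_inv]
    _ = _ := lintegral_const_mul _
        (measurable_invSqrt.comp (measurable_const.sub measurable_dotProduct_self))

/-- The marginal of the surface measure that forgets the last coordinate has density at most a
multiple of `(1 - |y|²)^{-1/2}`. -/
lemma exists_normSphere_preimage_init_le (d : ℕ) :
    ∃ C : ℝ≥0∞, C ≠ ∞ ∧ ∀ A : Set (Fin d → ℝ), MeasurableSet A →
      normSphere (d + 1) {σ | (fun i : Fin d => σ i.castSucc) ∈ A} ≤
        C * ∫⁻ y in A, invSqrt (1 - y ⬝ᵥ y) := by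
  set S : Measure (EuclideanSpace ℝ (Fin (d + 1))) :=
    Measure.map Subtype.val (volume : Measure (EuclideanSpace ℝ (Fin (d + 1)))).toSphere
  have hS : S Set.univ ≠ 0 := by
    rw [Measure.map_apply measurable_subtype_coe .univ, Set.preimage_univ]
    exact Measure.measure_univ_ne_zero.2 (Measure.toSphere_ne_zero _)
  refine ⟨(S Set.univ)⁻¹ * ((d + 1 : ℕ) * 2), ENNReal.mul_ne_top (ENNReal.inv_ne_top.2 hS)
    (ENNReal.mul_ne_top (ENNReal.natCast_ne_top _) (by simp)), fun A hA => ?_⟩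
  have hinit : Measurable fun σ : EuclideanSpace ℝ (Fin (d + 1)) =>
      fun i : Fin d => σ i.castSucc := by fun_prop
  have hm : MeasurableSet {σ : EuclideanSpace ℝ (Fin (d + 1)) |
      (fun i : Fin d => σ i.castSucc) ∈ A} := hinit hA
  change ((S Set.univ)⁻¹ • S) _ ≤ _
  rw [Measure.smul_apply, smul_eq_mul, mul_assoc, mul_assoc]
  gcongr
  rw [Measure.map_apply measurable_subtype_coe hm,
    Measure.toSphere_apply' _ (measurable_subtype_coe hm), finrank_euclideanSpace_fin]
  gcongr
  refine le_trans ?_ (volume_truncatedCone_le hA)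
  have hmp := (volume_preserving_piFinSuccAbove (fun _ : Fin (d + 1) => ℝ) (Fin.last d)).comp
    (PiLp.volume_preserving_ofLp (Fin (d + 1)))
  rw [← hmp.measure_preimage (measurableSet_truncatedCone hA).nullMeasurableSet]
  refine measure_mono ?_
  rintro _ ⟨r, ⟨hr0, hr1⟩, _, ⟨σ, hσ, rfl⟩, rfl⟩
  have hnorm : (σ : EuclideanSpace ℝ (Fin (d + 1))) (Fin.last d) ^ 2 +
      (fun i : Fin d => (σ : EuclideanSpace ℝ (Fin (d + 1))) i.castSucc) ⬝ᵥ
        (fun i : Fin d => (σ : EuclideanSpace ℝ (Fin (d + 1))) i.castSucc) = 1 := by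
    have h := EuclideanSpace.norm_sq_eq (σ : EuclideanSpace ℝ (Fin (d + 1)))
    rw [norm_eq_of_mem_sphere σ, Fin.sum_univ_castSucc] at h
    simp only [Real.norm_eq_abs, sq_abs] at h
    simp only [dotProduct, ← sq]
    linarith
  set s : Fin d → ℝ := fun i => (σ : EuclideanSpace ℝ (Fin (d + 1))) i.castSucc
  set τ := (σ : EuclideanSpace ℝ (Fin (d + 1))) (Fin.last d)
  have himage : (MeasurableEquiv.piFinSuccAbove (fun _ : Fin (d + 1) => ℝ) (Fin.last d))
      (WithLp.ofLp (r • (σ : EuclideanSpace ℝ (Fin (d + 1))))) = (r * τ, r • s) := by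
    ext <;> simp [MeasurableEquiv.piFinSuccAbove, Fin.insertNthEquiv, Fin.init, s, τ]
  have hr : (r * τ) ^ 2 + (r • s) ⬝ᵥ (r • s) = r ^ 2 := by
    rw [smul_dotProduct, dotProduct_smul, smul_eq_mul, smul_eq_mul]
    linear_combination r ^ 2 * hnorm
  change _ ∈ truncatedCone A
  simp only [Function.comp_apply]
  rw [himage]
  refine ⟨?_, ?_⟩
  · simp only [hr]
    nlinarith
  · simp only [hr]
    rw [Real.sqrt_sq hr0.le, smul_smul, inv_mul_cancel₀ hr0.ne', one_smul]
    exact hσ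

end Marginal

/-- The involution `y ↦ (y_m - y_0, …, y_m - y_{m-1}, y_m)`. -/
def lastSubEquiv (m : ℕ) : (Fin (m + 1) → ℝ) ≃ₗ[ℝ] (Fin (m + 1) → ℝ) :=
  LinearEquiv.ofInvolutive
    { toFun := fun y k => if k = Fin.last m then y k else y (Fin.last m) - y k
      map_add' := fun x y => by ext k; by_cases h : k = Fin.last m <;> simp [h]; ring
      map_smul' := fun c x => by ext k; by_cases h : k = Fin.last m <;> simp [h]; ring }
    (fun y => by ext k; by_cases h : k = Fin.last m <;> simp [h])

lemma lastSubEquiv_last {m : ℕ} (y : Fin (m + 1) → ℝ) :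
    lastSubEquiv m y (Fin.last m) = y (Fin.last m) :=
  if_pos rfl

lemma lastSubEquiv_castSucc {m : ℕ} (y : Fin (m + 1) → ℝ) (j : Fin m) :
    lastSubEquiv m y j.castSucc = y (Fin.last m) - y j.castSucc :=
  if_neg (Fin.castSucc_lt_last j).ne

lemma exists_normSphere_le (m : ℕ) :
    ∃ C : ℝ≥0∞, C ≠ ∞ ∧ ∀ E : Fin (m + 1) → Set ℝ, (∀ i, MeasurableSet (E i)) →
      normSphere (m + 2) {σ | lastSubEquiv m (fun i => σ i.castSucc) ∈ Set.univ.pi E} ≤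
        C * (∏ j, volume (E j)) ^ (((m : ℝ) + 1) / (m + 2)) := by
  obtain ⟨C₁, hC₁, h₁⟩ := exists_normSphere_preimage_init_le (m + 1)
  obtain ⟨C₂, hC₂, h₂⟩ := exists_setLIntegral_preimage_pi_invSqrt_le (lastSubEquiv m)
  refine ⟨C₁ * C₂, ENNReal.mul_ne_top hC₁ hC₂, fun E hE => ?_⟩
  have hL : Measurable (lastSubEquiv m) :=
    (LinearMap.continuous_of_finiteDimensional (lastSubEquiv m).toLinearMap).measurable
  rw [mul_assoc]
  exact (h₁ _ (hL (MeasurableSet.univ_pi hE))).trans (mul_le_mul_right (h₂ E hE) _)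

instance (n : ℕ) : SFinite (normSphere n) := by unfold normSphere; infer_instance

/-- The input of `sphAvg` consisting of `m` indicator functions and two general functions. -/
noncomputable def testInput {m : ℕ} (I : Fin m → Set ℝ) (g h : ℝ → ℝ) (j : Fin (m + 2)) : ℝ → ℝ :=
  if hj : (j : ℕ) < m then (I ⟨j, hj⟩).indicator fun _ => (1 : ℝ)
  else if (j : ℕ) = m then g else h

section Duality

variable {m : ℕ} {I : Fin m → Set ℝ} {g h : ℝ → ℝ}

lemma measurable_testInput (hI : ∀ j, MeasurableSet (I j)) (hg : Measurable g) (hh : Measurable h)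
    (j : Fin (m + 2)) : Measurable (testInput I g h j) := by
  unfold testInput
  split_ifs with h1 h2
  exacts [measurable_const.indicator (hI _), hg, hh]

lemma prod_testInput (x : ℝ) (σ : Fin (m + 2) → ℝ) :
    ∏ j, ENNReal.ofReal (testInput I g h j (x - σ j)) =
      (∏ j : Fin m, (I j).indicator 1 (x - σ j.castSucc.castSucc)) *
        ENNReal.ofReal (g (x - σ (Fin.last m).castSucc)) *
        ENNReal.ofReal (h (x - σ (Fin.last (m + 1)))) := by
  rw [Fin.prod_univ_castSucc, Fin.prod_univ_castSucc]
  congr 2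
  · refine Finset.prod_congr rfl fun j _ => ?_
    by_cases hj : x - σ j.castSucc.castSucc ∈ I j <;> simp [testInput, hj]
  · simp [testInput]
  · simp [testInput]

lemma measurable_uncurry_prod_ofReal {n : ℕ} {f : Fin n → ℝ → ℝ} (hf : ∀ j, Measurable (f j)) :
    Measurable fun p : ℝ × EuclideanSpace ℝ (Fin n) =>
      ∏ j, ENNReal.ofReal (f j (p.1 - p.2 j)) :=
  Finset.measurable_fun_prod _ fun j _ => ((hf j).comp (by fun_prop)).ennreal_ofReal

lemma measurable_sphAvg {n : ℕ} {f : Fin n → ℝ → ℝ} (hf : ∀ j, Measurable (f j)) :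
    Measurable (sphAvg n f) :=
  (measurable_uncurry_prod_ofReal hf).lintegral_prod_right'

lemma prod_indicator_le_indicator_pi {ι : Type*} [Fintype ι] (E : ι → Set ℝ) (u : ι → ℝ) :
    ∏ k, (E k).indicator (1 : ℝ → ℝ≥0∞) (u k) ≤ (Set.univ.pi E).indicator 1 u := by
  by_cases hu : u ∈ Set.univ.pi E
  · rw [Set.indicator_of_mem hu]
    exact Finset.prod_le_one' fun k _ => Set.indicator_le_self _ _ _
  · obtain ⟨k, hk⟩ : ∃ k, u k ∉ E k := by simpa [Set.mem_pi] using hu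
    rw [Finset.prod_eq_zero (Finset.mem_univ k) (Set.indicator_of_notMem hk _)]
    exact zero_le

/-- The estimate dual to the weak type bound. -/
lemma exists_setLIntegral_sphAvg_le (m : ℕ) :
    ∃ C : ℝ≥0∞, C ≠ ∞ ∧ ∀ I : Fin m → Set ℝ, (∀ j, MeasurableSet (I j)) →
      ∀ g h : ℝ → ℝ, Measurable g → Measurable h → ∀ A : Set ℝ, MeasurableSet A →
      ∫⁻ x in A, sphAvg (m + 2) (testInput I g h) x ≤
        C * ((∏ j, volume (I j)) * volume A) ^ (((m : ℝ) + 1) / (m + 2)) *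
          (∫⁻ x, ENNReal.ofReal (g x)) * essSup (fun x => ENNReal.ofReal (h x)) volume := by
  obtain ⟨C, hC, hS⟩ := exists_normSphere_le m
  refine ⟨C, hC, fun I hI g h hg hh A hA => ?_⟩
  set H := essSup (fun x => ENNReal.ofReal (h x)) volume
  set J : Fin (m + 1) → Set ℝ := Fin.snoc I A
  have hJ : ∀ k, MeasurableSet (J k) := fun k => by
    induction k using Fin.lastCases <;> simp [J, hI, hA]
  set θ : ℝ := ((m : ℝ) + 1) / (m + 2)
  -- the part of the integrand that involves only indicators, centred at the coordinate of `g`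
  let Ψ : ℝ → EuclideanSpace ℝ (Fin (m + 2)) → ℝ≥0∞ := fun t σ =>
    ∏ k, (J k).indicator 1 (t + lastSubEquiv m (fun i => σ i.castSucc) k)
  have hL : Measurable (lastSubEquiv m) :=
    (LinearMap.continuous_of_finiteDimensional (lastSubEquiv m).toLinearMap).measurable
  have hinit : Measurable fun σ : EuclideanSpace ℝ (Fin (m + 2)) =>
      lastSubEquiv m fun i => σ i.castSucc := hL.comp (by fun_prop)
  have hΨ : Measurable (Function.uncurry Ψ) := by
    refine Finset.measurable_fun_prod _ fun k _ => ?_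
    exact (measurable_one.indicator (hJ k)).comp
      (measurable_fst.add ((measurable_pi_apply k).comp (hinit.comp measurable_snd)))
  have hΨ' : ∀ x (σ : EuclideanSpace ℝ (Fin (m + 2))),
      Ψ (x - σ (Fin.last m).castSucc) σ =
        A.indicator 1 x * ∏ j : Fin m, (I j).indicator 1 (x - σ j.castSucc.castSucc) := by
    intro x σ
    simp only [Ψ]
    rw [Fin.prod_univ_castSucc, mul_comm]
    simp [lastSubEquiv_last, lastSubEquiv_castSucc, J]
  have hΨint : ∀ t, ∫⁻ σ, Ψ t σ ∂normSphere (m + 2) ≤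
      C * ((∏ j, volume (I j)) * volume A) ^ θ := by
    intro t
    have hE : ∀ k, MeasurableSet ((fun s => t + s) ⁻¹' J k) := fun k =>
      (measurable_const_add t) (hJ k)
    calc ∫⁻ σ, Ψ t σ ∂normSphere (m + 2)
        ≤ ∫⁻ σ, {σ : EuclideanSpace ℝ (Fin (m + 2)) | lastSubEquiv m (fun i => σ i.castSucc) ∈
            Set.univ.pi fun k => (fun s => t + s) ⁻¹' J k}.indicator 1 σ ∂normSphere (m + 2) :=
          lintegral_mono fun σ => prod_indicator_le_indicator_pi
            (fun k => (fun s => t + s) ⁻¹' J k) (lastSubEquiv m fun i => σ i.castSucc)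
      _ = normSphere (m + 2) {σ | lastSubEquiv m (fun i => σ i.castSucc) ∈
            Set.univ.pi fun k => (fun s => t + s) ⁻¹' J k} :=
          lintegral_indicator_one (hinit (MeasurableSet.univ_pi hE))
      _ ≤ C * (∏ k, volume ((fun s => t + s) ⁻¹' J k)) ^ θ := hS _ hE
      _ = _ := by
          simp_rw [measure_preimage_add]
          rw [Fin.prod_univ_castSucc]
          simp [J]
  have hf := measurable_testInput hI hg hh
  have hm := measurable_uncurry_prod_ofReal hf
  have hx : ∀ σ : EuclideanSpace ℝ (Fin (m + 2)),
      ∫⁻ x in A, ∏ j, ENNReal.ofReal (testInput I g h j (x - σ j)) ≤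
        (∫⁻ t, ENNReal.ofReal (g t) * Ψ t σ) * H := by
    intro σ
    have hH : ∀ᵐ x : ℝ, ENNReal.ofReal (h (x - σ (Fin.last (m + 1)))) ≤ H :=
      (measurePreserving_sub_right volume _).quasiMeasurePreserving.ae
        (ENNReal.ae_le_essSup fun x => ENNReal.ofReal (h x))
    calc _ = ∫⁻ x, A.indicator (fun x => ∏ j, ENNReal.ofReal (testInput I g h j (x - σ j))) x :=
          (lintegral_indicator hA _).symm
      _ ≤ ∫⁻ x, ENNReal.ofReal (g (x - σ (Fin.last m).castSucc)) *
            Ψ (x - σ (Fin.last m).castSucc) σ * H := by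
          refine lintegral_mono_ae ?_
          filter_upwards [hH] with x hx
          rw [hΨ']
          by_cases hxA : x ∈ A
          · rw [Set.indicator_of_mem hxA, Set.indicator_of_mem hxA,
              prod_testInput x fun j => σ j, Pi.one_apply, one_mul, mul_comm (ENNReal.ofReal _)]
            gcongr
          · rw [Set.indicator_of_notMem hxA]
            exact zero_le
      _ = ∫⁻ t, ENNReal.ofReal (g t) * Ψ t σ * H :=
          lintegral_sub_right_eq_self (fun t => ENNReal.ofReal (g t) * Ψ t σ * H) _
      _ = _ := lintegral_mul_const _ (hg.ennreal_ofReal.mul (hΨ.comp measurable_prodMk_right))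
  have hgΨ : Measurable (Function.uncurry fun (t : ℝ) (σ : EuclideanSpace ℝ (Fin (m + 2))) =>
      ENNReal.ofReal (g t) * Ψ t σ) := (hg.comp measurable_fst).ennreal_ofReal.mul hΨ
  calc ∫⁻ x in A, sphAvg (m + 2) (testInput I g h) x
      = ∫⁻ σ, (∫⁻ x in A, ∏ j, ENNReal.ofReal (testInput I g h j (x - σ j))) ∂normSphere (m + 2) :=
        lintegral_lintegral_swap hm.aemeasurable
    _ ≤ ∫⁻ σ, (∫⁻ t, ENNReal.ofReal (g t) * Ψ t σ) * H ∂normSphere (m + 2) := lintegral_mono hx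
    _ = (∫⁻ t, ENNReal.ofReal (g t) * ∫⁻ σ, Ψ t σ ∂normSphere (m + 2)) * H := by
        have hleft : Measurable fun σ => ∫⁻ t, ENNReal.ofReal (g t) * Ψ t σ :=
          hgΨ.lintegral_prod_left'
        rw [lintegral_mul_const _ hleft, ← lintegral_lintegral_swap hgΨ.aemeasurable]
        congr 2 with t
        exact lintegral_const_mul _ (hΨ.comp measurable_prodMk_left)
    _ ≤ (∫⁻ t, ENNReal.ofReal (g t) * (C * ((∏ j, volume (I j)) * volume A) ^ θ)) * H := by
        gcongr with t
        exact hΨint t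
    _ = _ := by
        rw [lintegral_mul_const _ hg.ennreal_ofReal]
        ring

end Duality

/-- A bound for integrals over all sets of finite measure gives a weak type bound. -/
lemma mul_volume_rpow_le_of_setLIntegral_le {F : ℝ → ℝ≥0∞} (hF : Measurable F) {θ : ℝ} (hθ : 0 < θ)
    (hθ' : θ < 1) {B : ℝ≥0∞} (hB : ∀ A, MeasurableSet A → ∫⁻ x in A, F x ≤ B * volume A ^ θ)
    {l : ℝ≥0∞} (hl : l ≠ ∞) :
    l * volume {x | l < F x} ^ (1 - θ) ≤ B := by
  have hm : MeasurableSet {x | l < F x} := measurableSet_lt measurable_const hF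
  have hfin : ∀ A ⊆ {x | l < F x}, MeasurableSet A → volume A ≠ ∞ →
      l * volume A ^ (1 - θ) ≤ B := by
    intro A hsub hA hA'
    rcases eq_or_ne (volume A) 0 with h0 | h0
    · simp [h0, ENNReal.zero_rpow_of_pos (sub_pos.2 hθ')]
    have h1 : l * volume A ≤ B * volume A ^ θ := by
      rw [← setLIntegral_const]
      exact (setLIntegral_mono' hA fun x hx => (hsub hx).le).trans (hB A hA)
    have h2 : volume A = volume A ^ (1 - θ) * volume A ^ θ := by
      rw [← ENNReal.rpow_add _ _ h0 hA', sub_add_cancel, ENNReal.rpow_one]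
    nth_rw 1 [h2] at h1
    rw [← mul_assoc] at h1
    exact (ENNReal.mul_le_mul_iff_left (ENNReal.rpow_pos (pos_iff_ne_zero.2 h0) hA').ne'
      (ENNReal.rpow_ne_top_of_nonneg hθ.le hA')).1 h1
  have hlim : Filter.Tendsto (fun N : ℕ =>
      l * volume ({x | l < F x} ∩ Set.Icc (-N : ℝ) N) ^ (1 - θ))
      Filter.atTop (nhds (l * volume {x | l < F x} ^ (1 - θ))) := by
    have hmono : Monotone fun N : ℕ => {x | l < F x} ∩ Set.Icc (-N : ℝ) N := fun M N hMN =>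
      Set.inter_subset_inter_right _ (Set.Icc_subset_Icc (by simpa using hMN) (by simpa using hMN))
    have hunion : ⋃ N : ℕ, {x | l < F x} ∩ Set.Icc (-N : ℝ) N = {x | l < F x} := by
      rw [← Set.inter_iUnion, Set.inter_eq_left]
      intro x _
      obtain ⟨N, hN⟩ := exists_nat_ge |x|
      exact Set.mem_iUnion.2 ⟨N, abs_le.1 hN⟩
    have h := tendsto_measure_iUnion_atTop (μ := volume) hmono
    rw [hunion] at h
    exact ENNReal.Tendsto.const_mul ((ENNReal.continuous_rpow_const.tendsto _).comp h) (Or.inr hl)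
  exact le_of_tendsto' hlim fun N => hfin _ Set.inter_subset_left (hm.inter measurableSet_Icc)
    (measure_ne_top_of_subset Set.inter_subset_right measure_Icc_lt_top.ne)

theorem restricted_weak_type_at_K (n : ℕ) (hn : 3 ≤ n) :
    ∃ C : ℝ, 0 < C ∧ ∀ I : Fin (n - 2) → Set ℝ,
      (∀ j, MeasurableSet (I j)) → (∀ j, volume (I j) < ∞) →
      ∀ g h : ℝ → ℝ, Measurable g → (∀ x, 0 ≤ g x) →
        Measurable h → (∀ x, 0 ≤ h x) →
      ∀ l : ℝ, 0 < l →
      ENNReal.ofReal l *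
          volume {x : ℝ | ENNReal.ofReal l < sphAvg n (fun j =>
            if hj : (j : ℕ) < n - 2 then (I ⟨j, hj⟩).indicator fun _ => (1 : ℝ)
            else if (j : ℕ) = n - 2 then g else h) x} ^ ((1 : ℝ) / n) ≤
        ENNReal.ofReal C * (∏ j, volume (I j) ^ (((n : ℝ) - 1) / n)) *
          lpNorm 1 (fun x => ENNReal.ofReal (g x)) *
          lpNorm ∞ (fun x => ENNReal.ofReal (h x)) := by
  obtain ⟨m, rfl⟩ : ∃ m, n = m + 2 := ⟨n - 2, by omega⟩
  obtain ⟨C, hC, hbound⟩ := exists_setLIntegral_sphAvg_le m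
  refine ⟨C.toReal + 1, by positivity, fun I hI _ g h hg _ hh _ l _ => ?_⟩
  change Fin m → Set ℝ at I
  change ENNReal.ofReal l * volume {x : ℝ | ENNReal.ofReal l <
    sphAvg (m + 2) (testInput I g h) x} ^ _ ≤
      ENNReal.ofReal (C.toReal + 1) * (∏ j : Fin m, volume (I j) ^ _) * _ * _
  set θ : ℝ := ((m : ℝ) + 1) / (m + 2) with hθdef
  have hm2 : (0 : ℝ) < m + 2 := by positivity
  have hθ : 0 < θ := by positivity
  have hθ' : θ < 1 := by rw [hθdef, div_lt_one hm2]; linarith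
  have e1 : (1 : ℝ) / ((m + 2 : ℕ) : ℝ) = 1 - θ := by
    rw [hθdef]; push_cast; field_simp; ring
  have e2 : (((m + 2 : ℕ) : ℝ) - 1) / ((m + 2 : ℕ) : ℝ) = θ := by
    rw [hθdef]; push_cast; congr 1; ring
  have hCle : C ≤ ENNReal.ofReal (C.toReal + 1) :=
    (ENNReal.le_ofReal_iff_toReal_le hC (by positivity)).2 (by linarith)
  rw [e1, e2, ENNReal.prod_rpow_of_nonneg hθ.le]
  refine mul_volume_rpow_le_of_setLIntegral_le (measurable_sphAvg (measurable_testInput hI hg hh))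
    hθ hθ' (fun A hA => (hbound I hI g h hg hh A hA).trans ?_) ENNReal.ofReal_ne_top
  simp only [_root_.lpNorm, ENNReal.one_ne_top, if_true, if_false, ENNReal.toReal_one,
    ENNReal.rpow_one, div_one]
  rw [ENNReal.mul_rpow_of_nonneg _ _ hθ.le]
  calc _ = C * (∏ j, volume (I j)) ^ θ * (∫⁻ x, ENNReal.ofReal (g x)) *
        essSup (fun x => ENNReal.ofReal (h x)) volume * volume A ^ θ := by ring
    _ ≤ _ := by gcongr
end

section
/- Let n ≥ 3 be an integer. There exists a finite constant C > 0, depending only on n, such that ‖T(f₁,…,fₙ)‖_{(n+1)/2} ≤ C (∏_{j=1}^{n−1} ‖f_j‖_{(n+1)/(n−1)}) ‖fₙ‖_1 for all nonnegative measurable functions f₁,…,fₙ on ℝ; that is, T is of strong type at the point G = ((n−1)/(n+1),…,(n−1)/(n+1), 1; 2/(n+1)). -/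
open MeasureTheory ENNReal

section Shell

open Set Metric Module
open scoped Pointwise

variable {E : Type*} [NormedAddCommGroup E] [NormedSpace ℝ E] [MeasurableSpace E] [BorelSpace E]
  [FiniteDimensional ℝ E]

/-- The spherical measure of a set is controlled by the Haar measure of a thin shell over it. -/
lemma ofReal_mul_toSphere_le [Nontrivial E] (μ : Measure E) [μ.IsAddHaarMeasure]
    {s : Set (sphere (0 : E) 1)} (hs : MeasurableSet s) {ε : ℝ} (h0 : 0 < ε) (h1 : ε < 1) :
    ENNReal.ofReal ε * μ.toSphere s ≤ finrank ℝ E *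
      μ {x | 1 - ε ≤ ‖x‖ ∧ ‖x‖ < 1 ∧ ∃ σ ∈ s, x = ‖x‖ • (σ : E)} := by
  rw [μ.toSphere_apply' hs, mul_left_comm]
  gcongr
  set T : Set E := Ioo (0 : ℝ) 1 • ((↑) '' s)
  set A : Set E := {x | 1 - ε ≤ ‖x‖ ∧ ‖x‖ < 1 ∧ ∃ σ ∈ s, x = ‖x‖ • (σ : E)}
  have hTfin : μ T ≠ ∞ := by
    refine ne_top_of_le_ne_top (measure_ball_lt_top (x := (0 : E)) (r := 1)).ne (measure_mono ?_)
    rintro _ ⟨r, hr, _, ⟨σ, -, rfl⟩, rfl⟩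
    simp [norm_smul, abs_of_pos hr.1, hr.2]
  have hsub : T ⊆ A ∪ (1 - ε) • T := by
    rintro _ ⟨r, hr, _, ⟨σ, hσ, rfl⟩, rfl⟩
    have hn : ‖r • (σ : E)‖ = r := by simp [norm_smul, abs_of_pos hr.1]
    rcases le_or_gt (1 - ε) r with h | h
    · left
      simp only [A, mem_ofPred_eq, hn]
      exact ⟨h, hr.2, σ, hσ, rfl⟩
    · right
      have h2 : 0 < 1 - ε := by linarith
      refine ⟨(r / (1 - ε)) • (σ : E), ⟨r / (1 - ε), ⟨div_pos hr.1 h2, (div_lt_one h2).2 h⟩, _,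
        ⟨σ, hσ, rfl⟩, rfl⟩, ?_⟩
      simp only [smul_smul]
      congr 1
      field_simp
  have hscale : μ ((1 - ε) • T) ≤ ENNReal.ofReal (1 - ε) * μ T := by
    rw [Measure.addHaar_smul]
    gcongr
    rw [abs_of_nonneg (by apply pow_nonneg; linarith)]
    exact pow_le_of_le_one (by linarith) (by linarith) finrank_pos.ne'
  have hsplit : μ T = ENNReal.ofReal ε * μ T + ENNReal.ofReal (1 - ε) * μ T := by
    rw [← add_mul, ← ENNReal.ofReal_add h0.le (by linarith)]
    simp
  refine (ENNReal.add_le_add_iff_right (a := ENNReal.ofReal (1 - ε) * μ T)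
    (ENNReal.mul_ne_top ofReal_ne_top hTfin)).1 ?_
  rw [← hsplit]
  exact (measure_mono hsub).trans ((measure_union_le _ _).trans (by gcongr))

/-- If the thin shells over a scale-invariant region `R` satisfy a uniform density bound under a
linear map `L`, then the push-forward of the spherical measure has bounded density. -/
lemma map_toSphere_le [Nontrivial E] (μ : Measure E) [μ.IsAddHaarMeasure]
    {F : Type*} [NormedAddCommGroup F] [NormedSpace ℝ F] [MeasurableSpace F] [BorelSpace F]
    [FiniteDimensional ℝ F] (ν : Measure F) [ν.IsAddHaarMeasure] (L : E →L[ℝ] F) {R : Set E}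
    (hR : MeasurableSet R) (hRs : ∀ x ∈ R, ∀ r : ℝ, 0 < r → r • x ∈ R) {C : ℝ≥0∞}
    (hC0 : C ≠ 0) (hC : C ≠ ∞)
    (h : ∀ ε : ℝ, 0 < ε → ε ≤ 1 / 2 → ∀ A : Set F, IsOpen A →
      μ {x | x ∈ R ∧ 1 - ε ≤ ‖x‖ ∧ ‖x‖ < 1 ∧ L x ∈ A} ≤ C * ENNReal.ofReal ε * ν A) :
    (μ.toSphere.restrict {σ | (σ : E) ∈ R}).map (fun σ : sphere (0 : E) 1 => L σ) ≤
      (finrank ℝ E * C) • ν := by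
  have hLm : Measurable (fun σ : sphere (0 : E) 1 => L σ) :=
    (L.continuous.comp continuous_subtype_val).measurable
  have hRm : MeasurableSet {σ : sphere (0 : E) 1 | (σ : E) ∈ R} := measurable_subtype_coe hR
  have hopen : ∀ K A : Set F, IsCompact K → IsOpen A → K ⊆ A →
      (μ.toSphere.restrict {σ | (σ : E) ∈ R}).map (fun σ : sphere (0 : E) 1 => L σ) K ≤
        finrank ℝ E * C * ν A := by
    intro K A hK hA hKA
    rw [Measure.map_apply hLm hK.measurableSet, Measure.restrict_apply (hLm hK.measurableSet)]
    obtain ⟨δ, hδ, hδA⟩ := hK.exists_thickening_subset_open hA hKA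
    obtain ⟨M, hM⟩ := hK.isBounded.exists_norm_le
    set ε : ℝ := min (1 / 2) (δ / (2 * (|M| + 1))) with hε
    have hMp : 0 < |M| + 1 := by positivity
    have hε0 : 0 < ε := by positivity
    have hε1 : ε ≤ 1 / 2 := min_le_left _ _
    have hεδ : ε * (|M| + 1) < δ := by
      have : ε ≤ δ / (2 * (|M| + 1)) := min_le_right _ _
      rw [le_div_iff₀ (by positivity)] at this
      nlinarith
    have key := ofReal_mul_toSphere_le μ ((hLm hK.measurableSet).inter hRm) hε0
      (lt_of_le_of_lt hε1 (by norm_num))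
    have hle : μ {x | 1 - ε ≤ ‖x‖ ∧ ‖x‖ < 1 ∧ ∃ σ ∈ ((fun σ : sphere (0 : E) 1 => L σ) ⁻¹' K ∩
        {σ | (σ : E) ∈ R}), x = ‖x‖ • (σ : E)} ≤ C * ENNReal.ofReal ε * ν A := by
      refine (measure_mono ?_).trans (h ε hε0 hε1 A hA)
      rintro x ⟨hx1, hx2, σ, ⟨hσK, hσR⟩, hx⟩
      have hxpos : 0 < ‖x‖ := by linarith
      refine ⟨?_, hx1, hx2, ?_⟩
      · rw [hx]
        exact hRs _ hσR _ hxpos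
      · apply hδA
        rw [mem_thickening_iff]
        refine ⟨L σ, hσK, ?_⟩
        have h1 : L x - L σ = (‖x‖ - 1) • L σ := by
          conv_lhs => rw [hx, map_smul]
          rw [sub_smul, one_smul]
        rw [dist_eq_norm, h1, norm_smul, Real.norm_eq_abs, abs_of_neg (by linarith)]
        have h2 : ‖L σ‖ ≤ |M| + 1 := (hM _ hσK).trans ((le_abs_self M).trans (by linarith))
        calc -(‖x‖ - 1) * ‖L σ‖ ≤ ε * (|M| + 1) := by
              gcongr
              linarith
          _ < δ := hεδ
    have hε' : ENNReal.ofReal ε ≠ 0 := by simpa using hε0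
    refine (ENNReal.mul_le_mul_iff_right hε' ofReal_ne_top).1 (key.trans ?_)
    calc _ ≤ finrank ℝ E * (C * ENNReal.ofReal ε * ν A) := by gcongr
      _ = _ := by ring
  have : IsFiniteMeasure
      ((μ.toSphere.restrict {σ | (σ : E) ∈ R}).map (fun σ : sphere (0 : E) 1 => L σ)) :=
    inferInstance
  refine Measure.le_iff.2 fun s hs => ?_
  rw [hs.measure_eq_iSup_isCompact_of_ne_top (measure_ne_top _ _)]
  refine iSup₂_le fun K hKs => iSup_le fun hK => ?_
  have hcpt : (μ.toSphere.restrict {σ | (σ : E) ∈ R}).map (fun σ : sphere (0 : E) 1 => L σ) K ≤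
      finrank ℝ E * C * ν K := by
    have hC' : finrank ℝ E * C ≠ ∞ := ENNReal.mul_ne_top (natCast_ne_top _) hC
    rw [K.measure_eq_iInf_isOpen ν]
    have hC0' : (finrank ℝ E : ℝ≥0∞) * C ≠ 0 :=
      mul_ne_zero (Nat.cast_ne_zero.2 finrank_pos.ne') hC0
    simp_rw [ENNReal.mul_iInf_of_ne hC0' hC']
    exact le_iInf₂ fun A hKA => le_iInf fun hA => hopen K A hK hA hKA
  exact hcpt.trans (by
    simp only [Measure.smul_apply, smul_eq_mul]
    gcongr)

end Shell

section Sections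

open Set Metric Module

variable {E : Type*} [NormedAddCommGroup E] [InnerProductSpace ℝ E]

/-- In an affine plane the measure of a round annulus is controlled by the difference of the
squared radii, uniformly in the position of the plane. -/
lemma exists_measure_annulus_le [FiniteDimensional ℝ E] {V : Type*} [NormedAddCommGroup V]
    [NormedSpace ℝ V] [FiniteDimensional ℝ V] [MeasurableSpace V] [BorelSpace V]
    (μ : Measure V) [μ.IsAddHaarMeasure] (hV : finrank ℝ V = 2) (M : V →ₗ[ℝ] E)
    (hM : Function.Injective M) :
    ∃ C : ℝ≥0∞, C ≠ ∞ ∧ ∀ (x : E) (a b : ℝ), a ≤ b →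
      μ {z | a ≤ ‖x + M z‖ ^ 2 ∧ ‖x + M z‖ ^ 2 < b} ≤ C * ENNReal.ofReal (b - a) := by
  have hMc : Continuous M := M.continuous_of_finiteDimensional
  set D : ℝ → Set V := fun ρ => {z | ‖M z‖ ^ 2 < ρ} with hD
  have hDm : ∀ ρ, MeasurableSet (D ρ) := fun ρ =>
    (isOpen_lt (by fun_prop) continuous_const).measurableSet
  have hD1 : μ (D 1) ≠ ∞ := by
    obtain ⟨K, -, hK⟩ := M.exists_antilipschitzWith (LinearMap.ker_eq_bot.2 hM)
    have hb : Bornology.IsBounded (M ⁻¹' ball 0 1) := hK.isBounded_preimage isBounded_ball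
    refine ((measure_mono ?_).trans_lt hb.measure_lt_top).ne
    intro z hz
    have : ‖M z‖ ^ 2 < 1 := hz
    simpa using (sq_lt_one_iff₀ (norm_nonneg _)).1 this
  have hDρ : ∀ ρ, μ (D ρ) = ENNReal.ofReal ρ * μ (D 1) := by
    intro ρ
    rcases le_or_gt ρ 0 with h | h
    · have : D ρ = ∅ := by
        ext z
        simpa [hD] using h.trans (sq_nonneg ‖M z‖)
      simp [this, ENNReal.ofReal_of_nonpos h]
    · have hs : 0 < √ρ := Real.sqrt_pos.2 h
      have : D ρ = (fun z => (√ρ)⁻¹ • z) ⁻¹' D 1 := by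
        ext z
        simp only [hD, mem_ofPred_eq, mem_preimage, map_smul, norm_smul, norm_inv, Real.norm_eq_abs,
          abs_of_pos hs, mul_pow, inv_pow, Real.sq_sqrt h.le]
        rw [inv_mul_lt_iff₀ h, mul_one]
      rw [this, Measure.addHaar_preimage_smul μ (inv_ne_zero hs.ne'), hV, inv_pow, inv_inv,
        Real.sq_sqrt h.le, abs_of_pos h]
  refine ⟨μ (D 1), hD1, fun x a b hab => ?_⟩
  obtain ⟨u, ⟨z₀, rfl⟩, w, hw, rfl⟩ := (LinearMap.range M).exists_add_mem_mem_orthogonal x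
  have hpyth : ∀ z, ‖M z₀ + w + M z‖ ^ 2 = ‖w‖ ^ 2 + ‖M (z₀ + z)‖ ^ 2 := by
    intro z
    have horth : inner ℝ (M (z₀ + z)) w = 0 := hw _ ⟨_, rfl⟩
    have : M z₀ + w + M z = M (z₀ + z) + w := by rw [map_add]; abel
    rw [this, norm_add_sq_real, horth]
    ring
  have hset : {z | a ≤ ‖M z₀ + w + M z‖ ^ 2 ∧ ‖M z₀ + w + M z‖ ^ 2 < b} =
      (fun z => z₀ + z) ⁻¹' (D (b - ‖w‖ ^ 2) \ D (a - ‖w‖ ^ 2)) := by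
    ext z
    simp only [mem_ofPred_eq, hpyth, mem_preimage, mem_sdiff, hD, not_lt]
    constructor <;> rintro ⟨h1, h2⟩ <;> constructor <;> linarith
  have hfin : μ (D (a - ‖w‖ ^ 2)) ≠ ∞ := by
    rw [hDρ]
    exact ENNReal.mul_ne_top ofReal_ne_top hD1
  have hsub : D (a - ‖w‖ ^ 2) ⊆ D (b - ‖w‖ ^ 2) := by
    intro z hz
    simp only [hD, mem_ofPred_eq] at hz ⊢
    linarith
  rw [hset, measure_preimage_add, measure_sdiff hsub (hDm _).nullMeasurableSet hfin,
    tsub_le_iff_right, hDρ (b - _), hDρ (a - _), mul_comm (μ (D 1)), ← add_mul]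
  gcongr
  refine le_trans (ENNReal.ofReal_le_ofReal (le_of_eq ?_)) ENNReal.ofReal_add_le
  ring

/-- On a line which is transversal to the spheres, the part inside a thin shell is short. -/
lemma volume_transversal_le {J : Type*} [Fintype J] [Unique J] (v x : E) {c ε : ℝ} (hc : 0 < c)
    (hε : 0 < ε) (hε' : ε ≤ 1 / 2) :
    volume {z : J → ℝ | c * ‖x + z default • v‖ ≤ |inner ℝ v (x + z default • v)| ∧
      1 - ε ≤ ‖x + z default • v‖ ∧ ‖x + z default • v‖ < 1} ≤
    ENNReal.ofReal (4 / c) * ENNReal.ofReal ε := by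
  have hdiff : ∀ p q : E, inner ℝ (p - q) (p + q) = ‖p‖ ^ 2 - ‖q‖ ^ 2 := by
    intro p q
    rw [inner_sub_left, inner_add_right, inner_add_right, real_inner_self_eq_norm_sq,
      real_inner_self_eq_norm_sq, real_inner_comm p q]
    ring
  have hdiam : ∀ s : ℝ, |s| = 1 → volume {z : J → ℝ |
      c * ‖x + z default • v‖ ≤ s * inner ℝ v (x + z default • v) ∧
      1 - ε ≤ ‖x + z default • v‖ ∧ ‖x + z default • v‖ < 1} ≤ ENNReal.ofReal (2 * ε / c) := by
    intro s hs
    refine (Real.volume_pi_le_diam_pow _).trans ?_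
    rw [Fintype.card_unique, pow_one]
    refine ediam_le_of_forall_dist_le ?_
    rintro z ⟨hz1, hz2, hz3⟩ z' ⟨hz1', hz2', hz3'⟩
    refine (dist_pi_le_iff (by positivity)).2 fun j => ?_
    rw [Unique.eq_default j, Real.dist_eq, le_div_iff₀ hc]
    set p := x + z default • v
    set q := x + z' default • v
    have hpq : (z default - z' default) * inner ℝ v (p + q) = ‖p‖ ^ 2 - ‖q‖ ^ 2 := by
      have h1 : (z default - z' default) • v = p - q := by
        simp only [p, q, sub_smul]; abel
      rw [← real_inner_smul_left, h1, hdiff]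
    have hlow : c ≤ |inner ℝ v (p + q)| := by
      have : c ≤ s * inner ℝ v (p + q) := by
        rw [inner_add_right]
        nlinarith
      calc c ≤ |s * inner ℝ v (p + q)| := this.trans (le_abs_self _)
        _ = _ := by rw [abs_mul, hs, one_mul]
    calc |z default - z' default| * c ≤ |z default - z' default| * |inner ℝ v (p + q)| := by gcongr
      _ = |‖p‖ ^ 2 - ‖q‖ ^ 2| := by rw [← abs_mul, hpq]
      _ ≤ 2 * ε := by
        rw [abs_le]
        constructor <;> nlinarith
  calc _ ≤ volume ({z : J → ℝ | c * ‖x + z default • v‖ ≤ 1 * inner ℝ v (x + z default • v) ∧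
          1 - ε ≤ ‖x + z default • v‖ ∧ ‖x + z default • v‖ < 1} ∪
        {z : J → ℝ | c * ‖x + z default • v‖ ≤ -1 * inner ℝ v (x + z default • v) ∧
          1 - ε ≤ ‖x + z default • v‖ ∧ ‖x + z default • v‖ < 1}) := by
        refine measure_mono fun z ⟨h1, h2⟩ => ?_
        rcases le_abs.1 h1 with h | h
        · left; exact ⟨by simpa using h, h2⟩
        · right; exact ⟨by simpa using h, h2⟩
    _ ≤ ENNReal.ofReal (2 * ε / c) + ENNReal.ofReal (2 * ε / c) :=
        (measure_union_le _ _).trans (add_le_add (hdiam 1 (by simp)) (hdiam (-1) (by simp)))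
    _ = _ := by
        rw [← ENNReal.ofReal_add (by positivity) (by positivity),
          ← ENNReal.ofReal_mul (by positivity)]
        congr 1
        ring

end Sections

section Marginals

open Set Metric Module

/-- Tonelli's theorem for products of functions of one variable each. -/
lemma lintegral_prod_eval {ι : Type*} [Fintype ι] (f : ι → ℝ → ℝ≥0∞) (hf : ∀ i, Measurable (f i)) :
    ∫⁻ x : ι → ℝ, ∏ i, f i (x i) = ∏ i, ∫⁻ x, f i x := by
  have hfin : ∀ (n : ℕ) (g : Fin n → ℝ → ℝ≥0∞), (∀ i, Measurable (g i)) →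
      ∫⁻ x : Fin n → ℝ, ∏ i, g i (x i) = ∏ i, ∫⁻ x, g i x := by
    intro n
    induction n with
    | zero => intro g _; simp [volume_pi]
    | succ n ih =>
      intro g hg
      rw [← ((volume_preserving_piFinSuccAbove (fun _ : Fin (n + 1) => ℝ) 0).symm).lintegral_comp_emb
        (MeasurableEquiv.measurableEmbedding _)]
      simp_rw [MeasurableEquiv.piFinSuccAbove_symm_apply, Fin.insertNthEquiv,
            Fin.prod_univ_succ, Fin.insertNth_zero, Equiv.coe_fn_mk, Fin.cons_succ,
            Fin.cons_zero]
      change ∫⁻ z : ℝ × (Fin n → ℝ), g 0 z.1 * ∏ i : Fin n, g i.succ (z.2 i)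
        ∂(volume.prod volume) = _
      rw [lintegral_prod_mul (hg 0).aemeasurable
        (f := g 0) (g := fun y : Fin n → ℝ => ∏ i, g i.succ (y i)), ih _ fun i => hg _]
      exact (Finset.measurable_prod _ fun i _ =>
        (hg i.succ).comp (measurable_pi_apply i)).aemeasurable
  let e := (Fintype.equivFin ι).symm
  rw [← (volume_measurePreserving_piCongrLeft (fun _ : ι => ℝ) e).lintegral_comp_emb
    (MeasurableEquiv.measurableEmbedding _)]
  simp_rw [← e.prod_comp, MeasurableEquiv.coe_piCongrLeft, Equiv.piCongrLeft_apply_apply]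
  exact hfin _ _ fun i => hf _

variable {ι : Type*} [Fintype ι] [DecidableEq ι] {E : Type*} [NormedAddCommGroup E]
  [NormedSpace ℝ E] [MeasurableSpace E] [BorelSpace E] [FiniteDimensional ℝ E] [Nontrivial E]

/-- If all the sections of thin shells over `R` by the coordinate planes complementary to the
coordinates in `S` are uniformly small, then the joint distribution of the coordinates in `S`
under the spherical measure on `R` has bounded density. -/
lemma exists_lintegral_toSphere_prod_le (μ : Measure E) [μ.IsAddHaarMeasure]
    (B : (ι → ℝ) ≃L[ℝ] E) (S : Finset ι) {R : Set E} (hR : MeasurableSet R)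
    (hRs : ∀ x ∈ R, ∀ r : ℝ, 0 < r → r • x ∈ R) {C : ℝ≥0∞} (hC : C ≠ ∞)
    (h : ∀ ε : ℝ, 0 < ε → ε ≤ 1 / 2 → ∀ y : {l // l ∈ S} → ℝ,
      volume {z : {l // l ∉ S} → ℝ |
        B ((Equiv.piEquivPiSubtypeProd (· ∈ S) (fun _ => ℝ)).symm (y, z)) ∈ R ∧
        1 - ε ≤ ‖B ((Equiv.piEquivPiSubtypeProd (· ∈ S) (fun _ => ℝ)).symm (y, z))‖ ∧
        ‖B ((Equiv.piEquivPiSubtypeProd (· ∈ S) (fun _ => ℝ)).symm (y, z))‖ < 1} ≤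
      C * ENNReal.ofReal ε) :
    ∃ D : ℝ≥0∞, D ≠ ∞ ∧ ∀ f : ι → ℝ → ℝ≥0∞, (∀ i, Measurable (f i)) →
      ∫⁻ σ in {σ : sphere (0 : E) 1 | (σ : E) ∈ R}, ∏ l ∈ S, f l (B.symm σ l) ∂μ.toSphere ≤
        D * ∏ l ∈ S, ∫⁻ x, f l x := by
  have hBm : Measurable B := B.continuous.measurable
  have hhaar : (Measure.map B volume).IsAddHaarMeasure :=
    ContinuousLinearEquiv.isAddHaarMeasure_map B _
  obtain ⟨κ, hκ⟩ : ∃ κ : NNReal, μ = κ • Measure.map B volume :=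
    ⟨_, Measure.isAddLeftInvariant_eq_smul μ (Measure.map B volume)⟩
  let e := MeasurableEquiv.piEquivPiSubtypeProd (fun _ : ι => ℝ) (· ∈ S)
  have he : MeasurePreserving e volume volume := by
    convert volume_preserving_piEquivPiSubtypeProd (fun _ : ι => ℝ) (· ∈ S) <;> rfl
  let L : E →L[ℝ] ({l // l ∈ S} → ℝ) :=
    ContinuousLinearMap.pi fun l => (ContinuousLinearMap.proj (R := ℝ) (φ := fun _ : ι => ℝ)
      (l : ι)).comp (B.symm : E →L[ℝ] (ι → ℝ))
  have hL : ∀ x l, L x l = B.symm x l := fun x l => rfl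
  have hshell : ∀ ε : ℝ, 0 < ε → ε ≤ 1 / 2 → ∀ A : Set ({l // l ∈ S} → ℝ), IsOpen A →
      μ {x | x ∈ R ∧ 1 - ε ≤ ‖x‖ ∧ ‖x‖ < 1 ∧ L x ∈ A} ≤
        (κ * C + 1) * ENNReal.ofReal ε * volume A := by
    intro ε h0 h1 A hA
    have hmeas : MeasurableSet {x : E | x ∈ R ∧ 1 - ε ≤ ‖x‖ ∧ ‖x‖ < 1 ∧ L x ∈ A} :=
      hR.inter ((measurableSet_le measurable_const measurable_norm).inter
        ((measurableSet_lt measurable_norm measurable_const).inter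
          (L.continuous.measurable hA.measurableSet)))
    have hm2 := e.symm.measurable (hBm hmeas)
    rw [hκ, Measure.smul_apply, Measure.map_apply hBm hmeas,
      ← (he.symm e).measure_preimage (hBm hmeas).nullMeasurableSet, Measure.volume_eq_prod,
      Measure.prod_apply hm2]
    have hsec : ∀ y : {l // l ∈ S} → ℝ,
        volume (Prod.mk y ⁻¹' (e.symm ⁻¹' (B ⁻¹' {x | x ∈ R ∧ 1 - ε ≤ ‖x‖ ∧ ‖x‖ < 1 ∧ L x ∈ A}))) ≤
          A.indicator (fun _ => C * ENNReal.ofReal ε) y := by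
      intro y
      have hLy : ∀ z, L (B (e.symm (y, z))) = y := by
        intro z
        ext l
        rw [hL, B.symm_apply_apply]
        change (if h : (l : ι) ∈ S then y ⟨l, h⟩ else z ⟨l, h⟩) = y l
        rw [dif_pos l.2]
      by_cases hy : y ∈ A
      · rw [indicator_of_mem hy]
        refine (measure_mono ?_).trans (h ε h0 h1 y)
        rintro z ⟨hz1, hz2, hz3, -⟩
        exact ⟨hz1, hz2, hz3⟩
      · rw [indicator_of_notMem hy]
        refine le_of_eq (measure_mono_null ?_ measure_empty)
        rintro z ⟨-, -, -, hz⟩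
        rw [hLy] at hz
        exact hy hz
    calc _ ≤ κ • ∫⁻ y, A.indicator (fun _ => C * ENNReal.ofReal ε) y := by
          gcongr with y
          exact hsec y
      _ = κ * C * ENNReal.ofReal ε * volume A := by
          rw [lintegral_indicator hA.measurableSet, setLIntegral_const, ENNReal.smul_def,
            smul_eq_mul]
          ring
      _ ≤ _ := by
          gcongr
          exact le_self_add
  have hdens := map_toSphere_le μ volume L hR hRs (by simp)
    (by simp [ENNReal.mul_ne_top, hC]) hshell
  refine ⟨finrank ℝ E * (κ * C + 1), by simp [ENNReal.mul_ne_top, hC], fun f hf => ?_⟩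
  have hprod : Measurable fun y : {l // l ∈ S} → ℝ => ∏ l : {l // l ∈ S}, f l (y l) :=
    Finset.measurable_prod _ fun l _ => (hf l).comp (measurable_pi_apply l)
  have hLm : Measurable fun σ : sphere (0 : E) 1 => L σ :=
    (L.continuous.comp continuous_subtype_val).measurable
  calc _ = ∫⁻ σ in {σ : sphere (0 : E) 1 | (σ : E) ∈ R}, ∏ l : {l // l ∈ S}, f l (L σ l)
        ∂μ.toSphere := by
        simp_rw [hL]
        refine lintegral_congr fun σ => ?_
        exact (Finset.prod_coe_sort S fun l => f l (B.symm σ l)).symm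
    _ = ∫⁻ y, ∏ l : {l // l ∈ S}, f l (y l) ∂((μ.toSphere.restrict {σ | (σ : E) ∈ R}).map
          (fun σ : sphere (0 : E) 1 => L σ)) := by
        rw [lintegral_map hprod hLm]
    _ ≤ ∫⁻ y, ∏ l : {l // l ∈ S}, f l (y l) ∂((finrank ℝ E * (κ * C + 1)) • volume) :=
        lintegral_mono' hdens le_rfl
    _ = _ := by
        rw [lintegral_smul_measure, lintegral_prod_eval (fun l : {l // l ∈ S} => f l) fun l => hf l,
          smul_eq_mul]
        congr 1
        exact Finset.prod_coe_sort S fun l => ∫⁻ x, f l x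

end Marginals

section Interpolation

lemma ENNReal.rpow_sum_of_nonneg_exponents {α : Type*} (u : ℝ≥0∞) (s : Finset α) {θ : α → ℝ}
    (hθ : ∀ a ∈ s, 0 ≤ θ a) : u ^ (∑ a ∈ s, θ a) = ∏ a ∈ s, u ^ θ a := by
  induction s using Finset.cons_induction with
  | empty => simp
  | cons a s ha ih =>
    rw [Finset.sum_cons, Finset.prod_cons, ENNReal.rpow_add_of_nonneg _ _
      (hθ a (Finset.mem_cons_self a s))
      (Finset.sum_nonneg fun b hb => hθ b (Finset.mem_cons_of_mem hb)),
      ih fun b hb => hθ b (Finset.mem_cons_of_mem hb)]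

/-- Interpolation of bounds for the joint densities of several families of coordinates: if the
subsets `S a` with weights `θ a` cover every coordinate with total weight `1 / p`, the
corresponding `L¹` bounds imply an `L^p` bound. -/
lemma lintegral_prod_le_of_marginals {ι α Ω : Type*} [Fintype ι] [DecidableEq ι]
    [MeasurableSpace Ω] {ν : Measure Ω} {Y : ι → Ω → ℝ} (hY : ∀ l, Measurable (Y l))
    (s : Finset α) (S : α → Finset ι) {θ : α → ℝ} (hθ0 : ∀ a ∈ s, 0 ≤ θ a)
    (hθ1 : ∑ a ∈ s, θ a = 1) {p : ℝ} (hp : 0 < p)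
    (hθS : ∀ l, (∑ a ∈ s, if l ∈ S a then θ a else 0) = 1 / p) {C : ℝ≥0∞}
    (hC : ∀ a ∈ s, ∀ f : ι → ℝ → ℝ≥0∞, (∀ l, Measurable (f l)) →
      ∫⁻ ω, ∏ l ∈ S a, f l (Y l ω) ∂ν ≤ C * ∏ l ∈ S a, ∫⁻ x, f l x)
    (f : ι → ℝ → ℝ≥0∞) (hf : ∀ l, Measurable (f l)) :
    ∫⁻ ω, ∏ l, f l (Y l ω) ∂ν ≤ C * ∏ l, (∫⁻ x, f l x ^ p) ^ (1 / p) := by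
  have key : ∀ u : ι → ℝ≥0∞, ∏ a ∈ s, (∏ l ∈ S a, u l) ^ θ a = ∏ l, u l ^ (1 / p) := by
    intro u
    calc _ = ∏ a ∈ s, ∏ l, u l ^ (if l ∈ S a then θ a else 0) := by
          refine Finset.prod_congr rfl fun a ha => ?_
          rw [← ENNReal.prod_rpow_of_nonneg (hθ0 a ha),
            ← Finset.prod_subset (Finset.subset_univ (S a))]
          · exact Finset.prod_congr rfl fun l hl => by rw [if_pos hl]
          · intro l _ hl
            rw [if_neg hl, ENNReal.rpow_zero]
      _ = _ := by
          rw [Finset.prod_comm]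
          refine Finset.prod_congr rfl fun l _ => ?_
          rw [← hθS l, ENNReal.rpow_sum_of_nonneg_exponents]
          intro a ha
          split_ifs
          exacts [hθ0 a ha, le_rfl]
  have hfp : ∀ l, Measurable fun x => f l x ^ p := fun l => (hf l).pow_const p
  calc ∫⁻ ω, ∏ l, f l (Y l ω) ∂ν = ∫⁻ ω, ∏ a ∈ s, (∏ l ∈ S a, f l (Y l ω) ^ p) ^ θ a ∂ν := by
        refine lintegral_congr fun ω => ?_
        rw [key]
        refine Finset.prod_congr rfl fun l _ => ?_
        rw [← ENNReal.rpow_mul, mul_one_div_cancel hp.ne', ENNReal.rpow_one]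
    _ ≤ ∏ a ∈ s, (∫⁻ ω, ∏ l ∈ S a, f l (Y l ω) ^ p ∂ν) ^ θ a :=
        ENNReal.lintegral_prod_norm_pow_le s
          (fun a _ => (Finset.measurable_prod _ fun l _ => (hfp l).comp (hY l)).aemeasurable)
          hθ1 hθ0
    _ ≤ ∏ a ∈ s, (C * ∏ l ∈ S a, ∫⁻ x, f l x ^ p) ^ θ a := by
        refine Finset.prod_le_prod' fun a ha => ?_
        exact ENNReal.rpow_le_rpow (hC a ha (fun l x => f l x ^ p) hfp) (hθ0 a ha)
    _ = C * ∏ l, (∫⁻ x, f l x ^ p) ^ (1 / p) := by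
        rw [← key, Finset.prod_congr rfl fun a ha => ENNReal.mul_rpow_of_nonneg _ _ (hθ0 a ha),
          Finset.prod_mul_distrib, ← ENNReal.rpow_sum_of_nonneg_exponents _ _ hθ0, hθ1,
          ENNReal.rpow_one]

/-- Interpolation between the joint densities of all coordinates but `i` and those of all
coordinates but two, the two being different from `i`. -/
lemma lintegral_prod_le_of_pairs {ι Ω : Type*} [Fintype ι] [DecidableEq ι]
    [MeasurableSpace Ω] {ν : Measure Ω} {Y : ι → Ω → ℝ} (hY : ∀ l, Measurable (Y l))
    (hι : 3 ≤ Fintype.card ι) (i : ι) {C : ℝ≥0∞}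
    (h1 : ∀ f : ι → ℝ → ℝ≥0∞, (∀ l, Measurable (f l)) →
      ∫⁻ ω, ∏ l ∈ Finset.univ.erase i, f l (Y l ω) ∂ν ≤
        C * ∏ l ∈ Finset.univ.erase i, ∫⁻ x, f l x)
    (h2 : ∀ j k, j ≠ k → ∀ f : ι → ℝ → ℝ≥0∞, (∀ l, Measurable (f l)) →
      ∫⁻ ω, ∏ l ∈ Finset.univ \ {j, k}, f l (Y l ω) ∂ν ≤
        C * ∏ l ∈ Finset.univ \ {j, k}, ∫⁻ x, f l x)
    {p : ℝ} (hp : p = ((Fintype.card ι : ℝ) + 1) / ((Fintype.card ι : ℝ) - 1))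
    (f : ι → ℝ → ℝ≥0∞) (hf : ∀ l, Measurable (f l)) :
    ∫⁻ ω, ∏ l, f l (Y l ω) ∂ν ≤ C * ∏ l, (∫⁻ x, f l x ^ p) ^ (1 / p) := by
  set N := Fintype.card ι with hN
  have hN3 : (3 : ℝ) ≤ N := by exact_mod_cast hι
  have hp0 : 0 < p := by
    rw [hp]
    exact div_pos (by linarith) (by linarith)
  have hn1 : (N : ℝ) + 1 ≠ 0 := by linarith
  have hn2 : (N : ℝ) - 2 ≠ 0 := by linarith
  have hn3 : (N : ℝ) - 1 ≠ 0 := by linarith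
  have hcard1 : ((Finset.univ.erase i).offDiag.card : ℝ) = (N - 1) * (N - 2) := by
    rw [Finset.offDiag_card, Finset.card_erase_of_mem (Finset.mem_univ i), Finset.card_univ, ← hN,
      Nat.cast_sub (Nat.le_mul_self _), Nat.cast_mul, Nat.cast_sub (by omega)]
    push_cast
    ring
  have hcard2 : ∀ l, l ≠ i →
      (((Finset.univ.erase i).erase l).offDiag.card : ℝ) = (N - 2) * (N - 3) := by
    intro l hl
    rw [Finset.offDiag_card, Finset.card_erase_of_mem (by simp [hl]),
      Finset.card_erase_of_mem (Finset.mem_univ i), Finset.card_univ, ← hN, Nat.sub_sub,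
      Nat.cast_sub (Nat.le_mul_self _), Nat.cast_mul, Nat.cast_sub (by omega)]
    push_cast
    ring
  let θ : Option (ι × ι) → ℝ := fun a => a.elim (2 / (N + 1)) fun _ => 1 / ((N + 1) * (N - 2))
  let S : Option (ι × ι) → Finset ι :=
    fun a => a.elim (Finset.univ.erase i) fun q => Finset.univ \ {q.1, q.2}
  refine lintegral_prod_le_of_marginals hY (Finset.insertNone (Finset.univ.erase i).offDiag) S
    (θ := θ) ?_ ?_ hp0 ?_ ?_ f hf
  · rintro (_ | q) -
    · exact div_nonneg (by norm_num) (by linarith)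
    · exact div_nonneg (by norm_num) (mul_nonneg (by linarith) (by linarith))
  · simp only [Finset.sum_insertNone, θ, Option.elim, Finset.sum_const, nsmul_eq_mul, hcard1]
    field_simp
    ring
  · intro l
    rw [Finset.sum_insertNone]
    change (if l ∈ Finset.univ.erase i then 2 / ((N : ℝ) + 1) else 0) +
      ∑ q ∈ (Finset.univ.erase i).offDiag,
        (if l ∈ Finset.univ \ {q.1, q.2} then 1 / (((N : ℝ) + 1) * (N - 2)) else 0) = 1 / p
    rw [← Finset.sum_filter, Finset.sum_const, nsmul_eq_mul, hp]
    by_cases hl : l = i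
    · subst hl
      have : (Finset.univ.erase l).offDiag.filter (fun q : ι × ι => l ∈ Finset.univ \ {q.1, q.2}) =
          (Finset.univ.erase l).offDiag := by
        refine Finset.filter_true_of_mem fun q hq => ?_
        simp only [Finset.mem_offDiag, Finset.mem_erase] at hq
        simp [hq.1.1.symm, hq.2.1.1.symm]
      rw [this, hcard1, if_neg (by simp)]
      field_simp
      ring
    · have : (Finset.univ.erase i).offDiag.filter (fun q : ι × ι => l ∈ Finset.univ \ {q.1, q.2}) =
          ((Finset.univ.erase i).erase l).offDiag := by
        ext q
        simp only [Finset.mem_filter, Finset.mem_offDiag, Finset.mem_erase, Finset.mem_sdiff,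
          Finset.mem_univ, Finset.mem_insert, Finset.mem_singleton]
        grind
      rw [this, hcard2 l hl, if_pos (by simp [hl])]
      field_simp
      ring
  · rintro (_ | q) hq f hf
    · exact h1 f hf
    · exact h2 q.1 q.2 (by simpa using (Finset.mem_offDiag.1 (Finset.some_mem_insertNone.1 hq)).2.2)
        f hf

end Interpolation

section Form

open Set Metric Module

variable {ι : Type*} [Fintype ι] [DecidableEq ι] {E : Type*} [NormedAddCommGroup E]
  [InnerProductSpace ℝ E]

/-- Some edge vector of a basis makes a definite angle with the orthogonal complement of a given
vector. -/
lemma exists_norm_le_abs_inner_single [Nonempty ι] (B : (ι → ℝ) ≃L[ℝ] E) (x : E) :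
    ∃ i, (Fintype.card ι * ‖(B.symm : E →L[ℝ] ι → ℝ)‖ + 1)⁻¹ * ‖x‖ ≤
      |inner ℝ (B (Pi.single i 1)) x| := by
  set K := ‖(B.symm : E →L[ℝ] ι → ℝ)‖ with hK
  have hK0 : 0 ≤ K := norm_nonneg _
  by_contra! hlt
  set c := ((Fintype.card ι : ℝ) * K + 1)⁻¹ with hc
  have hc0 : 0 < c := by positivity
  have hx0 : 0 < ‖x‖ := by
    obtain ⟨i⟩ := ‹Nonempty ι›
    by_contra h0
    have : ‖x‖ = 0 := le_antisymm (not_lt.1 h0) (norm_nonneg x)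
    have h2 := hlt i
    rw [this, mul_zero] at h2
    exact absurd h2 (not_lt.2 (abs_nonneg _))
  have hsum : x = ∑ i, B.symm x i • B (Pi.single i 1) := by
    simp_rw [← map_smul, ← map_sum]
    rw [← B.symm_apply_eq]
    ext j
    simp [Finset.sum_apply, Pi.single_apply]
  have h1 : ‖x‖ ^ 2 ≤ ∑ _i : ι, K * ‖x‖ * (c * ‖x‖) := by
    calc ‖x‖ ^ 2 = inner ℝ x x := (real_inner_self_eq_norm_sq x).symm
      _ = ∑ i, B.symm x i * inner ℝ (B (Pi.single i 1)) x := by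
          conv_lhs => rw [real_inner_comm, ← congrArg (inner ℝ x) hsum.symm]
          rw [inner_sum]
          exact Finset.sum_congr rfl fun i _ => by rw [real_inner_smul_right, real_inner_comm]
      _ ≤ _ := by
          refine Finset.sum_le_sum fun i _ => (le_abs_self _).trans ?_
          rw [abs_mul]
          refine mul_le_mul ?_ (hlt i).le (abs_nonneg _) (by positivity)
          exact (norm_le_pi_norm (B.symm x) i).trans ((B.symm : E →L[ℝ] ι → ℝ).le_opNorm x)
  rw [Finset.sum_const, Finset.card_univ, nsmul_eq_mul] at h1
  have h2 : (Fintype.card ι : ℝ) * K * c < 1 := by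
    rw [hc, ← div_eq_mul_inv, div_lt_one (by positivity)]
    linarith
  nlinarith [pow_pos hx0 2]

variable [FiniteDimensional ℝ E] [MeasurableSpace E] [BorelSpace E]

/-- The multilinear form given by integrating a product of functions of the linear coordinates
over the unit sphere is bounded on `L^p` for `p = (n + 1) / (n - 1)`. -/
theorem exists_lintegral_toSphere_prod_le_rpow (μ : Measure E) [μ.IsAddHaarMeasure]
    (B : (ι → ℝ) ≃L[ℝ] E) (hι : 3 ≤ Fintype.card ι) {p : ℝ}
    (hp : p = ((Fintype.card ι : ℝ) + 1) / ((Fintype.card ι : ℝ) - 1)) :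
    ∃ D : ℝ≥0∞, D ≠ ∞ ∧ ∀ f : ι → ℝ → ℝ≥0∞, (∀ i, Measurable (f i)) →
      ∫⁻ σ, ∏ l, f l (B.symm (σ : sphere (0 : E) 1) l) ∂μ.toSphere ≤
        D * ∏ l, (∫⁻ x, f l x ^ p) ^ (1 / p) := by
  have : Nontrivial ι := Fintype.one_lt_card_iff_nontrivial.1 (by omega)
  have : Nontrivial E := B.symm.toEquiv.nontrivial
  set c := ((Fintype.card ι : ℝ) * ‖(B.symm : E →L[ℝ] ι → ℝ)‖ + 1)⁻¹ with hc
  have hc0 : 0 < c := by positivity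
  let R : ι → Set E := fun i => {x | c * ‖x‖ ≤ |inner ℝ (B (Pi.single i 1)) x|}
  have hRm : ∀ i, MeasurableSet (R i) := fun i =>
    (isClosed_le (by fun_prop) (by fun_prop)).measurableSet
  have hRs : ∀ i, ∀ x ∈ R i, ∀ r : ℝ, 0 < r → r • x ∈ R i := by
    intro i x hx r hr
    change c * ‖r • x‖ ≤ |inner ℝ (B (Pi.single i 1)) (r • x)|
    have hx' : c * ‖x‖ ≤ |inner ℝ (B (Pi.single i 1)) x| := hx
    rw [norm_smul, real_inner_smul_right, abs_mul, Real.norm_eq_abs, mul_left_comm]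
    exact mul_le_mul_of_nonneg_left hx' (abs_nonneg r)
  have hsplit : ∀ (S : Finset ι) (y : {l // l ∈ S} → ℝ) (z : {l // l ∉ S} → ℝ),
      B ((Equiv.piEquivPiSubtypeProd (· ∈ S) (fun _ => ℝ)).symm (y, z)) =
        B ((Equiv.piEquivPiSubtypeProd (· ∈ S) (fun _ => ℝ)).symm (y, 0)) +
        B ((Equiv.piEquivPiSubtypeProd (· ∈ S) (fun _ => ℝ)).symm (0, z)) := by
    intro S y z
    rw [← map_add]
    congr 1
    ext l
    by_cases hl : l ∈ S <;> simp [Equiv.piEquivPiSubtypeProd, hl]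
  have H1 : ∀ i, ∃ D : ℝ≥0∞, D ≠ ∞ ∧ ∀ f : ι → ℝ → ℝ≥0∞, (∀ i, Measurable (f i)) →
      ∫⁻ σ in {σ : sphere (0 : E) 1 | (σ : E) ∈ R i},
        ∏ l ∈ Finset.univ.erase i, f l (B.symm σ l) ∂μ.toSphere ≤
        D * ∏ l ∈ Finset.univ.erase i, ∫⁻ x, f l x := by
    intro i
    refine exists_lintegral_toSphere_prod_le μ B _ (hRm i) (hRs i)
      (C := ENNReal.ofReal (4 / c)) ENNReal.ofReal_ne_top ?_
    intro ε hε hε' y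
    let _ : Unique {l // l ∉ Finset.univ.erase i} :=
      { default := ⟨i, by simp⟩
        uniq := by
          rintro ⟨l, hl⟩
          simpa using hl }
    have hz : ∀ z : {l // l ∉ Finset.univ.erase i} → ℝ,
        B ((Equiv.piEquivPiSubtypeProd (· ∈ Finset.univ.erase i) (fun _ => ℝ)).symm (0, z)) =
          z default • B (Pi.single i 1) := by
      intro z
      rw [← map_smul]
      congr 1
      ext l
      by_cases hl : l = i
      · subst hl
        simp [Equiv.piEquivPiSubtypeProd]
        rfl
      · simp [Equiv.piEquivPiSubtypeProd, hl]
    obtain ⟨x, hx⟩ : ∃ x, ∀ z : {l // l ∉ Finset.univ.erase i} → ℝ,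
        B ((Equiv.piEquivPiSubtypeProd (· ∈ Finset.univ.erase i) (fun _ => ℝ)).symm (y, z)) =
          x + z default • B (Pi.single i 1) := ⟨_, fun z => by rw [hsplit, hz]⟩
    simp_rw [hx]
    exact volume_transversal_le (B (Pi.single i 1)) _ hc0 hε hε'
  have H2 : ∀ q : ι × ι, ∃ D : ℝ≥0∞, D ≠ ∞ ∧ (q.1 ≠ q.2 → ∀ f : ι → ℝ → ℝ≥0∞,
      (∀ i, Measurable (f i)) →
      ∫⁻ σ : sphere (0 : E) 1, ∏ l ∈ Finset.univ \ {q.1, q.2}, f l (B.symm σ l) ∂μ.toSphere ≤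
        D * ∏ l ∈ Finset.univ \ {q.1, q.2}, ∫⁻ x, f l x) := by
    intro q
    by_cases hq : q.1 = q.2
    · exact ⟨0, ENNReal.zero_ne_top, fun h => absurd hq h⟩
    set S : Finset ι := Finset.univ \ {q.1, q.2} with hS
    let M : ({l // l ∉ S} → ℝ) →ₗ[ℝ] E :=
      { toFun := fun z => B ((Equiv.piEquivPiSubtypeProd (· ∈ S) (fun _ => ℝ)).symm (0, z))
        map_add' := by
          intro z w
          rw [← map_add]
          congr 1
          ext l
          by_cases hl : l ∈ S <;> simp [Equiv.piEquivPiSubtypeProd, hl]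
        map_smul' := by
          intro t z
          rw [← map_smul]
          congr 1
          ext l
          by_cases hl : l ∈ S <;> simp [Equiv.piEquivPiSubtypeProd, hl] }
    have hM : Function.Injective M := by
      intro z w hzw
      have := (Equiv.injective _ (B.injective hzw))
      exact (Prod.ext_iff.1 this).2
    have hdim : finrank ℝ ({l // l ∉ S} → ℝ) = 2 := by
      rw [finrank_fintype_fun_eq_card, Fintype.card_subtype]
      rw [show Finset.univ.filter (fun l => l ∉ S) = {q.1, q.2} by
        ext l
        simp only [hS, Finset.mem_filter, Finset.mem_sdiff, Finset.mem_univ, true_and, not_not]]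
      exact Finset.card_pair hq
    obtain ⟨C, hC, hCM⟩ := exists_measure_annulus_le
      (volume : Measure ({l // l ∉ S} → ℝ)) hdim M hM
    obtain ⟨D, hD, h⟩ := exists_lintegral_toSphere_prod_le μ B S (R := univ) MeasurableSet.univ
      (fun _ _ _ _ => mem_univ _) (C := C * 2) (ENNReal.mul_ne_top hC (by simp)) (by
        intro ε hε hε' y
        calc _ ≤ volume {z : {l // l ∉ S} → ℝ | (1 - ε) ^ 2 ≤
                ‖B ((Equiv.piEquivPiSubtypeProd (· ∈ S) (fun _ => ℝ)).symm (y, 0)) + M z‖ ^ 2 ∧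
                ‖B ((Equiv.piEquivPiSubtypeProd (· ∈ S) (fun _ => ℝ)).symm (y, 0)) + M z‖ ^ 2
                  < 1} := by
              refine measure_mono fun z hz => ?_
              obtain ⟨-, hz1, hz2⟩ := hz
              rw [hsplit] at hz1 hz2
              exact ⟨pow_le_pow_left₀ (by linarith) hz1 2,
                pow_lt_one₀ (norm_nonneg _) hz2 two_ne_zero⟩
          _ ≤ C * ENNReal.ofReal (1 - (1 - ε) ^ 2) := hCM _ _ _ (by nlinarith)
          _ ≤ C * ENNReal.ofReal (2 * ε) := by
              gcongr
              nlinarith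
          _ = C * 2 * ENNReal.ofReal ε := by
              rw [ENNReal.ofReal_mul (by norm_num), mul_assoc]
              simp)
    refine ⟨D, hD, fun _ f hf => ?_⟩
    simpa using h f hf
  choose D1 hD1 H1 using H1
  choose D2 hD2 H2 using H2
  refine ⟨∑ i, (D1 i + ∑ q, D2 q), ?_, fun f hf => ?_⟩
  · exact ENNReal.sum_ne_top.2 fun i _ =>
      ENNReal.add_ne_top.2 ⟨hD1 i, ENNReal.sum_ne_top.2 fun q _ => hD2 q⟩
  have hBm : ∀ l, Measurable fun σ : sphere (0 : E) 1 => B.symm (σ : E) l := by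
    intro l
    exact ((measurable_pi_apply l).comp B.symm.continuous.measurable).comp measurable_subtype_coe
  have hR : ∀ i, ∫⁻ σ in {σ : sphere (0 : E) 1 | (σ : E) ∈ R i},
      ∏ l, f l (B.symm σ l) ∂μ.toSphere ≤
        (D1 i + ∑ q, D2 q) * ∏ l, (∫⁻ x, f l x ^ p) ^ (1 / p) := by
    intro i
    refine lintegral_prod_le_of_pairs (Y := fun l (σ : sphere (0 : E) 1) => B.symm (σ : E) l)
      hBm hι i ?_ ?_ hp f hf
    · intro g hg
      exact (H1 i g hg).trans (by gcongr; exact le_self_add)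
    · intro j k hjk g hg
      calc _ ≤ ∫⁻ σ : sphere (0 : E) 1, ∏ l ∈ Finset.univ \ {j, k}, g l (B.symm σ l)
            ∂μ.toSphere := setLIntegral_le_lintegral _ _
        _ ≤ D2 (j, k) * ∏ l ∈ Finset.univ \ {j, k}, ∫⁻ x, g l x := H2 (j, k) hjk g hg
        _ ≤ _ := by
          gcongr
          exact (Finset.single_le_sum (f := D2) (fun _ _ => zero_le) (Finset.mem_univ (j, k))).trans
            le_add_self
  have hcover : (⋃ i, {σ : sphere (0 : E) 1 | (σ : E) ∈ R i}) = univ := by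
    refine eq_univ_of_forall fun σ => ?_
    obtain ⟨i, hi⟩ := exists_norm_le_abs_inner_single B (σ : E)
    exact mem_iUnion.2 ⟨i, hi⟩
  calc ∫⁻ σ : sphere (0 : E) 1, ∏ l, f l (B.symm σ l) ∂μ.toSphere
      = ∫⁻ σ in ⋃ i, {σ : sphere (0 : E) 1 | (σ : E) ∈ R i},
          ∏ l, f l (B.symm σ l) ∂μ.toSphere := by rw [hcover, Measure.restrict_univ]
    _ ≤ ∑' i, ∫⁻ σ in {σ : sphere (0 : E) 1 | (σ : E) ∈ R i},
          ∏ l, f l (B.symm σ l) ∂μ.toSphere := lintegral_iUnion_le _ _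
    _ ≤ ∑ i, (D1 i + ∑ q, D2 q) * ∏ l, (∫⁻ x, f l x ^ p) ^ (1 / p) := by
        rw [tsum_fintype]
        exact Finset.sum_le_sum fun i _ => hR i
    _ = _ := by rw [Finset.sum_mul]

end Form

section Duality

/-- The converse of Hölder's inequality for nonnegative functions on the line. -/
lemma lintegral_rpow_le_of_forall_lintegral_mul_le {F : ℝ → ℝ≥0∞} (hF : Measurable F) {r s : ℝ}
    (hrs : r.HolderConjugate s) {A : ℝ≥0∞}
    (h : ∀ g : ℝ → ℝ≥0∞, Measurable g → ∫⁻ x, g x * F x ≤ A * (∫⁻ x, g x ^ s) ^ (1 / s)) :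
    (∫⁻ x, F x ^ r) ^ (1 / r) ≤ A := by
  have hr0 : 0 < r := hrs.pos
  let G : ℕ → ℝ → ℝ≥0∞ := fun k => (Set.Icc (-(k : ℝ)) k).indicator fun x => min (F x) k
  have hGm : ∀ k, Measurable (G k) := fun k =>
    (hF.min measurable_const).indicator measurableSet_Icc
  have hGF : ∀ k x, G k x ≤ F x := fun k x =>
    (Set.indicator_le_self _ _ x).trans (min_le_left _ _)
  have hGmono : Monotone G := by
    intro k l hkl x
    have hkl' : (k : ℝ) ≤ l := by exact_mod_cast hkl
    refine (Set.indicator_le_indicator_of_subset (Set.Icc_subset_Icc (by linarith) hkl')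
      (fun _ => zero_le) x).trans (Set.indicator_le_indicator ?_)
    exact min_le_min le_rfl (by exact_mod_cast hkl)
  have hGsup : ∀ x, ⨆ k, G k x = F x := by
    intro x
    refine le_antisymm (iSup_le fun k => hGF k x) ?_
    refine le_of_forall_lt fun b hb => ?_
    obtain ⟨m, hm⟩ := ENNReal.exists_nat_gt hb.ne_top
    obtain ⟨k, hk⟩ := exists_nat_ge |x|
    refine lt_of_lt_of_le ?_ (le_iSup (fun k => G k x) (max m k))
    have hx : x ∈ Set.Icc (-((max m k : ℕ) : ℝ)) (max m k : ℕ) := by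
      rw [Set.mem_Icc, ← abs_le]
      exact hk.trans (by exact_mod_cast le_max_right m k)
    simp only [G]
    rw [Set.indicator_of_mem hx]
    refine lt_min hb (hm.trans_le (by exact_mod_cast le_max_left m k))
  have hGfin : ∀ k, ∫⁻ x, G k x ^ r ≠ ∞ := by
    intro k
    refine ne_top_of_le_ne_top (b := ∫⁻ x in Set.Icc (-(k : ℝ)) k, (k : ℝ≥0∞) ^ r) ?_ ?_
    · rw [setLIntegral_const]
      exact ENNReal.mul_ne_top (ENNReal.rpow_ne_top_of_nonneg hr0.le (ENNReal.natCast_ne_top k))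
        measure_Icc_lt_top.ne
    · rw [← lintegral_indicator measurableSet_Icc]
      refine lintegral_mono fun x => ?_
      by_cases hx : x ∈ Set.Icc (-(k : ℝ)) k
      · simp only [G, Set.indicator_of_mem hx]
        exact ENNReal.rpow_le_rpow (min_le_right _ _) hr0.le
      · simp [G, Set.indicator_of_notMem hx, hr0]
  have hGA : ∀ k, (∫⁻ x, G k x ^ r) ^ (1 / r) ≤ A := by
    intro k
    set X := ∫⁻ x, G k x ^ r with hX
    have h1 : X ≤ A * X ^ (1 / s) := by
      calc X ≤ ∫⁻ x, G k x ^ (r - 1) * F x := by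
            refine lintegral_mono fun x => ?_
            calc G k x ^ r = G k x ^ (r - 1) * G k x := by
                  have := ENNReal.rpow_add_of_nonneg (x := G k x) _ _ hrs.sub_one_pos.le
                    zero_le_one
                  rwa [sub_add_cancel, ENNReal.rpow_one] at this
              _ ≤ _ := by
                  gcongr
                  exact hGF k x
        _ ≤ A * (∫⁻ x, (G k x ^ (r - 1)) ^ s) ^ (1 / s) := h _ ((hGm k).pow_const _)
        _ = _ := by
            simp_rw [← ENNReal.rpow_mul, hrs.sub_one_mul_conj, hX]
    by_cases hX0 : X = 0
    · rw [hX0, ENNReal.zero_rpow_of_pos (by positivity)]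
      exact zero_le
    have hXr : X ^ (1 / r) = X * (X ^ (1 / s))⁻¹ := by
      rw [← ENNReal.rpow_neg]
      conv_rhs => rw [← ENNReal.rpow_one X, ← ENNReal.rpow_mul, one_mul]
      rw [← ENNReal.rpow_add _ _ hX0 (hGfin k)]
      congr 1
      have := hrs.inv_add_inv_eq_one
      simp only [one_div]
      linarith
    have hXs0 : X ^ (1 / s) ≠ 0 := by simp [ENNReal.rpow_eq_zero_iff, hX0, hrs.symm.pos.le]
    have hXst : X ^ (1 / s) ≠ ∞ :=
      ENNReal.rpow_ne_top_of_nonneg (one_div_nonneg.2 hrs.symm.pos.le) (hGfin k)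
    rw [hXr, ← div_eq_mul_inv]
    exact ENNReal.div_le_of_le_mul h1
  have hlim : ∫⁻ x, F x ^ r = ⨆ k, ∫⁻ x, G k x ^ r := by
    rw [← lintegral_iSup (fun k => (hGm k).pow_const r)
      (fun k l hkl x => ENNReal.rpow_le_rpow (hGmono hkl x) hr0.le)]
    refine lintegral_congr fun x => ?_
    rw [← hGsup x]
    exact (ENNReal.orderIsoRpow r hr0).map_iSup _
  rw [hlim, one_div, ENNReal.rpow_inv_le_iff hr0]
  refine iSup_le fun k => ?_
  rw [← ENNReal.rpow_inv_le_iff hr0, ← one_div]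
  exact hGA k

end Duality

section SphericalAverage

open Set Metric

variable {ι : Type*} [Fintype ι] [DecidableEq ι]

/-- The coordinates `x m` and `x m - x l`, `l ≠ m`, on Euclidean space. -/
lemma exists_difference_coordinates (m : ι) :
    ∃ B : (ι → ℝ) ≃L[ℝ] EuclideanSpace ℝ ι,
      ∀ x l, B.symm x l = if l = m then x m else x m - x l := by
  let A : (ι → ℝ) →ₗ[ℝ] (ι → ℝ) :=
    { toFun := fun x l => if l = m then x m else x m - x l
      map_add' := by
        intro x y
        ext l
        by_cases hl : l = m
        · simp [hl]
        · simp only [Pi.add_apply, if_neg hl]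
          ring
      map_smul' := by
        intro t x
        ext l
        by_cases hl : l = m
        · simp [hl]
        · simp only [Pi.smul_apply, if_neg hl, smul_eq_mul, RingHom.id_apply]
          ring }
  have hA : Function.Involutive A := by
    intro x
    ext l
    by_cases hl : l = m
    · simp [A, hl]
    · simp [A, hl]
  exact ⟨((EuclideanSpace.equiv ι ℝ).trans
    (LinearEquiv.ofInvolutive A hA).toContinuousLinearEquiv).symm, fun x l => rfl⟩

/-- Mixed norm bound for the multilinear spherical average, with one factor in `L¹`. -/
theorem exists_lintegral_sphere_average_rpow_le (hι : 3 ≤ Fintype.card ι) (m : ι) {p r : ℝ}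
    (hp : p = ((Fintype.card ι : ℝ) + 1) / ((Fintype.card ι : ℝ) - 1))
    (hr : r = ((Fintype.card ι : ℝ) + 1) / 2) :
    ∃ D : ℝ≥0∞, D ≠ ∞ ∧ ∀ f : ι → ℝ → ℝ≥0∞, (∀ j, Measurable (f j)) →
      (∫⁻ x, (∫⁻ σ : sphere (0 : EuclideanSpace ℝ ι) 1, ∏ j, f j (x - (σ : EuclideanSpace ℝ ι) j)
        ∂(volume : Measure (EuclideanSpace ℝ ι)).toSphere) ^ r) ^ (1 / r) ≤
      D * (∏ j ∈ Finset.univ.erase m, (∫⁻ x, f j x ^ p) ^ (1 / p)) * ∫⁻ x, f m x := by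
  obtain ⟨B, hB⟩ := exists_difference_coordinates m
  set τ := (volume : Measure (EuclideanSpace ℝ ι)).toSphere
  obtain ⟨D, hD, hDB⟩ := exists_lintegral_toSphere_prod_le_rpow volume B hι hp
  have hN : (3 : ℝ) ≤ Fintype.card ι := by exact_mod_cast hι
  have hrp : r.HolderConjugate p := by
    refine Real.holderConjugate_iff.2 ⟨by rw [hr]; linarith, ?_⟩
    rw [hr, hp, inv_div, inv_div, ← add_div]
    rw [div_eq_one_iff_eq (by linarith)]
    ring
  refine ⟨D, hD, fun f hf => ?_⟩
  have hσ : ∀ j, Measurable fun q : ℝ × sphere (0 : EuclideanSpace ℝ ι) 1 =>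
      (q.2 : EuclideanSpace ℝ ι) j := fun j => by fun_prop
  have hprod : Measurable fun q : ℝ × sphere (0 : EuclideanSpace ℝ ι) 1 =>
      ∏ j, f j (q.1 - (q.2 : EuclideanSpace ℝ ι) j) :=
    Finset.measurable_prod _ fun j _ => (hf j).comp (measurable_fst.sub (hσ j))
  refine lintegral_rpow_le_of_forall_lintegral_mul_le hprod.lintegral_prod_right' hrp
    fun g hg => ?_
  have htrans : ∀ (u : ℝ → ℝ≥0∞) (z : ℝ), ∫⁻ x, u (z + x) ^ p = ∫⁻ x, u x ^ p := fun u z =>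
    lintegral_add_left_eq_self (fun x => u x ^ p) z
  have hmeas : Measurable fun q : ℝ × sphere (0 : EuclideanSpace ℝ ι) 1 =>
      g (q.1 + (q.2 : EuclideanSpace ℝ ι) m) *
        ∏ j, f j (q.1 + (q.2 : EuclideanSpace ℝ ι) m - (q.2 : EuclideanSpace ℝ ι) j) :=
    (hg.comp (measurable_fst.add (hσ m))).mul (Finset.measurable_prod _ fun j _ =>
      (hf j).comp ((measurable_fst.add (hσ m)).sub (hσ j)))
  calc ∫⁻ x, g x * ∫⁻ σ : sphere (0 : EuclideanSpace ℝ ι) 1,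
          ∏ j, f j (x - (σ : EuclideanSpace ℝ ι) j) ∂τ
      = ∫⁻ x, ∫⁻ σ : sphere (0 : EuclideanSpace ℝ ι) 1,
          g x * ∏ j, f j (x - (σ : EuclideanSpace ℝ ι) j) ∂τ := by
        refine lintegral_congr fun x => (lintegral_const_mul _ ?_).symm
        exact hprod.comp measurable_prodMk_left
    _ = ∫⁻ σ : sphere (0 : EuclideanSpace ℝ ι) 1, ∫⁻ x,
          g x * ∏ j, f j (x - (σ : EuclideanSpace ℝ ι) j) ∂volume ∂τ :=
        lintegral_lintegral_swap ((hg.comp measurable_fst).mul hprod).aemeasurable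
    _ = ∫⁻ σ : sphere (0 : EuclideanSpace ℝ ι) 1, ∫⁻ z, g (z + (σ : EuclideanSpace ℝ ι) m) *
          ∏ j, f j (z + (σ : EuclideanSpace ℝ ι) m - (σ : EuclideanSpace ℝ ι) j) ∂volume ∂τ :=
        lintegral_congr fun σ => (lintegral_add_right_eq_self
          (fun x => g x * ∏ j, f j (x - (σ : EuclideanSpace ℝ ι) j))
            ((σ : EuclideanSpace ℝ ι) m)).symm
    _ = ∫⁻ z, ∫⁻ σ : sphere (0 : EuclideanSpace ℝ ι) 1, g (z + (σ : EuclideanSpace ℝ ι) m) *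
          ∏ j, f j (z + (σ : EuclideanSpace ℝ ι) m - (σ : EuclideanSpace ℝ ι) j) ∂τ :=
        (lintegral_lintegral_swap hmeas.aemeasurable).symm
    _ ≤ ∫⁻ z, f m z * (D * ((∫⁻ x, g x ^ p) ^ (1 / p) *
          ∏ j ∈ Finset.univ.erase m, (∫⁻ x, f j x ^ p) ^ (1 / p))) := by
        refine lintegral_mono fun z => ?_
        let h : ι → ℝ → ℝ≥0∞ := fun l x => if l = m then g (z + x) else f l (z + x)
        have hh : ∀ l, Measurable (h l) := by
          intro l
          by_cases hl : l = m
          · simp only [h, if_pos hl]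
            exact hg.comp (measurable_const_add z)
          · simp only [h, if_neg hl]
            exact (hf l).comp (measurable_const_add z)
        have hsplit : ∀ u v : ι → ℝ≥0∞, (∀ l ≠ m, u l = v l) →
            ∏ l, u l = u m * ∏ l ∈ Finset.univ.erase m, v l := by
          intro u v huv
          rw [← Finset.mul_prod_erase _ _ (Finset.mem_univ m)]
          congr 1
          exact Finset.prod_congr rfl fun l hl => huv l (Finset.ne_of_mem_erase hl)
        have hform := hDB h hh
        rw [hsplit (fun l => (∫⁻ x, h l x ^ p) ^ (1 / p))
          (fun l => (∫⁻ x, f l x ^ p) ^ (1 / p)) fun l hl => by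
            simp only [h, if_neg hl, htrans]] at hform
        simp only [h, if_pos, htrans] at hform
        refine le_trans (le_of_eq ?_) (mul_le_mul_right hform (f m z))
        rw [← lintegral_const_mul]
        · refine lintegral_congr fun σ => ?_
          rw [hsplit (fun l => f l (z + (σ : EuclideanSpace ℝ ι) m - (σ : EuclideanSpace ℝ ι) l))
            _ fun _ _ => rfl, hsplit _
            (fun l => f l (z + (σ : EuclideanSpace ℝ ι) m - (σ : EuclideanSpace ℝ ι) l))
            fun l hl => by rw [if_neg hl, hB, if_neg hl, add_sub_assoc]]
          rw [if_pos rfl, hB, if_pos rfl, add_sub_cancel_right, mul_left_comm]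
        · refine Finset.measurable_prod _ fun l _ => (hh l).comp ?_
          exact ((measurable_pi_apply l).comp B.symm.continuous.measurable).comp
            measurable_subtype_coe
    _ = _ := by
        rw [lintegral_mul_const _ (hf m)]
        ring

end SphericalAverage


lemma sphAvg_eq (n : ℕ) {f : Fin n → ℝ → ℝ} (hf : ∀ j, Measurable (f j)) (x : ℝ) :
    sphAvg n f x =
      ((volume : Measure (EuclideanSpace ℝ (Fin n))).toSphere Set.univ)⁻¹ *
        ∫⁻ σ : Metric.sphere (0 : EuclideanSpace ℝ (Fin n)) 1,
          ∏ j, ENNReal.ofReal (f j (x - (σ : EuclideanSpace ℝ (Fin n)) j))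
          ∂(volume : Measure (EuclideanSpace ℝ (Fin n))).toSphere := by
  rw [sphAvg, normSphere, lintegral_smul_measure, smul_eq_mul,
    Measure.map_apply measurable_subtype_coe MeasurableSet.univ, Set.preimage_univ,
    lintegral_map _ measurable_subtype_coe]
  refine Finset.measurable_prod _ fun j _ => ?_
  have := hf j
  fun_prop

lemma lpNorm_eq_of_toReal {q : ℝ≥0∞} {p : ℝ} (hq : q ≠ ∞) (hp : q.toReal = p) (g : ℝ → ℝ≥0∞) :
    _root_.lpNorm q g = (∫⁻ x, g x ^ p) ^ (1 / p) := by
  rw [_root_.lpNorm, if_neg hq, hp]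

theorem strong_type_at_G (n : ℕ) (hn : 3 ≤ n) :
    ∃ C : ℝ, 0 < C ∧ ∀ f : Fin n → ℝ → ℝ,
      (∀ j, Measurable (f j)) → (∀ j x, 0 ≤ f j x) →
      lpNorm (((n : ℝ≥0∞) + 1) / 2) (sphAvg n f) ≤ ENNReal.ofReal C *
        (∏ j ∈ Finset.univ.erase (⟨n - 1, by omega⟩ : Fin n),
          lpNorm (((n : ℝ≥0∞) + 1) / ((n : ℝ≥0∞) - 1))
            (fun x => ENNReal.ofReal (f j x))) *
        lpNorm 1 (fun x => ENNReal.ofReal (f (⟨n - 1, by omega⟩ : Fin n) x)) := by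
  set m : Fin n := ⟨n - 1, by omega⟩
  have : Nontrivial (Fin n) := Fin.nontrivial_iff_two_le.2 (by omega)
  have : Nontrivial (EuclideanSpace ℝ (Fin n)) := (EuclideanSpace.equiv (Fin n) ℝ).nontrivial
  have hn3 : (3 : ℝ) ≤ n := by exact_mod_cast hn
  set r : ℝ := ((n : ℝ) + 1) / 2 with hr
  set p : ℝ := ((n : ℝ) + 1) / ((n : ℝ) - 1) with hp
  have hr0 : 0 < r := by positivity
  have hsub : (n : ℝ≥0∞) - 1 = ((n - 1 : ℕ) : ℝ≥0∞) := by push_cast; rfl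
  have hsub0 : ((n - 1 : ℕ) : ℝ≥0∞) ≠ 0 := by
    rw [Nat.cast_ne_zero]
    omega
  have hnr : ∀ g, _root_.lpNorm (((n : ℝ≥0∞) + 1) / 2) g = (∫⁻ x, g x ^ r) ^ (1 / r) :=
    lpNorm_eq_of_toReal (ENNReal.div_ne_top (by simp) (by simp))
      (by rw [ENNReal.toReal_div, ENNReal.toReal_add (by simp) (by simp)]; simp [hr])
  have hnp : ∀ g, _root_.lpNorm (((n : ℝ≥0∞) + 1) / ((n : ℝ≥0∞) - 1)) g =
      (∫⁻ x, g x ^ p) ^ (1 / p) := by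
    refine lpNorm_eq_of_toReal ?_ ?_
    · rw [hsub]
      exact ENNReal.div_ne_top (by simp) hsub0
    · rw [hsub, ENNReal.toReal_div, ENNReal.toReal_add (by simp) (by simp), ENNReal.toReal_natCast,
        ENNReal.toReal_natCast, ENNReal.toReal_one, Nat.cast_sub (by omega), Nat.cast_one]
  have hn1 : ∀ g, _root_.lpNorm 1 g = ∫⁻ x, g x := by
    intro g
    simp [lpNorm_eq_of_toReal one_ne_top toReal_one]
  set κ := ((volume : Measure (EuclideanSpace ℝ (Fin n))).toSphere Set.univ)⁻¹ with hκ
  have hκt : κ ≠ ∞ := by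
    rw [hκ, ENNReal.inv_ne_top, Measure.measure_univ_ne_zero]
    exact Measure.toSphere_ne_zero _
  obtain ⟨D, hD, h⟩ := exists_lintegral_sphere_average_rpow_le (ι := Fin n) (by simpa using hn) m
    (p := p) (r := r) (by rw [Fintype.card_fin]) (by rw [Fintype.card_fin])
  refine ⟨(κ * D).toReal + 1, by positivity, fun f hf _ => ?_⟩
  have hC : κ * D ≤ ENNReal.ofReal ((κ * D).toReal + 1) :=
    ENNReal.le_ofReal_iff_toReal_le (ENNReal.mul_ne_top hκt hD) (by positivity) |>.2 (by linarith)
  simp_rw [hnr, hnp, hn1, sphAvg_eq n hf, ENNReal.mul_rpow_of_nonneg _ _ hr0.le]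
  rw [lintegral_const_mul' _ _ (ENNReal.rpow_ne_top_of_nonneg hr0.le hκt),
    ENNReal.mul_rpow_of_nonneg _ _ (by positivity), ← ENNReal.rpow_mul,
    mul_one_div_cancel hr0.ne', ENNReal.rpow_one]
  refine (mul_le_mul_right (h (fun j x => ENNReal.ofReal (f j x))
    fun j => (hf j).ennreal_ofReal) κ).trans ?_
  rw [← mul_assoc, ← mul_assoc]
  gcongr
end

section
/- Let n = 3. There exists a finite constant C > 0 such that ‖T(f₁,f₂,f₃)‖_∞ ≤ C ‖f₁‖_{5/3} ‖f₂‖_{5/3} ‖f₃‖_5 for all nonnegative measurable functions f₁, f₂, f₃ on ℝ; that is, T is of strong type at the boundary point N = (3/5, 3/5, 1/5; 0). -/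
open MeasureTheory ENNReal

theorem lintegral_toSphere_eq (H : EuclideanSpace ℝ (Fin 3) → ℝ≥0∞) (hH : Measurable H) :
    ∫⁻ ω, H ω.1 ∂(volume : Measure (EuclideanSpace ℝ (Fin 3))).toSphere =
      3 * ∫⁻ x : EuclideanSpace ℝ (Fin 3),
        H (‖x‖⁻¹ • x) * (Set.Iio (1 : ℝ)).indicator 1 ‖x‖ := by
  let E := EuclideanSpace ℝ (Fin 3)
  have hH' : Measurable fun ω : Metric.sphere (0 : E) 1 => H ω.1 := hH.comp measurable_subtype_coe
  have hpolar := (volume : Measure E).measurePreserving_homeomorphUnitSphereProd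
  have hind : Measurable fun r : Set.Ioi (0 : ℝ) =>
      (Set.Iio (1 : ℝ)).indicator (1 : ℝ → ℝ≥0∞) r.1 :=
    (measurable_one.indicator measurableSet_Iio).comp measurable_subtype_coe
  have key := hpolar.lintegral_comp_emb (Homeomorph.measurableEmbedding _)
    (fun p => H p.1.1 * (Set.Iio (1 : ℝ)).indicator 1 p.2.1)
  rw [lintegral_prod_mul (f := fun ω : Metric.sphere (0 : E) 1 => H ω.1)
    (g := fun r : Set.Ioi (0 : ℝ) => (Set.Iio (1 : ℝ)).indicator (1 : ℝ → ℝ≥0∞) r.1)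
    hH'.aemeasurable hind.aemeasurable] at key
  have hrad : ∫⁻ r : Set.Ioi (0 : ℝ), (Set.Iio (1 : ℝ)).indicator (1 : ℝ → ℝ≥0∞) r.1
      ∂(Measure.volumeIoiPow (Module.finrank ℝ E - 1)) = 3⁻¹ := by
    have h1 := Measure.volumeIoiPow_apply_Iio (Module.finrank ℝ E - 1) ⟨1, Set.mem_Ioi.2 one_pos⟩
    have h2 : Module.finrank ℝ E = 3 := by simp [E]
    have h3 : (fun r : Set.Ioi (0 : ℝ) => (Set.Iio (1 : ℝ)).indicator (1 : ℝ → ℝ≥0∞) r.1) =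
        (Set.Iio (⟨1, Set.mem_Ioi.2 one_pos⟩ : Set.Ioi (0 : ℝ))).indicator 1 := by
      ext r
      simp only [Set.indicator_apply, Set.mem_Iio, ← Subtype.coe_lt_coe, Pi.one_apply]
    rw [h3, lintegral_indicator_one measurableSet_Iio, h1, h2]
    norm_num
    rw [ENNReal.ofReal_div_of_pos (by norm_num)]
    simp
  rw [hrad] at key
  have hcart : ∫⁻ x : E, H (‖x‖⁻¹ • x) * (Set.Iio (1 : ℝ)).indicator 1 ‖x‖ =
      ∫⁻ x : ({0}ᶜ : Set E), H (‖x.1‖⁻¹ • x.1) * (Set.Iio (1 : ℝ)).indicator 1 ‖x.1‖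
        ∂(Measure.comap (↑) (volume : Measure E)) := by
    rw [lintegral_subtype_comap (measurableSet_singleton (0 : E)).compl
      (fun x : E => H (‖x‖⁻¹ • x) * (Set.Iio (1 : ℝ)).indicator 1 ‖x‖),
      restrict_compl_singleton]
  rw [hcart]
  have hkey : ∫⁻ x : ({0}ᶜ : Set E), H (‖x.1‖⁻¹ • x.1) * (Set.Iio (1 : ℝ)).indicator 1 ‖x.1‖
        ∂(Measure.comap (↑) (volume : Measure E)) =
      (∫⁻ ω, H ω.1 ∂(volume : Measure E).toSphere) * 3⁻¹ := by
    rw [← key]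
    refine lintegral_congr fun x => ?_
    simp
  rw [hkey, mul_comm, mul_assoc, ENNReal.inv_mul_cancel (by norm_num) (by norm_num), mul_one]

theorem lintegral_le_two_mul_of_even (h : ℝ → ℝ≥0∞) (he : ∀ x, h (-x) = h x) :
    ∫⁻ x, h x ≤ 2 * ∫⁻ x in Set.Ioi 0, h x := by
  have h1 : ∫⁻ x in Set.Iio 0, h x = ∫⁻ x in Set.Ioi 0, h x := by
    have := (Measure.measurePreserving_neg (volume : Measure ℝ)).setLIntegral_comp_preimage_emb
      (MeasurableEquiv.neg ℝ).measurableEmbedding h (Set.Ioi 0)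
    simpa [he] using this
  calc ∫⁻ x, h x = ∫⁻ x in ({0}ᶜ : Set ℝ), h x := by rw [restrict_compl_singleton]
    _ = ∫⁻ x in Set.Iio 0 ∪ Set.Ioi 0, h x := by rw [Set.Iio_union_Ioi]
    _ ≤ (∫⁻ x in Set.Iio 0, h x) + ∫⁻ x in Set.Ioi 0, h x := lintegral_union_le _ _ _
    _ = _ := by rw [h1, two_mul]

theorem lintegral_comp_inv_mul_prod (φ : ℝ × ℝ → ℝ≥0∞) {r : ℝ} (hr : 0 < r) :
    ∫⁻ p : ℝ × ℝ, φ (r⁻¹ * p.1, r⁻¹ * p.2) = ENNReal.ofReal (r ^ 2) * ∫⁻ p, φ p := by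
  have h := Measure.map_addHaar_smul (volume : Measure (ℝ × ℝ)) (inv_ne_zero hr.ne')
  have h2 : MeasurableEmbedding fun p : ℝ × ℝ => r⁻¹ • p :=
    (Homeomorph.smulOfNeZero r⁻¹ (inv_ne_zero hr.ne')).measurableEmbedding
  have h3 := h2.lintegral_map (μ := volume) φ
  rw [h, lintegral_smul_measure] at h3
  simp only [Prod.smul_def, smul_eq_mul] at h3
  rw [← h3]
  simp [abs_of_pos hr]

/-- Replacing the height `z` above `(s, t)` by the distance to the origin. -/
theorem lintegral_height_le (G : ℝ → ℝ≥0∞) (a : ℝ) (ha : 0 ≤ a) :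
    ∫⁻ z in Set.Ioi (0 : ℝ), ENNReal.ofReal (z / √(a + z ^ 2)) * G √(a + z ^ 2) ≤
      ∫⁻ r in Set.Ioi 0, G r := by
  have hpos : ∀ z ∈ Set.Ioi (0 : ℝ), 0 < a + z ^ 2 := fun z hz => by
    have : 0 < z := hz
    positivity
  have hd : ∀ z ∈ Set.Ioi (0 : ℝ), HasDerivWithinAt (fun z => √(a + z ^ 2))
      (z / √(a + z ^ 2)) (Set.Ioi 0) z := fun z hz => by
    have h := ((((hasDerivAt_id z).pow 2).const_add a).sqrt (hpos z hz).ne').hasDerivWithinAt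
      (s := Set.Ioi 0)
    refine HasDerivWithinAt.congr_deriv (f := fun z => √(a + z ^ 2)) h ?_
    have := mul_div_mul_left z √(a + z ^ 2) (two_ne_zero (α := ℝ))
    simpa using this
  have hinj : Set.InjOn (fun z => √(a + z ^ 2)) (Set.Ioi 0) := fun x hx y hy hxy => by
    have h1 := (Real.sqrt_inj (hpos x hx).le (hpos y hy).le).1 hxy
    have hx' : 0 < x := hx
    have hy' : 0 < y := hy
    nlinarith
  have h := lintegral_image_eq_lintegral_abs_deriv_mul measurableSet_Ioi hd hinj G
  calc _ = ∫⁻ z in Set.Ioi (0 : ℝ), ENNReal.ofReal |z / √(a + z ^ 2)| * G √(a + z ^ 2) := by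
        refine setLIntegral_congr_fun measurableSet_Ioi fun z hz => ?_
        have : 0 < z := hz
        rw [abs_of_nonneg (by positivity)]
    _ = _ := h.symm
    _ ≤ _ := by
        refine lintegral_mono_set ?_
        rintro _ ⟨z, hz, rfl⟩
        exact Real.sqrt_pos.2 (hpos z hz)

/-- Any ordering of the coordinates identifies Euclidean space with `ℝ × ℝ × ℝ`. -/
theorem measurePreserving_coords {a b c : Fin 3} (hab : a ≠ b) (hac : a ≠ c) (hbc : b ≠ c) :
    MeasurePreserving (fun x : EuclideanSpace ℝ (Fin 3) => (x c, (x a, x b))) := by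
  have hbij : Function.Bijective ![c, a, b] := by
    revert a b c
    decide
  let e : Fin 3 ≃ Fin 3 := Equiv.ofBijective _ hbij
  have h1 := PiLp.volume_preserving_ofLp (Fin 3)
  have h2 := (volume_measurePreserving_piCongrLeft (fun _ : Fin 3 => ℝ) e).symm
  have h3 := volume_preserving_piFinSuccAbove (fun _ : Fin 3 => ℝ) 0
  have h4 := (MeasurePreserving.id (volume : Measure ℝ)).prod (volume_preserving_finTwoArrow ℝ)
  exact h4.comp (h3.comp (h2.comp h1))

theorem sum_sq_coords {a b c : Fin 3} (hab : a ≠ b) (hac : a ≠ c) (hbc : b ≠ c)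
    (x : EuclideanSpace ℝ (Fin 3)) : x a ^ 2 + x b ^ 2 + x c ^ 2 = ‖x‖ ^ 2 := by
  rw [EuclideanSpace.real_norm_sq_eq, Fin.sum_univ_three]
  fin_cases a <;> fin_cases b <;> fin_cases c <;> simp_all <;> ring

theorem lintegral_toSphere_slice_le {a b c : Fin 3} (hab : a ≠ b) (hac : a ≠ c) (hbc : b ≠ c)
    (φ : ℝ × ℝ → ℝ≥0∞) (hφ : Measurable φ) :
    ∫⁻ ω, φ (ω.1 a, ω.1 b) * ENNReal.ofReal |ω.1 c|
        ∂(volume : Measure (EuclideanSpace ℝ (Fin 3))).toSphere ≤ 6 * ∫⁻ p, φ p := by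
  rw [lintegral_toSphere_eq (fun x => φ (x a, x b) * ENNReal.ofReal |x c|) (by fun_prop)]
  let G : ℝ × ℝ → ℝ → ℝ≥0∞ := fun p r =>
    φ (r⁻¹ * p.1, r⁻¹ * p.2) * (Set.Iio (1 : ℝ)).indicator 1 r
  have hG : Measurable fun q : (ℝ × ℝ) × ℝ => G q.1 q.2 := by
    refine Measurable.mul (by fun_prop) ?_
    exact (measurable_one.indicator measurableSet_Iio).comp measurable_snd
  let K : ℝ × ℝ × ℝ → ℝ≥0∞ := fun q =>
    ENNReal.ofReal (|q.1| / √(q.2.1 ^ 2 + q.2.2 ^ 2 + q.1 ^ 2)) *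
      G q.2 √(q.2.1 ^ 2 + q.2.2 ^ 2 + q.1 ^ 2)
  have hK : Measurable K := by
    refine Measurable.mul (by fun_prop) ?_
    exact hG.comp (f := fun q : ℝ × ℝ × ℝ => (q.2, √(q.2.1 ^ 2 + q.2.2 ^ 2 + q.1 ^ 2)))
      (by fun_prop)
  have hcoord : ∀ x : EuclideanSpace ℝ (Fin 3),
      φ ((‖x‖⁻¹ • x) a, (‖x‖⁻¹ • x) b) * ENNReal.ofReal |(‖x‖⁻¹ • x) c| *
        (Set.Iio (1 : ℝ)).indicator 1 ‖x‖ = K (x c, (x a, x b)) := fun x => by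
    have hn : √(x a ^ 2 + x b ^ 2 + x c ^ 2) = ‖x‖ := by
      rw [sum_sq_coords hab hac hbc, Real.sqrt_sq (norm_nonneg x)]
    simp only [K, G, hn, PiLp.smul_apply, smul_eq_mul, abs_mul, abs_inv, abs_norm, div_eq_inv_mul]
    ring
  have hfib : ∀ p : ℝ × ℝ, ∫⁻ z, K (z, p) ≤ 2 * ∫⁻ r in Set.Ioi 0, G p r := fun p => by
    refine (lintegral_le_two_mul_of_even (fun z => K (z, p)) fun z => by simp [K]).trans ?_
    gcongr 2 * ?_
    refine le_trans (le_of_eq ?_) (lintegral_height_le (G p) (p.1 ^ 2 + p.2 ^ 2) (by positivity))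
    refine setLIntegral_congr_fun measurableSet_Ioi fun z hz => ?_
    simp only [K, abs_of_pos (Set.mem_Ioi.1 hz)]
  have hrad : ∀ r ∈ Set.Ioi (0 : ℝ), ∫⁻ p, G p r ≤
      (Set.Iio (1 : ℝ)).indicator 1 r * ∫⁻ p, φ p := fun r hr => by
    by_cases h1 : r < 1
    · simp only [G, Set.indicator_of_mem (Set.mem_Iio.2 h1), Pi.one_apply, mul_one, one_mul]
      rw [lintegral_comp_inv_mul_prod φ hr]
      refine mul_le_of_le_one_left' ?_
      rw [ENNReal.ofReal_le_one]
      exact pow_le_one₀ (le_of_lt hr) h1.le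
    · simp [G, h1]
  calc _ = 3 * ∫⁻ x : EuclideanSpace ℝ (Fin 3), K (x c, (x a, x b)) := by simp_rw [hcoord]
    _ = 3 * ∫⁻ q, K q := by rw [(measurePreserving_coords hab hac hbc).lintegral_comp hK]
    _ = 3 * ∫⁻ p : ℝ × ℝ, ∫⁻ z, K (z, p) := by
        rw [Measure.volume_eq_prod, lintegral_prod_symm' _ hK]
    _ ≤ 3 * ∫⁻ p : ℝ × ℝ, 2 * ∫⁻ r in Set.Ioi 0, G p r := by gcongr; exact hfib _
    _ = 6 * ∫⁻ p : ℝ × ℝ, ∫⁻ r in Set.Ioi 0, G p r := by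
        rw [lintegral_const_mul' _ _ (by norm_num), ← mul_assoc]; norm_num
    _ = 6 * ∫⁻ r in Set.Ioi 0, ∫⁻ p, G p r := by
        rw [lintegral_lintegral_swap hG.aemeasurable]
    _ ≤ 6 * ∫⁻ r in Set.Ioi (0 : ℝ), (Set.Iio (1 : ℝ)).indicator 1 r * ∫⁻ p, φ p := by
        gcongr 6 * ?_
        exact setLIntegral_mono' measurableSet_Ioi hrad
    _ = _ := by
        rw [lintegral_mul_const _ (measurable_one.indicator measurableSet_Iio),
          lintegral_indicator_one measurableSet_Iio, Measure.restrict_apply measurableSet_Iio,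
          Set.inter_comm, Set.Ioi_inter_Iio, Real.volume_Ioo]
        simp

theorem exists_lintegral_normSphere_slice_le : ∃ C : ℝ≥0∞, C ≠ ∞ ∧
    ∀ {a b c : Fin 3}, a ≠ b → a ≠ c → b ≠ c → ∀ φ : ℝ × ℝ → ℝ≥0∞, Measurable φ →
      ∫⁻ σ, φ (σ a, σ b) * ENNReal.ofReal |σ c| ∂(normSphere 3) ≤ C * ∫⁻ p, φ p := by
  refine ⟨(Measure.map Subtype.val
      ((volume : Measure (EuclideanSpace ℝ (Fin 3))).toSphere) Set.univ)⁻¹ * 6, ?_, ?_⟩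
  · refine ENNReal.mul_ne_top (ENNReal.inv_ne_top.2 ?_) (by norm_num)
    rw [Measure.map_apply measurable_subtype_coe MeasurableSet.univ, Set.preimage_univ,
      Ne, Measure.measure_univ_eq_zero]
    exact Measure.toSphere_ne_zero _
  · intro a b c hab hac hbc φ hφ
    rw [normSphere, lintegral_smul_measure, smul_eq_mul, mul_assoc,
      lintegral_map (by fun_prop) measurable_subtype_coe]
    gcongr
    exact lintegral_toSphere_slice_le hab hac hbc φ hφ

theorem ae_norm_eq_one : ∀ᵐ σ ∂(normSphere 3), ‖σ‖ = 1 := by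
  refine Measure.ae_smul_measure ?_ _
  rw [ae_map_iff measurable_subtype_coe.aemeasurable
    (measurableSet_eq_fun measurable_norm measurable_const)]
  exact Filter.Eventually.of_forall fun ω => by simp

theorem ae_coord_ne_zero (a : Fin 3) : ∀ᵐ σ ∂(normSphere 3), σ a ≠ 0 := by
  obtain ⟨C, -, hC⟩ := exists_lintegral_normSphere_slice_le
  have hnull : ∀ b c : Fin 3, a ≠ b → a ≠ c → b ≠ c →
      ∀ᵐ σ ∂(normSphere 3), σ a = 0 → σ c = 0 := fun b c hab hac hbc => by
    have h := hC hab hac hbc (({0} ×ˢ Set.univ : Set (ℝ × ℝ)).indicator 1)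
      (measurable_one.indicator (by measurability))
    rw [lintegral_indicator_one (by measurability), Measure.volume_eq_prod,
      Measure.prod_prod, Real.volume_singleton, zero_mul, mul_zero, nonpos_iff_eq_zero,
      lintegral_eq_zero_iff] at h
    · filter_upwards [h] with σ hσ h0
      simpa [h0] using hσ
    · refine Measurable.mul ?_ (by fun_prop)
      exact (measurable_one.indicator (by measurability)).comp (by fun_prop)
  obtain ⟨b, c, hab, hac, hbc⟩ : ∃ b c : Fin 3, a ≠ b ∧ a ≠ c ∧ b ≠ c := by
    clear hnull
    revert a
    decide
  filter_upwards [hnull b c hab hac hbc, hnull c b hac hab hbc.symm, ae_norm_eq_one]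
    with σ h1 h2 hn h0
  have := sum_sq_coords hab hac hbc σ
  rw [h0, h1 h0, h2 h0, hn] at this
  norm_num at this

theorem normSphere_univ_le_one : normSphere 3 Set.univ ≤ 1 := by
  rw [normSphere, Measure.smul_apply, smul_eq_mul]
  exact ENNReal.inv_mul_le_one _

theorem lintegral_Ioo_rpow {r v : ℝ} (hr : -1 < r) (hv : 0 < v) :
    ∫⁻ t in Set.Ioo 0 v, ENNReal.ofReal (t ^ r) = ENNReal.ofReal (v ^ (r + 1) / (r + 1)) := by
  rw [Measure.restrict_congr_set Ioo_ae_eq_Ioc, ← ofReal_integral_eq_lintegral_ofReal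
    (intervalIntegral.intervalIntegrable_rpow' hr).1, ← intervalIntegral.integral_of_le hv.le,
    integral_rpow (Or.inl hr), Real.zero_rpow (by linarith), sub_zero]
  filter_upwards [ae_restrict_mem measurableSet_Ioc] with y hy
  exact Real.rpow_nonneg hy.1.le _

theorem lintegral_Ioo_sub_rpow {r v : ℝ} (hr : -1 < r) (hv : 0 < v) :
    ∫⁻ t in Set.Ioo 0 v, ENNReal.ofReal ((v - t) ^ r) =
      ENNReal.ofReal (v ^ (r + 1) / (r + 1)) := by
  rw [← lintegral_Ioo_rpow hr hv]
  have h := (Measure.measurePreserving_sub_left (volume : Measure ℝ) v)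
    |>.setLIntegral_comp_preimage_emb (MeasurableEquiv.subLeft v).measurableEmbedding
      (fun t => ENNReal.ofReal (t ^ r)) (Set.Ioo 0 v)
  simpa using h

theorem lintegral_Ioi_rpow {r c : ℝ} (hr : r < -1) (hc : 0 < c) :
    ∫⁻ t in Set.Ioi c, ENNReal.ofReal (t ^ r) = ENNReal.ofReal (-c ^ (r + 1) / (r + 1)) := by
  rw [← ofReal_integral_eq_lintegral_ofReal (integrableOn_Ioi_rpow_of_lt hr hc),
    integral_Ioi_rpow_of_lt hr hc]
  filter_upwards [ae_restrict_mem measurableSet_Ioi] with y hy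
  exact Real.rpow_nonneg (hc.trans hy).le _

theorem rpow_le_two_mul_rpow_of_half_le {r v x : ℝ} (hv : 0 < v) (hx : v / 2 ≤ x)
    (hr : -1 ≤ r) (hr0 : r ≤ 0) : x ^ r ≤ 2 * v ^ r := by
  calc x ^ r ≤ (v / 2) ^ r := Real.rpow_le_rpow_of_nonpos (by positivity) hx hr0
    _ = 2 ^ (-r) * v ^ r := by
        rw [Real.div_rpow hv.le two_pos.le, Real.rpow_neg two_pos.le, div_eq_inv_mul]
    _ ≤ 2 ^ (1 : ℝ) * v ^ r := by
        gcongr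
        · norm_num
        · linarith
    _ = _ := by rw [Real.rpow_one]

theorem sqrt_rpow_neg_three_halves (y : ℝ) (hy : 0 ≤ y) :
    √y ^ (-3 / 2 : ℝ) = y ^ (-3 / 4 : ℝ) := by
  rw [Real.sqrt_eq_rpow, ← Real.rpow_mul hy]
  norm_num

/-- The kernel of the first Schur test for the density `(1 - p² - q²)^{-1/2}`. -/
noncomputable def schurKernelLeft (p q : ℝ) : ℝ :=
  √(1 - p ^ 2 - q ^ 2) ^ (-3 / 2 : ℝ) * √(1 - p ^ 2) * |q| ^ (-1 / 2 : ℝ)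

/-- The kernel of the second Schur test for the density `(1 - p² - q²)^{-1/2}`. -/
noncomputable def schurKernelRight (p q : ℝ) : ℝ :=
  √(1 - p ^ 2 - q ^ 2) ^ (-3 / 2 : ℝ) * (√(1 - p ^ 2))⁻¹ * |q| ^ (1 / 2 : ℝ) * |p|

@[fun_prop]
theorem measurable_schurKernelLeft :
    Measurable fun x : ℝ × ℝ => schurKernelLeft x.1 x.2 := by
  unfold schurKernelLeft
  fun_prop

@[fun_prop]
theorem measurable_schurKernelRight :
    Measurable fun x : ℝ × ℝ => schurKernelRight x.1 x.2 := by
  unfold schurKernelRight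
  fun_prop

theorem schurKernelLeft_nonneg (p q : ℝ) : 0 ≤ schurKernelLeft p q := by
  unfold schurKernelLeft
  positivity

theorem schurKernelRight_nonneg (p q : ℝ) : 0 ≤ schurKernelRight p q := by
  unfold schurKernelRight
  positivity

theorem sqrt_sq_sub_sq_rpow_mul_le {t v : ℝ} (ht : 0 < t) (htv : t < v) :
    √(v ^ 2 - t ^ 2) ^ (-3 / 2 : ℝ) * v * t ^ (-1 / 2 : ℝ) ≤
      2 * v ^ (-1 / 4 : ℝ) * (v - t) ^ (-3 / 4 : ℝ) +
        2 * v ^ (-1 / 2 : ℝ) * t ^ (-1 / 2 : ℝ) := by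
  have hv : 0 < v := ht.trans htv
  have hvt : 0 < v - t := sub_pos.2 htv
  have h1 : √(v ^ 2 - t ^ 2) ^ (-3 / 2 : ℝ) ≤ (v - t) ^ (-3 / 4 : ℝ) * v ^ (-3 / 4 : ℝ) := by
    rw [show v ^ 2 - t ^ 2 = (v - t) * (v + t) by ring,
      sqrt_rpow_neg_three_halves _ (by positivity), Real.mul_rpow hvt.le (by positivity)]
    gcongr ?_ * ?_
    exact Real.rpow_le_rpow_of_nonpos hv (by linarith) (by norm_num)
  have hv1 : v ^ (-3 / 4 : ℝ) * v = v ^ (1 / 4 : ℝ) := by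
    nth_rw 2 [← Real.rpow_one v]
    rw [← Real.rpow_add hv]
    norm_num
  have h2 : √(v ^ 2 - t ^ 2) ^ (-3 / 2 : ℝ) * v * t ^ (-1 / 2 : ℝ) ≤
      (v - t) ^ (-3 / 4 : ℝ) * v ^ (1 / 4 : ℝ) * t ^ (-1 / 2 : ℝ) := by
    rw [← hv1, ← mul_assoc]
    gcongr
  refine h2.trans ?_
  rcases le_total (v / 2) t with h | h
  · have h3 := rpow_le_two_mul_rpow_of_half_le (r := -1 / 2) hv h (by norm_num) (by norm_num)
    have hv2 : v ^ (1 / 4 : ℝ) * v ^ (-1 / 2 : ℝ) = v ^ (-1 / 4 : ℝ) := by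
      rw [← Real.rpow_add hv]
      norm_num
    calc _ ≤ (v - t) ^ (-3 / 4 : ℝ) * v ^ (1 / 4 : ℝ) * (2 * v ^ (-1 / 2 : ℝ)) := by gcongr
      _ = 2 * v ^ (-1 / 4 : ℝ) * (v - t) ^ (-3 / 4 : ℝ) := by rw [← hv2]; ring
      _ ≤ _ := le_add_of_nonneg_right (by positivity)
  · have h3 := rpow_le_two_mul_rpow_of_half_le (r := -3 / 4) (x := v - t) hv (by linarith)
      (by norm_num) (by norm_num)
    have hv2 : v ^ (-3 / 4 : ℝ) * v ^ (1 / 4 : ℝ) = v ^ (-1 / 2 : ℝ) := by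
      rw [← Real.rpow_add hv]
      norm_num
    calc _ ≤ 2 * v ^ (-3 / 4 : ℝ) * v ^ (1 / 4 : ℝ) * t ^ (-1 / 2 : ℝ) := by gcongr
      _ = 2 * v ^ (-1 / 2 : ℝ) * t ^ (-1 / 2 : ℝ) := by rw [← hv2]; ring
      _ ≤ _ := le_add_of_nonneg_left (by positivity)

theorem lintegral_schurKernelLeft_le (p : ℝ) :
    ∫⁻ q, ENNReal.ofReal (schurKernelLeft p q) ≤ 24 := by
  rcases le_or_gt (1 - p ^ 2) 0 with hp | hp
  · simp [schurKernelLeft, Real.sqrt_eq_zero_of_nonpos hp]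
  set v := √(1 - p ^ 2) with hv_def
  have hv : 0 < v := Real.sqrt_pos.2 hp
  have hv2 : 1 - p ^ 2 = v ^ 2 := (Real.sq_sqrt hp.le).symm
  have hpt : ∀ t ∈ Set.Ioi (0 : ℝ), ENNReal.ofReal (schurKernelLeft p t) ≤
      (Set.Ioo 0 v).indicator (fun t => ENNReal.ofReal (2 * v ^ (-1 / 4 : ℝ)) *
        ENNReal.ofReal ((v - t) ^ (-3 / 4 : ℝ)) + ENNReal.ofReal (2 * v ^ (-1 / 2 : ℝ)) *
        ENNReal.ofReal (t ^ (-1 / 2 : ℝ))) t := fun t ht => by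
    have ht0 : 0 < t := ht
    rcases lt_or_ge t v with htv | htv
    · rw [Set.indicator_of_mem (show t ∈ Set.Ioo 0 v from ⟨ht, htv⟩),
        ← ENNReal.ofReal_mul (by positivity), ← ENNReal.ofReal_mul (by positivity),
        ← ENNReal.ofReal_add (mul_nonneg (by positivity)
          (Real.rpow_nonneg (sub_pos.2 htv).le _)) (by positivity)]
      refine ENNReal.ofReal_le_ofReal ?_
      rw [schurKernelLeft, ← hv_def, hv2, abs_of_pos ht0]
      exact sqrt_sq_sub_sq_rpow_mul_le ht0 htv
    · have : v ^ 2 - t ^ 2 ≤ 0 := by nlinarith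
      rw [schurKernelLeft, hv2, Real.sqrt_eq_zero_of_nonpos this,
        Real.zero_rpow (by norm_num)]
      simp
  calc _ ≤ 2 * ∫⁻ t in Set.Ioi 0, ENNReal.ofReal (schurKernelLeft p t) :=
        lintegral_le_two_mul_of_even _ fun t => by simp [schurKernelLeft]
    _ ≤ 2 * ∫⁻ t, (Set.Ioo 0 v).indicator (fun t => ENNReal.ofReal (2 * v ^ (-1 / 4 : ℝ)) *
        ENNReal.ofReal ((v - t) ^ (-3 / 4 : ℝ)) + ENNReal.ofReal (2 * v ^ (-1 / 2 : ℝ)) *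
        ENNReal.ofReal (t ^ (-1 / 2 : ℝ))) t := by
        gcongr 2 * ?_
        exact (setLIntegral_mono' measurableSet_Ioi hpt).trans (setLIntegral_le_lintegral _ _)
    _ = 2 * (ENNReal.ofReal (2 * v ^ (-1 / 4 : ℝ)) * ENNReal.ofReal (4 * v ^ (1 / 4 : ℝ)) +
        ENNReal.ofReal (2 * v ^ (-1 / 2 : ℝ)) * ENNReal.ofReal (2 * v ^ (1 / 2 : ℝ))) := by
        rw [lintegral_indicator measurableSet_Ioo, lintegral_add_left (by fun_prop),
          lintegral_const_mul _ (by fun_prop), lintegral_const_mul _ (by fun_prop),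
          lintegral_Ioo_sub_rpow (by norm_num) hv, lintegral_Ioo_rpow (by norm_num) hv]
        norm_num [div_eq_mul_inv, mul_comm]
    _ = 24 := by
        rw [← ENNReal.ofReal_mul (by positivity), ← ENNReal.ofReal_mul (by positivity)]
        have e1 : 2 * v ^ (-1 / 4 : ℝ) * (4 * v ^ (1 / 4 : ℝ)) = 8 := by
          rw [show 2 * v ^ (-1 / 4 : ℝ) * (4 * v ^ (1 / 4 : ℝ)) =
            8 * (v ^ (-1 / 4 : ℝ) * v ^ (1 / 4 : ℝ)) by ring, ← Real.rpow_add hv]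
          norm_num
        have e2 : 2 * v ^ (-1 / 2 : ℝ) * (2 * v ^ (1 / 2 : ℝ)) = 4 := by
          rw [show 2 * v ^ (-1 / 2 : ℝ) * (2 * v ^ (1 / 2 : ℝ)) =
            4 * (v ^ (-1 / 2 : ℝ) * v ^ (1 / 2 : ℝ)) by ring, ← Real.rpow_add hv]
          norm_num
        rw [e1, e2]
        norm_num

theorem lintegral_height_kernel_le {τ : ℝ} (hτ : 0 < τ) :
    ∫⁻ y in Set.Ioi (0 : ℝ),
      ENNReal.ofReal (√y ^ (-3 / 2 : ℝ) * (√(y + τ ^ 2))⁻¹ * τ ^ (1 / 2 : ℝ)) ≤ 8 := by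
  have hT : 0 < τ ^ 2 := by positivity
  have hsub : Set.Ioi (0 : ℝ) ⊆ Set.Ioo 0 (τ ^ 2) ∪ Set.Ici (τ ^ 2) := fun y hy =>
    (lt_or_ge y (τ ^ 2)).imp (fun h => ⟨hy, h⟩) id
  have hTq : (τ ^ 2) ^ (1 / 4 : ℝ) = τ ^ (1 / 2 : ℝ) := by
    rw [← Real.rpow_natCast, ← Real.rpow_mul hτ.le]
    norm_num
  have hTq' : (τ ^ 2) ^ (-1 / 4 : ℝ) = τ ^ (-1 / 2 : ℝ) := by
    rw [← Real.rpow_natCast, ← Real.rpow_mul hτ.le]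
    norm_num
  have hcancel : τ ^ (-1 / 2 : ℝ) * τ ^ (1 / 2 : ℝ) = 1 := by
    rw [← Real.rpow_add hτ]
    norm_num
  have h1 : ∫⁻ y in Set.Ioo 0 (τ ^ 2),
      ENNReal.ofReal (√y ^ (-3 / 2 : ℝ) * (√(y + τ ^ 2))⁻¹ * τ ^ (1 / 2 : ℝ)) ≤ 4 := by
    calc _ ≤ ∫⁻ y in Set.Ioo 0 (τ ^ 2),
          ENNReal.ofReal (τ ^ (-1 / 2 : ℝ)) * ENNReal.ofReal (y ^ (-3 / 4 : ℝ)) := by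
          refine setLIntegral_mono' measurableSet_Ioo fun y hy => ?_
          have hy0 : 0 < y := hy.1
          rw [← ENNReal.ofReal_mul (by positivity)]
          refine ENNReal.ofReal_le_ofReal ?_
          have h2 : (√(y + τ ^ 2))⁻¹ ≤ τ⁻¹ :=
            inv_anti₀ hτ (Real.le_sqrt_of_sq_le (by linarith))
          have h3 : τ⁻¹ * τ ^ (1 / 2 : ℝ) = τ ^ (-1 / 2 : ℝ) := by
            rw [← Real.rpow_neg_one, ← Real.rpow_add hτ]
            norm_num
          rw [sqrt_rpow_neg_three_halves y hy0.le, ← h3]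
          calc _ ≤ y ^ (-3 / 4 : ℝ) * τ⁻¹ * τ ^ (1 / 2 : ℝ) := by gcongr
            _ = _ := by ring
      _ = ENNReal.ofReal (τ ^ (-1 / 2 : ℝ)) * ENNReal.ofReal (4 * τ ^ (1 / 2 : ℝ)) := by
          rw [lintegral_const_mul _ (by fun_prop), lintegral_Ioo_rpow (by norm_num) hT, ← hTq]
          norm_num [div_eq_mul_inv, mul_comm]
      _ = 4 := by
          rw [← ENNReal.ofReal_mul (by positivity), mul_left_comm, hcancel]
          norm_num
  have h2 : ∫⁻ y in Set.Ici (τ ^ 2),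
      ENNReal.ofReal (√y ^ (-3 / 2 : ℝ) * (√(y + τ ^ 2))⁻¹ * τ ^ (1 / 2 : ℝ)) ≤ 4 := by
    rw [Measure.restrict_congr_set Ioi_ae_eq_Ici.symm]
    calc _ ≤ ∫⁻ y in Set.Ioi (τ ^ 2),
          ENNReal.ofReal (τ ^ (1 / 2 : ℝ)) * ENNReal.ofReal (y ^ (-5 / 4 : ℝ)) := by
          refine setLIntegral_mono' measurableSet_Ioi fun y hy => ?_
          have hy0 : 0 < y := hT.trans hy
          rw [← ENNReal.ofReal_mul (by positivity)]
          refine ENNReal.ofReal_le_ofReal ?_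
          have h2 : (√(y + τ ^ 2))⁻¹ ≤ y ^ (-1 / 2 : ℝ) := by
            rw [show (-1 / 2 : ℝ) = -(1 / 2) by norm_num, Real.rpow_neg hy0.le,
              ← Real.sqrt_eq_rpow]
            exact inv_anti₀ (Real.sqrt_pos.2 hy0) (Real.sqrt_le_sqrt (by linarith))
          have h3 : y ^ (-3 / 4 : ℝ) * y ^ (-1 / 2 : ℝ) = y ^ (-5 / 4 : ℝ) := by
            rw [← Real.rpow_add hy0]
            norm_num
          rw [sqrt_rpow_neg_three_halves y hy0.le, ← h3]
          calc _ ≤ y ^ (-3 / 4 : ℝ) * y ^ (-1 / 2 : ℝ) * τ ^ (1 / 2 : ℝ) := by gcongr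
            _ = _ := by ring
      _ = ENNReal.ofReal (τ ^ (1 / 2 : ℝ)) * ENNReal.ofReal (4 * τ ^ (-1 / 2 : ℝ)) := by
          rw [lintegral_const_mul _ (by fun_prop), lintegral_Ioi_rpow (by norm_num) hT, ← hTq']
          norm_num [div_eq_mul_inv, mul_comm]
      _ = 4 := by
          rw [← ENNReal.ofReal_mul (by positivity), mul_left_comm, mul_comm (τ ^ _) (τ ^ _),
            hcancel]
          norm_num
  calc _ ≤ _ := lintegral_mono_set hsub
    _ ≤ _ := lintegral_union_le _ _ _
    _ ≤ 4 + 4 := add_le_add h1 h2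
    _ = 8 := by norm_num

theorem lintegral_schurKernelRight_le (q : ℝ) :
    ∫⁻ p, ENNReal.ofReal (schurKernelRight p q) ≤ 16 := by
  rcases eq_or_ne q 0 with rfl | hq
  · simp [schurKernelRight]
  have hτ : 0 < |q| := abs_pos.2 hq
  let g : ℝ → ℝ≥0∞ := fun y =>
    ENNReal.ofReal (√y ^ (-3 / 2 : ℝ) * (√(y + |q| ^ 2))⁻¹ * |q| ^ (1 / 2 : ℝ))
  have hg : ∫⁻ y, g y ≤ 8 := by
    rw [← setLIntegral_eq_of_support_subset (s := Set.Ioi 0)]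
    · exact lintegral_height_kernel_le hτ
    · intro y hy
      by_contra h
      refine hy ?_
      simp only [g, Real.sqrt_eq_zero_of_nonpos (not_lt.1 h)]
      rw [Real.zero_rpow (by norm_num)]
      simp
  have hcov := lintegral_image_eq_lintegral_abs_deriv_mul (s := Set.Ioi (0 : ℝ))
    (f := fun s => 1 - s ^ 2 - q ^ 2) (f' := fun s => -(2 * s)) measurableSet_Ioi
    (fun s _ => by
      have h := ((((hasDerivAt_id s).pow 2).const_sub 1).sub_const (q ^ 2)).hasDerivWithinAt
        (s := Set.Ioi 0)
      refine HasDerivWithinAt.congr_deriv (f := fun s => 1 - s ^ 2 - q ^ 2) h ?_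
      simp)
    (fun x hx y hy hxy => by
      have hx' : 0 < x := hx
      have hy' : 0 < y := hy
      simp only at hxy
      nlinarith) g
  calc _ ≤ 2 * ∫⁻ s in Set.Ioi 0, ENNReal.ofReal (schurKernelRight s q) :=
        lintegral_le_two_mul_of_even _ fun s => by simp [schurKernelRight]
    _ ≤ 2 * ∫⁻ s in Set.Ioi 0, ENNReal.ofReal |-(2 * s)| * g (1 - s ^ 2 - q ^ 2) := by
        gcongr 2 * ?_
        refine setLIntegral_mono' measurableSet_Ioi fun s hs => ?_
        have hs0 : 0 < s := hs
        rw [← ENNReal.ofReal_mul (abs_nonneg _)]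
        refine ENNReal.ofReal_le_ofReal ?_
        rw [schurKernelRight, sq_abs, sub_add_cancel, abs_neg, abs_of_pos hs0,
          abs_of_pos (by positivity : 0 < 2 * s), mul_comm _ s]
        gcongr
        linarith
    _ = 2 * ∫⁻ y in (fun s => 1 - s ^ 2 - q ^ 2) '' Set.Ioi 0, g y := by rw [hcov]
    _ ≤ 2 * 8 := by
        gcongr
        exact (setLIntegral_le_lintegral _ _).trans hg
    _ = 16 := by norm_num

theorem one_le_schurKernelLeft_mul {p q z : ℝ} (h : p ^ 2 + q ^ 2 + z ^ 2 = 1) (hq : q ≠ 0)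
    (hz : z ≠ 0) : 1 ≤ schurKernelLeft p q * |z| := by
  have hq' : 0 < |q| := abs_pos.2 hq
  have hz' : 0 < |z| := abs_pos.2 hz
  have hv : |z| ^ (1 / 2 : ℝ) * |q| ^ (1 / 2 : ℝ) ≤ √(1 - p ^ 2) := by
    rw [← Real.mul_rpow hz'.le hq'.le, ← Real.sqrt_eq_rpow]
    refine Real.sqrt_le_sqrt ?_
    nlinarith [sq_abs q, sq_abs z, sq_nonneg (|q| - |z|)]
  have hzz : |z| ^ (-3 / 2 : ℝ) * |z| ^ (1 / 2 : ℝ) * |z| = 1 := by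
    nth_rw 3 [← Real.rpow_one |z|]
    rw [← Real.rpow_add hz', ← Real.rpow_add hz']
    norm_num
  have hqq : |q| ^ (1 / 2 : ℝ) * |q| ^ (-1 / 2 : ℝ) = 1 := by
    rw [← Real.rpow_add hq']
    norm_num
  rw [schurKernelLeft, show 1 - p ^ 2 - q ^ 2 = z ^ 2 by linarith, Real.sqrt_sq_eq_abs]
  calc (1 : ℝ) = (|z| ^ (-3 / 2 : ℝ) * |z| ^ (1 / 2 : ℝ) * |z|) *
        (|q| ^ (1 / 2 : ℝ) * |q| ^ (-1 / 2 : ℝ)) := by rw [hzz, hqq, one_mul]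
    _ = |z| ^ (-3 / 2 : ℝ) * (|z| ^ (1 / 2 : ℝ) * |q| ^ (1 / 2 : ℝ)) * |q| ^ (-1 / 2 : ℝ) *
        |z| := by ring
    _ ≤ _ := by gcongr

theorem schurKernel_mul_schurKernel {p q z : ℝ} (h : p ^ 2 + q ^ 2 + z ^ 2 = 1) (hq : q ≠ 0)
    (hz : z ≠ 0) :
    (schurKernelLeft p q * |z|) * (schurKernelRight p q * |z|) * |z| = |p| := by
  have hq' : 0 < |q| := abs_pos.2 hq
  have hz' : 0 < |z| := abs_pos.2 hz
  have hv : 0 < √(1 - p ^ 2) := Real.sqrt_pos.2 (by nlinarith [sq_abs z, sq_nonneg q])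
  have hzz : |z| ^ (-3 / 2 : ℝ) * |z| ^ (-3 / 2 : ℝ) * |z| ^ 3 = 1 := by
    rw [← Real.rpow_natCast, ← Real.rpow_add hz', ← Real.rpow_add hz']
    norm_num
  have hqq : |q| ^ (-1 / 2 : ℝ) * |q| ^ (1 / 2 : ℝ) = 1 := by
    rw [← Real.rpow_add hq']
    norm_num
  rw [schurKernelLeft, schurKernelRight, show 1 - p ^ 2 - q ^ 2 = z ^ 2 by linarith,
    Real.sqrt_sq_eq_abs]
  calc _ = (|z| ^ (-3 / 2 : ℝ) * |z| ^ (-3 / 2 : ℝ) * |z| ^ 3) *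
        (|q| ^ (-1 / 2 : ℝ) * |q| ^ (1 / 2 : ℝ)) * (√(1 - p ^ 2) * (√(1 - p ^ 2))⁻¹) * |p| := by
        ring
    _ = |p| := by rw [hzz, hqq, mul_inv_cancel₀ hv.ne']; ring

theorem lintegral_rpow_prod_le {α : Type*} [MeasurableSpace α] {μ : Measure α}
    {X : Fin 5 → α → ℝ≥0∞} (hX : ∀ i, Measurable (X i)) :
    ∫⁻ x, (∏ i, X i x) ^ (1 / 5 : ℝ) ∂μ ≤ (∏ i, ∫⁻ x, X i x ∂μ) ^ (1 / 5 : ℝ) := by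
  have h := ENNReal.lintegral_prod_norm_pow_le (μ := μ) Finset.univ
    (fun i _ => (hX i).aemeasurable) (p := fun _ => 1 / 5) (by simp) (by intros; norm_num)
  simpa only [ENNReal.prod_rpow_of_nonneg (show (0 : ℝ) ≤ 1 / 5 by norm_num)] using h

theorem ofReal_sq_le_rpow {x : ℝ} (hx : x ^ 2 ≤ 1) :
    ENNReal.ofReal (x ^ 2) ≤ ENNReal.ofReal (x ^ 4) ^ (1 / 5 : ℝ) := by
  rw [show x ^ 4 = (x ^ 2) ^ 2 by ring, ENNReal.ofReal_pow (sq_nonneg x),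
    ← ENNReal.rpow_natCast, ← ENNReal.rpow_mul]
  conv_lhs => rw [← ENNReal.rpow_one (ENNReal.ofReal (x ^ 2))]
  exact ENNReal.rpow_le_rpow_of_exponent_ge (ENNReal.ofReal_le_one.2 hx) (by norm_num)

/-- A five-fold Hölder inequality, localized by the weight `σ_d ^ 2`. -/
theorem lintegral_localized_le {u : EuclideanSpace ℝ (Fin 3) → ℝ≥0∞} (d : Fin 3)
    {X : Fin 5 → EuclideanSpace ℝ (Fin 3) → ℝ≥0∞} (hX : ∀ i, Measurable (X i))
    (h : ∀ᵐ σ ∂(normSphere 3), u σ * ENNReal.ofReal (σ d ^ 4) ≤ ∏ i, X i σ) :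
    ∫⁻ σ, u σ ^ (1 / 5 : ℝ) * ENNReal.ofReal (σ d ^ 2) ∂(normSphere 3) ≤
      (∏ i, ∫⁻ σ, X i σ ∂(normSphere 3)) ^ (1 / 5 : ℝ) := by
  refine (lintegral_mono_ae ?_).trans (lintegral_rpow_prod_le hX)
  filter_upwards [h, ae_norm_eq_one] with σ hσ hn
  have hd : σ d ^ 2 ≤ 1 := by
    have h1 : ‖σ d‖ ≤ ‖σ‖ := PiLp.norm_apply_le σ d
    rw [hn, Real.norm_eq_abs] at h1
    exact (sq_le_one_iff_abs_le_one _).2 h1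
  calc _ ≤ u σ ^ (1 / 5 : ℝ) * ENNReal.ofReal (σ d ^ 4) ^ (1 / 5 : ℝ) := by
        gcongr
        exact ofReal_sq_le_rpow hd
    _ = (u σ * ENNReal.ofReal (σ d ^ 4)) ^ (1 / 5 : ℝ) :=
        (ENNReal.mul_rpow_of_nonneg _ _ (by norm_num)).symm
    _ ≤ _ := by gcongr

/-- `C` bounds the surface measure by Lebesgue measure in any pair of coordinates. -/
def SliceBound (C : ℝ≥0∞) : Prop :=
  ∀ {a b c : Fin 3}, a ≠ b → a ≠ c → b ≠ c → ∀ φ : ℝ × ℝ → ℝ≥0∞, Measurable φ →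
    ∫⁻ σ, φ (σ a, σ b) * ENNReal.ofReal |σ c| ∂(normSphere 3) ≤ C * ∫⁻ p, φ p

section Terms

variable {C : ℝ≥0∞} {a b c : Fin 3} {F G H : ℝ → ℝ≥0∞}

theorem SliceBound.prod_le (hC : SliceBound C) (hab : a ≠ b) (hac : a ≠ c) (hbc : b ≠ c)
    (hF : Measurable F) (hG : Measurable G) :
    ∫⁻ σ, F (σ a) * G (σ b) * ENNReal.ofReal |σ c| ∂(normSphere 3) ≤
      C * ((∫⁻ x, F x) * ∫⁻ x, G x) := by
  refine (hC hab hac hbc (fun p => F p.1 * G p.2) (by fun_prop)).trans_eq ?_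
  rw [Measure.volume_eq_prod, lintegral_prod_mul hF.aemeasurable hG.aemeasurable]

theorem SliceBound.left_le (hC : SliceBound C) (hab : a ≠ b) (hac : a ≠ c) (hbc : b ≠ c)
    (hF : Measurable F) :
    ∫⁻ σ, F (σ a) * ENNReal.ofReal (schurKernelLeft (σ a) (σ b)) * ENNReal.ofReal |σ c|
      ∂(normSphere 3) ≤ C * (24 * ∫⁻ x, F x) := by
  refine (hC hab hac hbc (fun p => F p.1 * ENNReal.ofReal (schurKernelLeft p.1 p.2))
    (by fun_prop)).trans ?_
  gcongr
  rw [Measure.volume_eq_prod, lintegral_prod _ (by fun_prop), mul_comm (24 : ℝ≥0∞),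
    ← lintegral_mul_const _ hF]
  refine lintegral_mono fun x => ?_
  dsimp only
  rw [lintegral_const_mul _ (by fun_prop)]
  gcongr
  exact lintegral_schurKernelLeft_le x

theorem SliceBound.right_le (hC : SliceBound C) (hab : a ≠ b) (hac : a ≠ c) (hbc : b ≠ c)
    (hG : Measurable G) :
    ∫⁻ σ, G (σ b) * ENNReal.ofReal (schurKernelRight (σ a) (σ b)) * ENNReal.ofReal |σ c|
      ∂(normSphere 3) ≤ C * (16 * ∫⁻ x, G x) := by
  refine (hC hab hac hbc (fun p => G p.2 * ENNReal.ofReal (schurKernelRight p.1 p.2))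
    (by fun_prop)).trans ?_
  gcongr
  rw [Measure.volume_eq_prod, lintegral_prod_symm _ (by fun_prop), mul_comm (16 : ℝ≥0∞),
    ← lintegral_mul_const _ hG]
  refine lintegral_mono fun x => ?_
  dsimp only
  rw [lintegral_const_mul _ (by fun_prop)]
  gcongr
  exact lintegral_schurKernelRight_le x

theorem SliceBound.lintegral_heavy_le (hC : SliceBound C) (hab : a ≠ b) (hac : a ≠ c)
    (hbc : b ≠ c) (hF : Measurable F) (hG : Measurable G) (hH : Measurable H) :
    ∫⁻ σ, (F (σ a) ^ 3 * G (σ b) ^ 3 * H (σ c)) ^ (1 / 5 : ℝ) * ENNReal.ofReal (σ a ^ 2)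
        ∂(normSphere 3) ≤
      (C ^ 5 * 9216) ^ (1 / 5 : ℝ) *
        ((∫⁻ x, F x) ^ 3 * (∫⁻ x, G x) ^ 3 * ∫⁻ x, H x) ^ (1 / 5 : ℝ) := by
  refine (lintegral_localized_le a (X := ![
    fun σ => F (σ a) * ENNReal.ofReal (schurKernelLeft (σ a) (σ b)) * ENNReal.ofReal |σ c|,
    fun σ => G (σ b) * ENNReal.ofReal (schurKernelRight (σ a) (σ b)) * ENNReal.ofReal |σ c|,
    fun σ => F (σ a) * G (σ b) * ENNReal.ofReal |σ c|,
    fun σ => F (σ a) * ENNReal.ofReal (schurKernelLeft (σ a) (σ b)) * ENNReal.ofReal |σ c|,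
    fun σ => G (σ b) * H (σ c) * ENNReal.ofReal |σ a|]) ?_ ?_).trans ?_
  · intro i
    fin_cases i <;> simp <;> fun_prop
  · filter_upwards [ae_norm_eq_one, ae_coord_ne_zero b, ae_coord_ne_zero c] with σ hn hb hc
    have hsum : σ a ^ 2 + σ b ^ 2 + σ c ^ 2 = 1 := by
      rw [sum_sq_coords hab hac hbc, hn, one_pow]
    have hl := one_le_schurKernelLeft_mul hsum hb hc
    have hlr := schurKernel_mul_schurKernel hsum hb hc
    have hl0 := schurKernelLeft_nonneg (σ a) (σ b)
    have hr0 := schurKernelRight_nonneg (σ a) (σ b)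
    have hw : ENNReal.ofReal (σ a ^ 4) ≤
        ENNReal.ofReal (schurKernelLeft (σ a) (σ b)) * ENNReal.ofReal |σ c| *
        (ENNReal.ofReal (schurKernelRight (σ a) (σ b)) * ENNReal.ofReal |σ c|) *
        ENNReal.ofReal |σ c| *
        (ENNReal.ofReal (schurKernelLeft (σ a) (σ b)) * ENNReal.ofReal |σ c|) *
        ENNReal.ofReal |σ a| := by
      rw [← ENNReal.ofReal_mul hl0, ← ENNReal.ofReal_mul hr0,
        ← ENNReal.ofReal_mul (by positivity), ← ENNReal.ofReal_mul (by positivity),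
        ← ENNReal.ofReal_mul (by positivity), ← ENNReal.ofReal_mul (by positivity)]
      refine ENNReal.ofReal_le_ofReal ?_
      rw [hlr]
      have ha1 : |σ a| ≤ 1 := by
        rw [← sq_le_one_iff_abs_le_one]
        nlinarith [sq_nonneg (σ b), sq_nonneg (σ c)]
      calc σ a ^ 4 = |σ a| ^ 2 * |σ a| ^ 2 := by rw [sq_abs]; ring
        _ ≤ |σ a| ^ 2 * 1 := by gcongr; exact pow_le_one₀ (abs_nonneg _) ha1
        _ ≤ |σ a| ^ 2 * (schurKernelLeft (σ a) (σ b) * |σ c|) := by gcongr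
        _ = _ := by ring
    simp only [Fin.prod_univ_five, Matrix.cons_val]
    calc _ ≤ _ := mul_le_mul_right hw _
      _ = _ := by ring
  · rw [← ENNReal.mul_rpow_of_nonneg _ _ (by norm_num)]
    gcongr
    simp only [Fin.prod_univ_five, Matrix.cons_val]
    calc _ ≤ (C * (24 * ∫⁻ x, F x)) * (C * (16 * ∫⁻ x, G x)) *
          (C * ((∫⁻ x, F x) * ∫⁻ x, G x)) * (C * (24 * ∫⁻ x, F x)) *
          (C * ((∫⁻ x, G x) * ∫⁻ x, H x)) := by
          gcongr
          exacts [hC.left_le hab hac hbc hF, hC.right_le hab hac hbc hG,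
            hC.prod_le hab hac hbc hF hG, hC.left_le hab hac hbc hF,
            hC.prod_le hbc hab.symm hac.symm hG hH]
      _ = _ := by ring

theorem SliceBound.lintegral_light_le (hC : SliceBound C) (hab : a ≠ b) (hac : a ≠ c)
    (hbc : b ≠ c) (hF : Measurable F) (hG : Measurable G) (hH : Measurable H) :
    ∫⁻ σ, (F (σ a) ^ 3 * G (σ b) ^ 3 * H (σ c)) ^ (1 / 5 : ℝ) * ENNReal.ofReal (σ c ^ 2)
        ∂(normSphere 3) ≤
      (C ^ 4 * 24) ^ (1 / 5 : ℝ) *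
        ((∫⁻ x, F x) ^ 3 * (∫⁻ x, G x) ^ 3 * ∫⁻ x, H x) ^ (1 / 5 : ℝ) := by
  refine (lintegral_localized_le c (X := ![
    fun σ => F (σ a) * G (σ b) * ENNReal.ofReal |σ c|,
    fun σ => F (σ a) * G (σ b) * ENNReal.ofReal |σ c|,
    fun σ => F (σ a) * G (σ b) * ENNReal.ofReal |σ c|,
    fun σ => H (σ c) * ENNReal.ofReal (schurKernelLeft (σ c) (σ a)) * ENNReal.ofReal |σ b|,
    1]) ?_ ?_).trans ?_
  · intro i
    fin_cases i <;> simp <;> fun_prop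
  · filter_upwards [ae_norm_eq_one, ae_coord_ne_zero a, ae_coord_ne_zero b] with σ hn ha hb
    have hsum : σ c ^ 2 + σ a ^ 2 + σ b ^ 2 = 1 := by
      rw [sum_sq_coords hac.symm hbc.symm hab, hn, one_pow]
    have hl := one_le_schurKernelLeft_mul hsum ha hb
    have hl0 := schurKernelLeft_nonneg (σ c) (σ a)
    have hc1 : |σ c| ≤ 1 := by
      rw [← sq_le_one_iff_abs_le_one]
      nlinarith [sq_nonneg (σ a), sq_nonneg (σ b)]
    have hw : ENNReal.ofReal (σ c ^ 4) ≤ ENNReal.ofReal |σ c| ^ 3 *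
        (ENNReal.ofReal (schurKernelLeft (σ c) (σ a)) * ENNReal.ofReal |σ b|) := by
      rw [← ENNReal.ofReal_mul hl0, ← ENNReal.ofReal_pow (abs_nonneg _),
        ← ENNReal.ofReal_mul (by positivity)]
      refine ENNReal.ofReal_le_ofReal ?_
      calc σ c ^ 4 = |σ c| ^ 3 * |σ c| := by rw [← pow_succ, Even.pow_abs (by decide)]
        _ ≤ _ := by gcongr; exact hc1.trans hl
    simp only [Fin.prod_univ_five, Matrix.cons_val, Pi.one_apply]
    calc _ ≤ _ := mul_le_mul_right hw _
      _ = _ := by ring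
  · rw [← ENNReal.mul_rpow_of_nonneg _ _ (by norm_num)]
    gcongr
    simp only [Fin.prod_univ_five, Matrix.cons_val, Pi.one_apply, lintegral_one]
    calc _ ≤ (C * ((∫⁻ x, F x) * ∫⁻ x, G x)) * (C * ((∫⁻ x, F x) * ∫⁻ x, G x)) *
          (C * ((∫⁻ x, F x) * ∫⁻ x, G x)) * (C * (24 * ∫⁻ x, H x)) * 1 := by
          have hP := hC.prod_le hab hac hbc hF hG
          gcongr
          exacts [hC.left_le hac.symm hbc.symm hab hH, normSphere_univ_le_one]
      _ = _ := by ring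

end Terms

theorem exists_lintegral_normSphere_prod_le : ∃ K : ℝ≥0∞, K ≠ ∞ ∧ ∀ F G H : ℝ → ℝ≥0∞,
    Measurable F → Measurable G → Measurable H →
    ∫⁻ σ, (F (σ 0) ^ 3 * G (σ 1) ^ 3 * H (σ 2)) ^ (1 / 5 : ℝ) ∂(normSphere 3) ≤
      K * ((∫⁻ x, F x) ^ 3 * (∫⁻ x, G x) ^ 3 * ∫⁻ x, H x) ^ (1 / 5 : ℝ) := by
  obtain ⟨C, hCtop, hC⟩ : ∃ C : ℝ≥0∞, C ≠ ∞ ∧ SliceBound C := exists_lintegral_normSphere_slice_le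
  have hfin : ∀ (n k : ℕ), (C ^ n * k) ^ (1 / 5 : ℝ) ≠ ∞ := fun n k =>
    ENNReal.rpow_ne_top_of_nonneg (by norm_num)
      (ENNReal.mul_ne_top (ENNReal.pow_ne_top hCtop) (ENNReal.natCast_ne_top k))
  refine ⟨(C ^ 5 * 9216) ^ (1 / 5 : ℝ) + (C ^ 5 * 9216) ^ (1 / 5 : ℝ) +
    (C ^ 4 * 24) ^ (1 / 5 : ℝ), ?_, fun F G H hF hG hH => ?_⟩
  · exact ENNReal.add_ne_top.2 ⟨ENNReal.add_ne_top.2 ⟨hfin 5 9216, hfin 5 9216⟩, hfin 4 24⟩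
  let u : EuclideanSpace ℝ (Fin 3) → ℝ≥0∞ := fun σ =>
    (F (σ 0) ^ 3 * G (σ 1) ^ 3 * H (σ 2)) ^ (1 / 5 : ℝ)
  have hu : Measurable u := by fun_prop
  have h0 := hC.lintegral_heavy_le (a := 0) (b := 1) (c := 2) (by decide) (by decide) (by decide)
    hF hG hH
  have h1 := hC.lintegral_heavy_le (a := 1) (b := 0) (c := 2) (by decide) (by decide) (by decide)
    hG hF hH
  have h2 := hC.lintegral_light_le (a := 0) (b := 1) (c := 2) (by decide) (by decide) (by decide)
    hF hG hH
  simp_rw [mul_comm (G _ ^ 3)] at h1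
  rw [mul_comm ((∫⁻ x, G x) ^ 3)] at h1
  calc ∫⁻ σ, u σ ∂(normSphere 3) = ∫⁻ σ, (u σ * ENNReal.ofReal (σ 0 ^ 2) +
        u σ * ENNReal.ofReal (σ 1 ^ 2) + u σ * ENNReal.ofReal (σ 2 ^ 2)) ∂(normSphere 3) := by
        refine lintegral_congr_ae ?_
        filter_upwards [ae_norm_eq_one] with σ hn
        rw [← mul_add, ← mul_add, ← ENNReal.ofReal_add (sq_nonneg _) (sq_nonneg _),
          ← ENNReal.ofReal_add (by positivity) (sq_nonneg _),
          sum_sq_coords (by decide) (by decide) (by decide), hn]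
        simp
    _ = (∫⁻ σ, u σ * ENNReal.ofReal (σ 0 ^ 2) ∂(normSphere 3)) +
        (∫⁻ σ, u σ * ENNReal.ofReal (σ 1 ^ 2) ∂(normSphere 3)) +
        ∫⁻ σ, u σ * ENNReal.ofReal (σ 2 ^ 2) ∂(normSphere 3) := by
        rw [lintegral_add_left (by fun_prop), lintegral_add_left (by fun_prop)]
    _ ≤ _ := add_le_add (add_le_add h0 h1) h2
    _ = _ := by ring

theorem strong_type_at_N :
    ∃ C : ℝ, 0 < C ∧ ∀ f : Fin 3 → ℝ → ℝ,
      (∀ j, Measurable (f j)) → (∀ j x, 0 ≤ f j x) →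
      lpNorm ∞ (sphAvg 3 f) ≤ ENNReal.ofReal C *
        lpNorm (5 / 3) (fun x => ENNReal.ofReal (f 0 x)) *
        lpNorm (5 / 3) (fun x => ENNReal.ofReal (f 1 x)) *
        lpNorm 5 (fun x => ENNReal.ofReal (f 2 x)) := by
  obtain ⟨K, hK, hmain⟩ := exists_lintegral_normSphere_prod_le
  refine ⟨K.toReal + 1, by positivity, fun f hf _ => ?_⟩
  have hKle : K ≤ ENNReal.ofReal (K.toReal + 1) := by
    rw [ENNReal.le_ofReal_iff_toReal_le hK (by positivity)]
    linarith
  have h53 : (5 / 3 : ℝ≥0∞) ≠ ∞ := ENNReal.div_ne_top (by norm_num) (by norm_num)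
  simp only [_root_.lpNorm, if_true, if_neg h53, if_neg (ENNReal.ofNat_ne_top : (5 : ℝ≥0∞) ≠ ∞)]
  have ht : (5 / 3 : ℝ≥0∞).toReal = 5 / 3 := by simp
  rw [ht, ENNReal.toReal_ofNat]
  have hpow : ∀ y : ℝ≥0∞, ((y ^ (5 / 3 : ℝ)) ^ 3) ^ (1 / 5 : ℝ) = y := fun y => by
    rw [← ENNReal.rpow_natCast, ← ENNReal.rpow_mul, ← ENNReal.rpow_mul]
    norm_num
  have hpow' : ∀ y : ℝ≥0∞, (y ^ (5 : ℝ)) ^ (1 / 5 : ℝ) = y := fun y => by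
    rw [← ENNReal.rpow_mul]
    norm_num
  have hcube : ∀ y : ℝ≥0∞, (y ^ 3) ^ (1 / 5 : ℝ) = y ^ (1 / (5 / 3) : ℝ) := fun y => by
    rw [← ENNReal.rpow_natCast, ← ENNReal.rpow_mul]
    norm_num
  refine essSup_le_of_ae_le _ (Filter.Eventually.of_forall fun x => ?_)
  have h := hmain (fun s => ENNReal.ofReal (f 0 (x - s)) ^ (5 / 3 : ℝ))
    (fun s => ENNReal.ofReal (f 1 (x - s)) ^ (5 / 3 : ℝ))
    (fun s => ENNReal.ofReal (f 2 (x - s)) ^ (5 : ℝ))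
    (by fun_prop) (by fun_prop) (by fun_prop)
  rw [lintegral_sub_left_eq_self (fun s => ENNReal.ofReal (f 0 s) ^ (5 / 3 : ℝ)),
    lintegral_sub_left_eq_self (fun s => ENNReal.ofReal (f 1 s) ^ (5 / 3 : ℝ)),
    lintegral_sub_left_eq_self (fun s => ENNReal.ofReal (f 2 s) ^ (5 : ℝ))] at h
  have hnn : (0 : ℝ) ≤ 1 / 5 := by norm_num
  simp only [ENNReal.mul_rpow_of_nonneg _ _ hnn, hpow, hpow', hcube] at h
  calc sphAvg 3 f x ≤ _ := by
        simp only [sphAvg, Fin.prod_univ_three]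
        exact h
    _ ≤ _ := by
        rw [← mul_assoc, ← mul_assoc]
        beta_reduce
        gcongr
end
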